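/- arXiv:1411.3517 — 4 statements merged into one kernel-verified Lean document; each statement's English description precedes it below -/
import Mathlib

section
/- There exists a universal constant C > 0 such that for every R ≥ 1 the following holds. If A ⊆ F₃^R is an independent set of K₃^{⊗R} with |A| = δ·3^R, then: (1) δ ≤ 1/3; (2) δ = 1/3 if and only if A is a dictator; (3) if δ ≥ 1/3 − ε for some ε ∈ (0,1/3), then there exists a dictator A' with |A Δ A'| ≤ C·ε·3^R (where Δ denotes symmetric difference of sets). -/
open scoped BigOperators

abbrev F3 := ZMod 3

/-! Over an alphabet of `q ≥ 3` letters, rescale densities so that the Hoffman bound for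
cross-intersecting families `A`, `B` reads `w A * w B ≤ 1`. Fixing one letter splits `A` and `B`
into slices, which are cross-intersecting for distinct letters, and the bound follows by induction:
an inequality between letter sums, in which the two largest slice weights are decisive, bounds
`w A * w B` by the largest product of slice weights at distinct letters.

The stability version of that inequality says that if `w A * w B` is close to this largest product,
then the slices of `A` are nearly balanced or one of them is nearly full. In the balanced case a
defect of the pair does not grow on passing to the slices with the largest product. Words of length
`0` have large defect, so the other case must occur eventually and gives a heavy slice of some
iterated slices. Cross-intersection transfers heaviness between the slices at all letters, so it
lifts back to `A`. Finally, a heavy slice of a family cross-intersecting itself makes the slices at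
the other letters light, so that `A` is close to the corresponding dictator. -/

section

open Finset

variable {α : Type*} [Fintype α]

local notation "q" => (Fintype.card α : ℝ)

section LetterSums

lemma sum_le_add_mul_of_forall_ne {f : α → ℝ} {c : ℝ} (a : α)
    (h : ∀ s, s ≠ a → f s ≤ c) : ∑ s, f s ≤ f a + (q - 1) * c := by
  classical
  have hcard : ((univ.erase a).card : ℝ) = q - 1 := by
    rw [card_erase_of_mem (mem_univ a), card_univ, Nat.cast_pred (Fintype.card_pos_iff.2 ⟨a⟩)]
  rw [← add_sum_erase univ f (mem_univ a), ← hcard, ← nsmul_eq_mul]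
  gcongr
  exact sum_le_card_nsmul _ _ _ fun s hs ↦ h s (ne_of_mem_erase hs)

lemma abs_sub_le_of_forall_sub_le [Nonempty α] {u : α → ℝ} {m c : ℝ} (hm : ∑ s, u s = q * m)
    (h : ∀ s t, u s - u t ≤ c) (s : α) : |u s - m| ≤ c := by
  have hq : 0 < q := mod_cast Fintype.card_pos
  have upper : ∑ t, (u s - u t) ≤ q * c := by
    simpa using sum_le_card_nsmul univ _ c fun t _ ↦ h s t
  have lower : ∑ t, (u t - u s) ≤ q * c := by
    simpa using sum_le_card_nsmul univ _ c fun t _ ↦ h t s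
  simp only [sum_sub_distrib, hm, sum_const, card_univ, nsmul_eq_mul] at upper lower
  rw [abs_le]
  constructor <;> nlinarith

lemma exists_max_and_runner_up {β : Type*} [Finite β] [Nontrivial β] (u : β → ℝ) :
    ∃ a b, a ≠ b ∧ (∀ s, u s ≤ u a) ∧ ∀ s, s ≠ a → u s ≤ u b := by
  obtain ⟨a, ha⟩ := Finite.exists_max u
  have : Nonempty {s // s ≠ a} := nonempty_subtype.2 (exists_ne a)
  obtain ⟨⟨b, hba⟩, hb⟩ := Finite.exists_max fun s : {s // s ≠ a} ↦ u s
  exact ⟨a, b, hba.symm, ha, fun s hs ↦ hb ⟨s, hs⟩⟩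

lemma exists_ne_and_ne (hα : 3 ≤ Fintype.card α) (i j : α) : ∃ l, l ≠ i ∧ l ≠ j := by
  classical
  obtain ⟨l, hl⟩ : ∃ l, l ∉ ({i, j} : Finset α) := by
    by_contra! hall
    have := card_le_two (a := i) (b := j)
    rw [eq_univ_iff_forall.2 hall, card_univ] at this
    omega
  exact ⟨l, by simpa using hl⟩

lemma forall_and_of_forall_ne (hα : 3 ≤ Fintype.card α) {P Q : α → Prop} {i j : α}
    (hPQ : ∀ s t, s ≠ t → P s → Q t) (hQP : ∀ s t, s ≠ t → Q s → P t) (hi : P i) (hj : Q j)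
    (s : α) : P s ∧ Q s := by
  obtain ⟨l, hli, hlj⟩ := exists_ne_and_ne hα i j
  have hPj : P j := hQP l j hlj (hPQ i l hli.symm hi)
  have hQi : Q i := hPQ l i hli (hQP j l hlj.symm hj)
  constructor
  · by_cases hs : s = j
    · exact hs ▸ hPj
    · exact hQP j s (Ne.symm hs) hj
  · by_cases hs : s = i
    · exact hs ▸ hQi
    · exact hPQ i s (Ne.symm hs) hi

section OffDiagonalProducts

variable {u v : α → ℝ} {M : ℝ}

lemma mul_mul_sum_le (hu : ∀ s, 0 ≤ u s) (hM : ∀ s t, s ≠ t → u s * v t ≤ M) {a b : α}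
    (hab : a ≠ b) : u a * u b * ∑ s, v s ≤ M * (u a + (q - 1) * u b) := by
  have hne : ∀ s, s ≠ a → u a * u b * v s ≤ M * u b := fun s hs ↦ by
    nlinarith [hM a s hs.symm, hu b]
  have hsum := sum_le_add_mul_of_forall_ne a hne
  rw [← mul_sum] at hsum
  nlinarith [hM b a hab.symm, hu a]

lemma sum_le_of_runner_up {a b s : α} (hb : ∀ t, t ≠ a → u t ≤ u b) (hs : s ≠ a) :
    ∑ t, u t ≤ u a + (q - 1) * u b - (u b - u s) := by
  classical
  have hne : ∀ t, t ≠ a → u t + (if t = s then u b - u s else 0) ≤ u b := by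
    intro t ht
    split_ifs with hts
    · simp [hts]
    · simpa using hb t ht
  have hsum := sum_le_add_mul_of_forall_ne a hne
  simp only [sum_add_distrib, sum_ite_eq', mem_univ, if_true, if_neg hs.symm] at hsum
  linarith

/- Both sums are controlled by the two largest values `u a ≥ u b`, and
`(u a + (q - 1) u b)² - q² (u a) (u b) = -(u a - u b) ((q - 1)² u b - u a)`. -/
lemma mul_gaps_le_mul_deficit (hu : ∀ s, 0 ≤ u s) (hM₀ : 0 ≤ M)
    (hM : ∀ s t, s ≠ t → u s * v t ≤ M) {a b s : α} (hab : a ≠ b)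
    (hb : ∀ t, t ≠ a → u t ≤ u b) (hs : s ≠ a) :
    M * ((u a - u b) * ((q - 1) ^ 2 * u b - u a) + (u b - u s) * (u a + (q - 1) * u b)) ≤
      u a * u b * (q ^ 2 * M - (∑ t, u t) * ∑ t, v t) := by
  have hq : 0 ≤ q - 1 := sub_nonneg.2 (mod_cast Fintype.card_pos_iff.2 ⟨a⟩)
  have hbound : 0 ≤ M * (u a + (q - 1) * u b) :=
    mul_nonneg hM₀ (add_nonneg (hu a) (mul_nonneg hq (hu b)))
  have hprod : (∑ t, u t) * (u a * u b * ∑ t, v t) ≤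
      (u a + (q - 1) * u b - (u b - u s)) * (M * (u a + (q - 1) * u b)) :=
    (mul_le_mul_of_nonneg_left (mul_mul_sum_le hu hM hab) (sum_nonneg fun t _ ↦ hu t)).trans
      (mul_le_mul_of_nonneg_right (sum_le_of_runner_up hb hs) hbound)
  linarith

lemma mul_sub_le_of_le_mul_runner_up (hpos : ∀ s, 0 < u s) (hhi : ∀ s, u s ≤ q - 1) (hM₀ : 0 ≤ M)
    (hM : ∀ s t, s ≠ t → u s * v t ≤ M) {a b t : α} (ha : ∀ s, u s ≤ u a) (hab : a ≠ b)
    (hb : ∀ s, s ≠ a → u s ≤ u b) (hbal : u a ≤ ((q - 1) ^ 2 - 1) * u b) (ht : t ≠ a) :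
    M * (u a - u t) ≤ (q - 1) * (q ^ 2 * M - (∑ r, u r) * ∑ r, v r) := by
  have hgaps := mul_gaps_le_mul_deficit (fun s ↦ (hpos s).le) hM₀ hM hab hb ht
  set X := q ^ 2 * M - (∑ r, u r) * ∑ r, v r
  have htop : u b * (u a - u b) ≤ (u a - u b) * ((q - 1) ^ 2 * u b - u a) := by
    rw [mul_comm]
    exact mul_le_mul_of_nonneg_left (by linarith) (sub_nonneg.2 (ha b))
  have hrest : u b * (u b - u t) ≤ (u b - u t) * (u a + (q - 1) * u b) := by
    have hq : 0 ≤ (q - 1) * u b := mul_nonneg ((hpos b).le.trans (hhi b)) (hpos b).le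
    rw [mul_comm]
    exact mul_le_mul_of_nonneg_left (by linarith [ha b]) (sub_nonneg.2 (hb t ht))
  have hcancel : M * (u a - u t) ≤ u a * X := by
    refine le_of_mul_le_mul_left ?_ (hpos b)
    linarith [mul_le_mul_of_nonneg_left (add_le_add htop hrest) hM₀]
  have hX : 0 ≤ X := nonneg_of_mul_nonneg_right
    ((mul_nonneg hM₀ (sub_nonneg.2 (ha t))).trans hcancel) (hpos a)
  exact hcancel.trans (mul_le_mul_of_nonneg_right (hhi a) hX)

-- As `u b ≥ 1 / (q - 1)`, the hypothesis `hunbal` leaves `u a` little room below `q - 1`.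
lemma mul_sub_le_of_mul_runner_up_lt (hα : 3 ≤ Fintype.card α) (hlo : ∀ s, 1 ≤ (q - 1) * u s)
    (hhi : ∀ s, u s ≤ q - 1) (hM₀ : 0 ≤ M) (hM : ∀ s t, s ≠ t → u s * v t ≤ M) {a b : α}
    (hab : a ≠ b) (hb : ∀ s, s ≠ a → u s ≤ u b) (hunbal : ((q - 1) ^ 2 - 1) * u b < u a) :
    M * (q - 1 - u a) ≤ (q - 1) * (q ^ 2 * M - (∑ r, u r) * ∑ r, v r) := by
  have hq : 3 ≤ q := mod_cast hα
  have hpos : ∀ s, 0 < u s := fun s ↦ by nlinarith [hlo s]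
  have hgaps := mul_gaps_le_mul_deficit (fun s ↦ (hpos s).le) hM₀ hM hab hb hab.symm
  rw [sub_self, zero_mul, add_zero] at hgaps
  set X := q ^ 2 * M - (∑ r, u r) * ∑ r, v r
  have hthree : 3 * u b ≤ u a :=
    (mul_le_mul_of_nonneg_right (by nlinarith) (hpos b).le).trans hunbal.le
  have hroom : q - 1 - u a ≤ (q - 1) ^ 2 * u b - u a := by nlinarith [hlo b]
  have hgap : 2 / 3 * u a * (q - 1 - u a) ≤ (u a - u b) * ((q - 1) ^ 2 * u b - u a) :=
    mul_le_mul (by linarith) hroom (sub_nonneg.2 (hhi a)) (by linarith [hpos b])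
  have hcancel : 2 / 3 * (M * (q - 1 - u a)) ≤ u b * X := by
    refine le_of_mul_le_mul_left ?_ (hpos a)
    linarith [mul_le_mul_of_nonneg_left hgap hM₀]
  have hX : 0 ≤ X := nonneg_of_mul_nonneg_right
    ((mul_nonneg (by norm_num) (mul_nonneg hM₀ (sub_nonneg.2 (hhi a)))).trans hcancel) (hpos b)
  have hub : u b * X ≤ 2 / 3 * (q - 1) * X :=
    mul_le_mul_of_nonneg_right (by linarith [hhi a]) hX
  linarith

lemma forall_mul_sub_le_or_exists_mul_sub_le (hα : 3 ≤ Fintype.card α)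
    (hlo : ∀ s, 1 ≤ (q - 1) * u s) (hhi : ∀ s, u s ≤ q - 1) (hM₀ : 0 ≤ M)
    (hM : ∀ s t, s ≠ t → u s * v t ≤ M) :
    (∀ s t, M * (u s - u t) ≤ (q - 1) * (q ^ 2 * M - (∑ r, u r) * ∑ r, v r)) ∨
      ∃ a, M * (q - 1 - u a) ≤ (q - 1) * (q ^ 2 * M - (∑ r, u r) * ∑ r, v r) := by
  have hq : 3 ≤ q := mod_cast hα
  have : Nontrivial α := Fintype.one_lt_card_iff_nontrivial.1 (by omega)
  have hpos : ∀ s, 0 < u s := fun s ↦ by nlinarith [hlo s]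
  obtain ⟨a, b, hab, ha, hb⟩ := exists_max_and_runner_up u
  rcases le_or_gt (u a) (((q - 1) ^ 2 - 1) * u b) with hbal | hunbal
  · left
    have hgap : ∀ t, t ≠ a → _ := fun t ht ↦
      mul_sub_le_of_le_mul_runner_up hpos hhi hM₀ hM ha hab hb hbal ht
    intro s t
    have hst : M * (u s - u t) ≤ M * (u a - u t) :=
      mul_le_mul_of_nonneg_left (sub_le_sub_right (ha s) _) hM₀
    obtain rfl | hta := eq_or_ne t a
    · have htb : M * (u t - u t) ≤ M * (u t - u b) :=
        mul_le_mul_of_nonneg_left (sub_le_sub_left (ha b) _) hM₀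
      exact hst.trans (htb.trans (hgap b hab.symm))
    · exact hst.trans (hgap t hta)
  · exact Or.inr ⟨a, mul_sub_le_of_mul_runner_up_lt hα hlo hhi hM₀ hM hab hb hunbal⟩

lemma sum_mul_sum_le (hα : 3 ≤ Fintype.card α) (hlo : ∀ s, 1 ≤ (q - 1) * u s)
    (hhi : ∀ s, u s ≤ q - 1) (hM₀ : 0 ≤ M) (hM : ∀ s t, s ≠ t → u s * v t ≤ M) :
    (∑ s, u s) * ∑ s, v s ≤ q ^ 2 * M := by
  have hq : 3 ≤ q := mod_cast hα
  have hdeficit : 0 ≤ (q - 1) * (q ^ 2 * M - (∑ s, u s) * ∑ s, v s) := by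
    rcases forall_mul_sub_le_or_exists_mul_sub_le hα hlo hhi hM₀ hM with h | ⟨a, ha⟩
    · obtain ⟨s⟩ : Nonempty α := Fintype.card_pos_iff.1 (by omega)
      simpa using h s s
    · exact (mul_nonneg hM₀ (sub_nonneg.2 (hhi a))).trans ha
  exact sub_nonneg.1 (nonneg_of_mul_nonneg_right hdeficit (by linarith))

end OffDiagonalProducts

end LetterSums

section Slices

variable {n : ℕ}

lemma dens_mul_card_pow [Nonempty α] (A : Finset (Fin n → α)) :
    (A.dens : ℝ) * q ^ n = A.card := by
  simp [nnratCast_dens]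

/-- Two families of words are cross-intersecting if no word of the first differs in every letter
from a word of the second, that is, if no edge of `K_q^{⊗R}` joins them. -/
def CrossIntersecting {ι α : Type*} (A B : Finset (ι → α)) : Prop :=
  ∀ f ∈ A, ∀ g ∈ B, ∃ i, f i = g i

lemma CrossIntersecting.symm {ι α : Type*} {A B : Finset (ι → α)} (h : CrossIntersecting A B) :
    CrossIntersecting B A := fun f hf g hg ↦
  (h g hg f hf).imp fun _ ↦ Eq.symm

lemma CrossIntersecting.eq_empty_or_eq_empty {ι α : Type*} [IsEmpty ι] {A B : Finset (ι → α)}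
    (h : CrossIntersecting A B) : A = ∅ ∨ B = ∅ := by
  by_contra! hne
  obtain ⟨⟨f, hf⟩, ⟨g, hg⟩⟩ := hne
  exact isEmptyElim (h f hf g hg).choose

variable [DecidableEq α]

/-- The dictator `{f | f i = a}`: the words whose letter at position `i` is `a`. -/
def dictator {ι : Type*} [Fintype ι] [DecidableEq ι] (i : ι) (a : α) : Finset (ι → α) :=
  univ.filter fun f ↦ f i = a

/-- The slice of `A` at the letter `a` in position `k`: the words which become a member of `A` when
`a` is inserted at position `k`. -/
def sliceAt (k : Fin (n + 1)) (a : α) (A : Finset (Fin (n + 1) → α)) : Finset (Fin n → α) :=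
  univ.filter fun x ↦ k.insertNth (α := fun _ ↦ α) a x ∈ A

@[simp]
lemma mem_sliceAt {k : Fin (n + 1)} {a : α} {A : Finset (Fin (n + 1) → α)} {x : Fin n → α} :
    x ∈ sliceAt k a A ↔ k.insertNth (α := fun _ ↦ α) a x ∈ A := by
  simp [sliceAt]

lemma sliceAt_symmDiff (k : Fin (n + 1)) (a : α) (A B : Finset (Fin (n + 1) → α)) :
    sliceAt k a (symmDiff A B) = symmDiff (sliceAt k a A) (sliceAt k a B) := by
  ext x
  simp [mem_symmDiff]

lemma sliceAt_dictator_self (k : Fin (n + 1)) (a : α) : sliceAt k a (dictator k a) = univ := by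
  ext x
  simp [dictator]

lemma sliceAt_dictator_of_ne (k : Fin (n + 1)) {a b : α} (hab : b ≠ a) :
    sliceAt k b (dictator k a) = ∅ := by
  ext x
  simp [dictator, hab]

lemma sliceAt_zero_sliceAt_succ (k : Fin (n + 1)) (a c : α) (A : Finset (Fin (n + 2) → α)) :
    sliceAt 0 c (sliceAt k.succ a A) = sliceAt k a (sliceAt 0 c A) := by
  ext x
  simp [Fin.insertNth_succ_cons]

lemma CrossIntersecting.sliceAt_of_ne {A B : Finset (Fin (n + 1) → α)} (h : CrossIntersecting A B)
    (k : Fin (n + 1)) {a b : α} (hab : a ≠ b) :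
    CrossIntersecting (sliceAt k a A) (sliceAt k b B) := by
  intro f hf g hg
  obtain ⟨i, hi⟩ := h _ (mem_sliceAt.1 hf) _ (mem_sliceAt.1 hg)
  induction i using k.succAboveCases with
  | x => exact absurd (by simpa using hi) hab
  | p j => exact ⟨j, by simpa using hi⟩

lemma sum_card_sliceAt (k : Fin (n + 1)) (A : Finset (Fin (n + 1) → α)) :
    ∑ a, (sliceAt k a A).card = A.card := by
  have hA : A.card = ∑ x, if x ∈ A then 1 else 0 := by simp
  rw [hA, ← (Fin.insertNthEquiv (fun _ ↦ α) k).sum_comp, Fintype.sum_prod_type]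
  simp only [sliceAt, card_filter]
  rfl

lemma sum_dens_sliceAt [Nonempty α] (k : Fin (n + 1)) (A : Finset (Fin (n + 1) → α)) :
    ∑ a, ((sliceAt k a A).dens : ℝ) = q * A.dens := by
  simp only [nnratCast_dens, ← sum_div, ← Nat.cast_sum, sum_card_sliceAt, Fintype.card_fun,
    Fintype.card_fin, pow_succ, Nat.cast_mul]
  field_simp

lemma dens_dictator [Nonempty α] (k : Fin (n + 1)) (a : α) :
    ((dictator k a).dens : ℝ) = 1 / q := by
  have hsum := sum_dens_sliceAt k (dictator k a)
  rw [sum_eq_single a (fun b _ hb ↦ by simp [sliceAt_dictator_of_ne k hb]) (by simp),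
    sliceAt_dictator_self, dens_univ] at hsum
  field_simp
  simpa [mul_comm] using hsum.symm

lemma mul_dens_symmDiff_dictator [Nonempty α] (k : Fin (n + 1)) (a : α)
    (A : Finset (Fin (n + 1) → α)) :
    q * (symmDiff A (dictator k a)).dens = 1 + q * A.dens - 2 * (sliceAt k a A).dens := by
  have hslice : ∀ s, ((sliceAt k s (symmDiff A (dictator k a))).dens : ℝ) =
      (sliceAt k s A).dens + if s = a then 1 - 2 * ((sliceAt k s A).dens : ℝ) else 0 := by
    intro s
    rw [sliceAt_symmDiff]
    split_ifs with hs
    · have hcompl : ((sliceAt k s A)ᶜ.dens : ℝ) + (sliceAt k s A).dens = 1 := by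
        have := dens_sdiff_add_dens_eq_dens (subset_univ (sliceAt k s A))
        rw [dens_univ] at this
        exact mod_cast this
      rw [hs, sliceAt_dictator_self, ← top_eq_univ, symmDiff_top, ← hs, hnot_eq_compl]
      linarith
    · simp [sliceAt_dictator_of_ne k hs, ← bot_eq_empty]
  rw [← sum_dens_sliceAt k, sum_congr rfl fun s _ ↦ hslice s, sum_add_distrib, sum_dens_sliceAt]
  simp only [sum_ite_eq', mem_univ, if_true]
  ring

end Slices

/-- The density of a family of words, rescaled affinely so that the empty family has weight
`1 / (q - 1)`, a dictator `1` and the full family `q - 1`. With this normalisation the Hoffman bound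
for two cross-intersecting families reads `w A * w B ≤ 1`. -/
noncomputable def hoffmanWeight {n : ℕ} (A : Finset (Fin n → α)) : ℝ :=
  (q * (q - 2) * A.dens + 1) / (q - 1)

local notation "w" => hoffmanWeight

section Weights

variable {n : ℕ}

lemma mul_hoffmanWeight (hα : 3 ≤ Fintype.card α) (A : Finset (Fin n → α)) :
    (q - 1) * w A = q * (q - 2) * A.dens + 1 := by
  have hq : 3 ≤ q := mod_cast hα
  exact mul_div_cancel₀ _ (by linarith)

lemma one_le_mul_hoffmanWeight (hα : 3 ≤ Fintype.card α) (A : Finset (Fin n → α)) :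
    1 ≤ (q - 1) * w A := by
  have hq : 3 ≤ q := mod_cast hα
  have : 0 ≤ q * (q - 2) * (A.dens : ℝ) :=
    mul_nonneg (mul_nonneg (by linarith) (by linarith)) (by positivity)
  linarith [mul_hoffmanWeight hα A]

lemma hoffmanWeight_pos (hα : 3 ≤ Fintype.card α) (A : Finset (Fin n → α)) : 0 < w A := by
  have hq : 3 ≤ q := mod_cast hα
  nlinarith [one_le_mul_hoffmanWeight hα A]

lemma hoffmanWeight_le (hα : 3 ≤ Fintype.card α) (A : Finset (Fin n → α)) : w A ≤ q - 1 := by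
  have hq : 3 ≤ q := mod_cast hα
  have hdens : (A.dens : ℝ) ≤ 1 := mod_cast dens_le_one
  have hqq : 0 ≤ q * (q - 2) := mul_nonneg (by linarith) (by linarith)
  refine le_of_mul_le_mul_left ?_ (show 0 < q - 1 by linarith)
  nlinarith [mul_hoffmanWeight hα A]

lemma hoffmanWeight_empty : w (∅ : Finset (Fin n → α)) = 1 / (q - 1) := by
  simp [hoffmanWeight]

lemma sum_hoffmanWeight_sliceAt [DecidableEq α] (hα : 3 ≤ Fintype.card α) (k : Fin (n + 1))
    (A : Finset (Fin (n + 1) → α)) : ∑ a, w (sliceAt k a A) = q * w A := by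
  have : Nonempty α := Fintype.card_pos_iff.1 (by omega)
  simp only [hoffmanWeight, ← sum_div, sum_add_distrib, ← mul_sum, sum_dens_sliceAt, sum_const,
    card_univ, nsmul_eq_mul]
  ring

lemma CrossIntersecting.hoffmanWeight_mul_le_one (hα : 3 ≤ Fintype.card α)
    {A B : Finset (Fin n → α)} (h : CrossIntersecting A B) : w A * w B ≤ 1 := by
  classical
  have hq : 3 ≤ q := mod_cast hα
  induction n with
  | zero =>
    have hpos : 0 < q - 1 := by linarith
    rcases h.eq_empty_or_eq_empty with rfl | rfl
    · rw [hoffmanWeight_empty, one_div_mul_eq_div, div_le_one hpos]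
      exact hoffmanWeight_le hα B
    · rw [hoffmanWeight_empty, mul_one_div, div_le_one hpos]
      exact hoffmanWeight_le hα A
  | succ n ih =>
    have hsum := sum_mul_sum_le hα (fun s ↦ one_le_mul_hoffmanWeight hα (sliceAt 0 s A))
      (fun s ↦ hoffmanWeight_le hα _) zero_le_one fun s t hst ↦ ih (h.sliceAt_of_ne 0 hst)
    rw [sum_hoffmanWeight_sliceAt hα, sum_hoffmanWeight_sliceAt hα] at hsum
    refine le_of_mul_le_mul_left ?_ (show 0 < q ^ 2 by positivity)
    linarith

lemma CrossIntersecting.hoffmanWeight_le_one (hα : 3 ≤ Fintype.card α) {A : Finset (Fin n → α)}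
    (h : CrossIntersecting A A) : w A ≤ 1 := by
  nlinarith [h.hoffmanWeight_mul_le_one hα, hoffmanWeight_pos hα A]

lemma one_sub_hoffmanWeight (hα : 3 ≤ Fintype.card α) (A : Finset (Fin n → α)) :
    1 - w A = q * (q - 2) / (q - 1) * (1 / q - A.dens) := by
  have hq : 3 ≤ q := mod_cast hα
  have hpos : q - 1 ≠ 0 := by linarith
  rw [hoffmanWeight]
  field_simp
  ring

lemma CrossIntersecting.dens_le (hα : 3 ≤ Fintype.card α) {A : Finset (Fin n → α)}
    (h : CrossIntersecting A A) : (A.dens : ℝ) ≤ 1 / q := by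
  have hq : 3 ≤ q := mod_cast hα
  have hw := h.hoffmanWeight_le_one hα
  have hcoeff : 0 < q * (q - 2) / (q - 1) :=
    div_pos (mul_pos (by linarith) (by linarith)) (by linarith)
  rw [← sub_nonneg, one_sub_hoffmanWeight hα] at hw
  exact sub_nonneg.1 (nonneg_of_mul_nonneg_right hw hcoeff)

end Weights

section HeavySlices

variable [DecidableEq α] {n : ℕ}

/-- The slice of `A` at the letter `a` in position `k` is heavy if its weight is at least `q / 2`,
halfway between the weights `1` of a dictator and `q - 1` of the full family. -/
def IsHeavy (k : Fin (n + 1)) (a : α) (A : Finset (Fin (n + 1) → α)) : Prop :=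
  q / 2 ≤ w (sliceAt k a A)

lemma CrossIntersecting.mul_hoffmanWeight_sliceAt_le (hα : 3 ≤ Fintype.card α)
    {A B : Finset (Fin (n + 1) → α)} (h : CrossIntersecting A B) (k : Fin (n + 1)) (a : α) :
    q * w B * w (sliceAt k a A) ≤ w (sliceAt k a A) * w (sliceAt k a B) + (q - 1) := by
  have hsum := sum_le_add_mul_of_forall_ne (f := fun s ↦ w (sliceAt k a A) * w (sliceAt k s B)) a
    fun s hs ↦ (h.sliceAt_of_ne k hs.symm).hoffmanWeight_mul_le_one hα
  rw [← mul_sum, sum_hoffmanWeight_sliceAt hα] at hsum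
  linarith

lemma IsHeavy.of_crossIntersecting (hα : 3 ≤ Fintype.card α) {A B : Finset (Fin (n + 1) → α)}
    {k : Fin (n + 1)} {a : α} (hA : IsHeavy k a A) (h : CrossIntersecting A B)
    (hB : 17 / 18 ≤ w B) : IsHeavy k a B := by
  have hq : 3 ≤ q := mod_cast hα
  unfold IsHeavy at *
  have hbound := h.mul_hoffmanWeight_sliceAt_le hα k a
  set p := w (sliceAt k a A)
  have hp : 0 < p := by linarith
  have hqB : p * (q * (17 / 18)) ≤ p * (q * w B) := by gcongr
  -- For `p = q / 2` this is `(2 * q - 3) * (q - 3) ≥ 0`, so `17 / 18` is sharp when `q = 3`.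
  have hquad : q - 1 ≤ p * (q * (4 / 9)) := by
    have : q / 2 * (q * (4 / 9)) ≤ p * (q * (4 / 9)) := by gcongr
    nlinarith
  refine le_of_mul_le_mul_left ?_ hp
  linarith

lemma isHeavy_succ (hα : 3 ≤ Fintype.card α) {A : Finset (Fin (n + 2) → α)} {k : Fin (n + 1)}
    {a : α} (h : ∀ s, IsHeavy k a (sliceAt 0 s A)) : IsHeavy k.succ a A := by
  have hq : 3 ≤ q := mod_cast hα
  have hsum : q * (q / 2) ≤ q * w (sliceAt k.succ a A) := by
    rw [← sum_hoffmanWeight_sliceAt hα 0, ← nsmul_eq_mul, ← card_univ]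
    refine card_nsmul_le_sum _ _ _ fun s _ ↦ ?_
    rw [sliceAt_zero_sliceAt_succ]
    exact h s
  exact le_of_mul_le_mul_left hsum (by linarith)

lemma IsHeavy.mul_sub_hoffmanWeight_le (hα : 3 ≤ Fintype.card α)
    {A : Finset (Fin (n + 1) → α)} {k : Fin (n + 1)} {a : α} (hA : IsHeavy k a A)
    (h : CrossIntersecting A A) :
    (q - 2) * (q - 1 - w (sliceAt k a A)) ≤ q ^ 2 * (1 - w A) := by
  have hq : 3 ≤ q := mod_cast hα
  unfold IsHeavy at hA
  have hbound := h.mul_hoffmanWeight_sliceAt_le hα k a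
  have hle := hoffmanWeight_le hα (sliceAt k a A)
  set p := w (sliceAt k a A)
  have hfactor : (p - 1) * (q - 1 - p) ≤ p * (q * (1 - w A)) := by linarith
  have hp_sub : (q - 1 - p) * (p * (q - 2)) ≤ (q - 1 - p) * (q * (p - 1)) :=
    mul_le_mul_of_nonneg_left (by linarith) (sub_nonneg.2 hle)
  refine le_of_mul_le_mul_left ?_ (show 0 < p by linarith)
  linarith [mul_le_mul_of_nonneg_left hfactor (show 0 ≤ q by linarith)]

lemma IsHeavy.dens_symmDiff_dictator_le (hα : 3 ≤ Fintype.card α)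
    {A : Finset (Fin (n + 1) → α)} {k : Fin (n + 1)} {a : α} (hA : IsHeavy k a A)
    (h : CrossIntersecting A A) : ((symmDiff A (dictator k a)).dens : ℝ) ≤ 4 * (1 - w A) := by
  have hq : 3 ≤ q := mod_cast hα
  have : Nonempty α := Fintype.card_pos_iff.1 (by omega)
  have hgap := hA.mul_sub_hoffmanWeight_le hα h
  have hslice := mul_hoffmanWeight hα (sliceAt k a A)
  have hw : 0 ≤ q ^ 2 * (1 - w A) :=
    (mul_nonneg (by linarith) (sub_nonneg.2 (hoffmanWeight_le hα (sliceAt k a A)))).trans hgap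
  have hdist : q * (symmDiff A (dictator k a)).dens ≤ 2 * (1 - (sliceAt k a A).dens : ℝ) := by
    have : q * A.dens ≤ 1 := by
      rw [← le_div_iff₀' (by linarith)]
      exact h.dens_le hα
    linarith [mul_dens_symmDiff_dictator k a A]
  have hq2 : 0 < q - 2 := by linarith
  refine le_of_mul_le_mul_left ?_ (show 0 < q ^ 2 * (q - 2) ^ 2 by positivity)
  calc q ^ 2 * (q - 2) ^ 2 * (symmDiff A (dictator k a)).dens
      = q * (q - 2) ^ 2 * (q * (symmDiff A (dictator k a)).dens) := by ring
    _ ≤ q * (q - 2) ^ 2 * (2 * (1 - (sliceAt k a A).dens)) := by gcongr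
    _ = 2 * (q - 1) * ((q - 2) * (q - 1 - w (sliceAt k a A))) := by
      linear_combination 2 * (q - 2) * hslice
    _ ≤ 2 * (q - 1) * (q ^ 2 * (1 - w A)) := mul_le_mul_of_nonneg_left hgap (by linarith)
    _ ≤ 4 * (q - 2) ^ 2 * (q ^ 2 * (1 - w A)) := mul_le_mul_of_nonneg_right (by nlinarith) hw
    _ = q ^ 2 * (q - 2) ^ 2 * (4 * (1 - w A)) := by ring

end HeavySlices

/-- How far a pair of families is from two equal dictators, measured by weights alone. The first
term keeps the weight of `A` near `1`; the factor of the second is such that the defect does not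
increase on passing to a suitable pair of slices. -/
noncomputable def defect {n : ℕ} (A B : Finset (Fin n → α)) : ℝ :=
  |w A - 1| + 2 * (q - 1) * q ^ 2 * (1 - w A * w B)

/-- A pair of cross-intersecting families whose defect is at most this threshold has a common
heavy slice. The factor `100` ensures that, when the slices of the first family are balanced, those
of the second have weight at least `17 / 18`. -/
noncomputable def defectThreshold (α : Type*) [Fintype α] : ℝ :=
  1 / (100 * ((Fintype.card α : ℝ) - 1))

local notation "κ" => defectThreshold α

section Defect

variable {n : ℕ} {A B : Finset (Fin n → α)}

lemma mul_defectThreshold (hα : 3 ≤ Fintype.card α) : (q - 1) * κ = 1 / 100 := by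
  have hq : 3 ≤ q := mod_cast hα
  have : q - 1 ≠ 0 := by linarith
  rw [defectThreshold]
  field_simp

lemma defectThreshold_le (hα : 3 ≤ Fintype.card α) : κ ≤ 1 / 200 := by
  have hq : 3 ≤ q := mod_cast hα
  exact one_div_le_one_div_of_le (by norm_num) (by linarith)

lemma mul_one_sub_le_defect (A B : Finset (Fin n → α)) :
    2 * (q - 1) * q ^ 2 * (1 - w A * w B) ≤ defect A B :=
  le_add_of_nonneg_left (abs_nonneg _)

lemma CrossIntersecting.abs_hoffmanWeight_sub_one_le_defect (hα : 3 ≤ Fintype.card α)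
    (h : CrossIntersecting A B) : |w A - 1| ≤ defect A B := by
  have hq : 3 ≤ q := mod_cast hα
  exact le_add_of_nonneg_right <| mul_nonneg
    (mul_nonneg (by linarith) (by positivity)) (sub_nonneg.2 (h.hoffmanWeight_mul_le_one hα))

lemma CrossIntersecting.one_sub_mul_le_defect (hα : 3 ≤ Fintype.card α)
    (h : CrossIntersecting A B) : 36 * (1 - w A * w B) ≤ defect A B := by
  have hq : 3 ≤ q := mod_cast hα
  refine (mul_le_mul_of_nonneg_right ?_ (sub_nonneg.2 (h.hoffmanWeight_mul_le_one hα))).trans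
    (mul_one_sub_le_defect A B)
  nlinarith

lemma CrossIntersecting.one_sub_two_mul_defect_le (hα : 3 ≤ Fintype.card α)
    (h : CrossIntersecting A B) : 1 - 2 * defect A B ≤ w B := by
  have hprod := h.one_sub_mul_le_defect hα
  have habs := abs_le.1 (h.abs_hoffmanWeight_sub_one_le_defect hα)
  have hd₀ : 0 ≤ defect A B := by linarith
  have hA : w A * w B ≤ (1 + defect A B) * w B :=
    mul_le_mul_of_nonneg_right (by linarith) (hoffmanWeight_pos hα B).le
  refine le_of_mul_le_mul_left ?_ (show 0 < 1 + defect A B by linarith)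
  nlinarith [hd₀]

lemma CrossIntersecting.defectThreshold_lt_defect (hα : 3 ≤ Fintype.card α)
    {A B : Finset (Fin 0 → α)} (h : CrossIntersecting A B) : κ < defect A B := by
  have hq : 3 ≤ q := mod_cast hα
  have hκ := defectThreshold_le hα
  have hempty : w (∅ : Finset (Fin 0 → α)) ≤ 1 / 2 := by
    rw [hoffmanWeight_empty]
    exact one_div_le_one_div_of_le (by norm_num) (by linarith)
  by_contra! hd
  have hA := abs_le.1 (h.abs_hoffmanWeight_sub_one_le_defect hα)
  have hB := h.one_sub_two_mul_defect_le hα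
  rcases h.eq_empty_or_eq_empty with rfl | rfl <;> linarith

lemma CrossIntersecting.defect_self_le (hα : 3 ≤ Fintype.card α) (h : CrossIntersecting A A) :
    defect A A ≤ (1 + 4 * (q - 1) * q ^ 2) * (1 - w A) := by
  have hq : 3 ≤ q := mod_cast hα
  have hw := h.hoffmanWeight_le_one hα
  have hsq : 1 - w A * w A ≤ 2 * (1 - w A) := by nlinarith [sq_nonneg (1 - w A)]
  have hcoeff : 0 ≤ 2 * (q - 1) * q ^ 2 := mul_nonneg (by linarith) (by positivity)
  rw [defect, abs_sub_comm, abs_of_nonneg (sub_nonneg.2 hw)]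
  linarith [mul_le_mul_of_nonneg_left hsq hcoeff]

end Defect

section Descent

variable [DecidableEq α] {n : ℕ} {A B : Finset (Fin (n + 1) → α)}

lemma CrossIntersecting.le_hoffmanWeight_sliceAt (hα : 3 ≤ Fintype.card α)
    (h : CrossIntersecting A B) (hd : defect A B ≤ κ) {k : Fin (n + 1)}
    (hbal : ∀ s, |w (sliceAt k s A) - 1| ≤ defect A B) (s : α) :
    17 / 18 ≤ w (sliceAt k s B) := by
  have hq : 3 ≤ q := mod_cast hα
  have hκ := defectThreshold_le hα
  have : Nontrivial α := Fintype.one_lt_card_iff_nontrivial.1 (by omega)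
  have hd₀ : 0 ≤ defect A B := (abs_nonneg _).trans (hbal s)
  have hupper : ∀ t, w (sliceAt k t B) ≤ 1 + 2 * defect A B := by
    intro t
    obtain ⟨r, hr⟩ := exists_ne t
    have hprod := (h.sliceAt_of_ne k hr).hoffmanWeight_mul_le_one hα
    have hA : (1 - defect A B) * w (sliceAt k t B) ≤ w (sliceAt k r A) * w (sliceAt k t B) :=
      mul_le_mul_of_nonneg_right (by linarith [(abs_le.1 (hbal r)).1]) (hoffmanWeight_pos hα _).le
    refine le_of_mul_le_mul_left ?_ (show 0 < 1 - defect A B by linarith)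
    nlinarith
  have hsum := sum_le_add_mul_of_forall_ne s fun t _ ↦ hupper t
  rw [sum_hoffmanWeight_sliceAt hα] at hsum
  have hB : q * (1 - 2 * defect A B) ≤ q * w B := by
    gcongr
    exact h.one_sub_two_mul_defect_le hα
  have hsmall : (q - 1) * defect A B ≤ 1 / 100 := by
    rw [← mul_defectThreshold hα]
    exact mul_le_mul_of_nonneg_left hd (by linarith)
  linarith

lemma exists_forall_sliceAt_mul_le [Nontrivial α] (A B : Finset (Fin (n + 1) → α))
    (k : Fin (n + 1)) : ∃ i j, i ≠ j ∧ ∀ s t, s ≠ t →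
      w (sliceAt k s A) * w (sliceAt k t B) ≤ w (sliceAt k i A) * w (sliceAt k j B) := by
  obtain ⟨a, b, hab⟩ := exists_pair_ne α
  obtain ⟨⟨i, j⟩, hij, hmax⟩ := exists_max_image univ.offDiag
    (fun p : α × α ↦ w (sliceAt k p.1 A) * w (sliceAt k p.2 B)) ⟨(a, b), by simpa using hab⟩
  exact ⟨i, j, by simpa using hij, fun s t hst ↦ hmax (s, t) (by simpa using hst)⟩

section

variable {M : ℝ} {k : Fin (n + 1)}

lemma hoffmanWeight_mul_le_of_sliceAt (hα : 3 ≤ Fintype.card α) (hM₀ : 0 ≤ M)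
    (hM : ∀ s t, s ≠ t → w (sliceAt k s A) * w (sliceAt k t B) ≤ M) : w A * w B ≤ M := by
  have hq : 0 < q ^ 2 := pow_pos (mod_cast (by omega : 0 < Fintype.card α)) 2
  have hsum := sum_mul_sum_le hα (fun s ↦ one_le_mul_hoffmanWeight hα (sliceAt k s A))
    (fun s ↦ hoffmanWeight_le hα _) hM₀ hM
  rw [sum_hoffmanWeight_sliceAt hα, sum_hoffmanWeight_sliceAt hα] at hsum
  refine le_of_mul_le_mul_left ?_ hq
  linarith

lemma forall_abs_sub_le_or_exists_sub_le (hα : 3 ≤ Fintype.card α) (hM₀ : 1 / 2 ≤ M)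
    (hM : ∀ s t, s ≠ t → w (sliceAt k s A) * w (sliceAt k t B) ≤ M) :
    (∀ s, |w (sliceAt k s A) - w A| ≤ 2 * (q - 1) * q ^ 2 * (M - w A * w B)) ∨
      ∃ a, q - 1 - w (sliceAt k a A) ≤ 2 * (q - 1) * q ^ 2 * (M - w A * w B) := by
  have hq : 3 ≤ q := mod_cast hα
  have : Nonempty α := Fintype.card_pos_iff.1 (by omega)
  have hM₀' : 0 ≤ M := by linarith
  have hdichotomy := forall_mul_sub_le_or_exists_mul_sub_le hα
    (fun s ↦ one_le_mul_hoffmanWeight hα (sliceAt k s A)) (fun s ↦ hoffmanWeight_le hα _) hM₀' hM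
  rw [sum_hoffmanWeight_sliceAt hα, sum_hoffmanWeight_sliceAt hα] at hdichotomy
  have hdeficit : 0 ≤ (q - 1) * q ^ 2 * (M - w A * w B) :=
    mul_nonneg (mul_nonneg (by linarith) (by positivity))
      (sub_nonneg.2 (hoffmanWeight_mul_le_of_sliceAt hα hM₀' hM))
  have hcancel : ∀ x, M * x ≤ (q - 1) * (q ^ 2 * M - q * w A * (q * w B)) →
      x ≤ 2 * (q - 1) * q ^ 2 * (M - w A * w B) := by
    intro x hx
    by_contra! hlt
    nlinarith
  exact hdichotomy.imp
    (fun h ↦ abs_sub_le_of_forall_sub_le (sum_hoffmanWeight_sliceAt hα k A)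
      fun s t ↦ hcancel _ (h s t))
    fun ⟨a, ha⟩ ↦ ⟨a, hcancel _ ha⟩

end

lemma CrossIntersecting.isHeavy_of_sub_le (hα : 3 ≤ Fintype.card α) (h : CrossIntersecting A B)
    (hd : defect A B ≤ κ) {k : Fin (n + 1)} {a : α}
    (ha : q - 1 - w (sliceAt k a A) ≤ defect A B) : IsHeavy k a A ∧ IsHeavy k a B := by
  have hq : 3 ≤ q := mod_cast hα
  have hκ := defectThreshold_le hα
  have hA : IsHeavy k a A := by
    unfold IsHeavy
    linarith
  exact ⟨hA, hA.of_crossIntersecting hα h (by linarith [h.one_sub_two_mul_defect_le hα])⟩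

lemma CrossIntersecting.exists_isHeavy_or_exists_defect_le (hα : 3 ≤ Fintype.card α)
    (h : CrossIntersecting A B) (hd : defect A B ≤ κ) (k : Fin (n + 1)) :
    (∃ a, IsHeavy k a A ∧ IsHeavy k a B) ∨
      (∀ s, |w (sliceAt k s A) - 1| ≤ defect A B) ∧
        ∃ i j, i ≠ j ∧ defect (sliceAt k i A) (sliceAt k j B) ≤ defect A B := by
  have hq : 3 ≤ q := mod_cast hα
  have hκ := defectThreshold_le hα
  have : Nontrivial α := Fintype.one_lt_card_iff_nontrivial.1 (by omega)
  obtain ⟨i, j, hij, hM⟩ := exists_forall_sliceAt_mul_le A B k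
  have hM₁ := (h.sliceAt_of_ne k hij).hoffmanWeight_mul_le_one hα
  have hM₀ := (mul_pos (hoffmanWeight_pos hα (sliceAt k i A))
    (hoffmanWeight_pos hα (sliceAt k j B))).le
  have hM_half : 1 / 2 ≤ w (sliceAt k i A) * w (sliceAt k j B) := by
    linarith [hoffmanWeight_mul_le_of_sliceAt hα hM₀ hM, h.one_sub_mul_le_defect hα]
  rcases forall_abs_sub_le_or_exists_sub_le hα hM_half hM with hbal | ⟨a, ha⟩
  · have hdefect : ∀ s, |w (sliceAt k s A) - 1| +
        2 * (q - 1) * q ^ 2 * (1 - w (sliceAt k i A) * w (sliceAt k j B)) ≤ defect A B := by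
      intro s
      rw [defect]
      linarith [hbal s, abs_sub_le (w (sliceAt k s A)) (w A) 1]
    refine Or.inr ⟨fun s ↦ (le_add_of_nonneg_right ?_).trans (hdefect s), i, j, hij, hdefect i⟩
    exact mul_nonneg (mul_nonneg (by linarith) (by positivity)) (sub_nonneg.2 hM₁)
  · refine Or.inl ⟨a, h.isHeavy_of_sub_le hα hd (ha.trans ?_)⟩
    refine le_trans ?_ (mul_one_sub_le_defect A B)
    exact mul_le_mul_of_nonneg_left (by linarith) (mul_nonneg (by linarith) (by positivity))

lemma CrossIntersecting.exists_isHeavy (hα : 3 ≤ Fintype.card α) (h : CrossIntersecting A B)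
    (hd : defect A B ≤ κ) : ∃ k a, IsHeavy k a A ∧ IsHeavy k a B := by
  have hκ := defectThreshold_le hα
  induction n with
  | zero =>
    rcases h.exists_isHeavy_or_exists_defect_le hα hd 0 with hheavy | ⟨-, i, j, hij, hdij⟩
    · exact ⟨0, hheavy⟩
    · exact absurd (hdij.trans hd) ((h.sliceAt_of_ne 0 hij).defectThreshold_lt_defect hα).not_ge
  | succ n ih =>
    rcases h.exists_isHeavy_or_exists_defect_le hα hd 0 with hheavy | ⟨hbal, i, j, hij, hdij⟩
    · exact ⟨0, hheavy⟩
    · obtain ⟨k, a, hA, hB⟩ := ih (h.sliceAt_of_ne 0 hij) (hdij.trans hd)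
      have hwA : ∀ s, 17 / 18 ≤ w (sliceAt 0 s A) := fun s ↦ by linarith [(abs_le.1 (hbal s)).1]
      have hheavy : ∀ s, IsHeavy k a (sliceAt 0 s A) ∧ IsHeavy k a (sliceAt 0 s B) :=
        forall_and_of_forall_ne hα
          (fun s t hst hs ↦ hs.of_crossIntersecting hα (h.sliceAt_of_ne 0 hst)
            (h.le_hoffmanWeight_sliceAt hα hd hbal t))
          (fun s t hst hs ↦ hs.of_crossIntersecting hα (h.sliceAt_of_ne 0 hst.symm).symm (hwA t))
          hA hB
      exact ⟨k.succ, a, isHeavy_succ hα fun s ↦ (hheavy s).1, isHeavy_succ hα fun s ↦ (hheavy s).2⟩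

end Descent

section Stability

variable [DecidableEq α] {n : ℕ} {A : Finset (Fin (n + 1) → α)}

lemma CrossIntersecting.exists_dens_symmDiff_dictator_le (hα : 3 ≤ Fintype.card α)
    (h : CrossIntersecting A A) : ∃ k a, ((symmDiff A (dictator k a)).dens : ℝ) ≤
      100 * q * (q - 2) * (1 + 4 * (q - 1) * q ^ 2) * (1 / q - A.dens) := by
  have hq : 3 ≤ q := mod_cast hα
  have : Nonempty α := Fintype.card_pos_iff.1 (by omega)
  have hgap : 0 ≤ 1 - w A := sub_nonneg.2 (h.hoffmanWeight_le_one hα)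
  have hL : 1 ≤ 1 + 4 * (q - 1) * q ^ 2 :=
    le_add_of_nonneg_right (mul_nonneg (by linarith) (by positivity))
  have hrescale : 100 * q * (q - 2) * (1 + 4 * (q - 1) * q ^ 2) * (1 / q - A.dens) =
      (1 + 4 * (q - 1) * q ^ 2) * (1 - w A) * (100 * (q - 1)) := by
    have : q - 1 ≠ 0 := by linarith
    rw [one_sub_hoffmanWeight hα]
    field_simp
  rw [hrescale]
  have hL_gap := mul_le_mul_of_nonneg_right hL hgap
  have hq100 : 4 ≤ 100 * (q - 1) := by linarith
  rcases le_or_gt (defect A A) (defectThreshold α) with hd | hd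
  · obtain ⟨k, a, hA, -⟩ := h.exists_isHeavy hα hd
    refine ⟨k, a, (hA.dens_symmDiff_dictator_le hα h).trans ?_⟩
    linarith [mul_le_mul hL_gap hq100 zero_le_four (by linarith)]
  · obtain ⟨a⟩ := this
    refine ⟨0, a, le_trans (b := 1) (mod_cast dens_le_one) ?_⟩
    rw [← div_le_iff₀ (by linarith)]
    exact hd.le.trans (h.defect_self_le hα)

lemma CrossIntersecting.dens_eq_iff (hα : 3 ≤ Fintype.card α) (h : CrossIntersecting A A) :
    (A.dens : ℝ) = 1 / q ↔ ∃ k a, A = dictator k a := by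
  have : Nonempty α := Fintype.card_pos_iff.1 (by omega)
  constructor
  · intro hdens
    obtain ⟨k, a, hclose⟩ := h.exists_dens_symmDiff_dictator_le hα
    rw [hdens, sub_self, mul_zero] at hclose
    have hempty : symmDiff A (dictator k a) = ∅ :=
      dens_eq_zero.1 (nonpos_iff_eq_zero.1 (mod_cast hclose))
    exact ⟨k, a, symmDiff_eq_bot.1 hempty⟩
  · rintro ⟨k, a, rfl⟩
    exact dens_dictator k a

end Stability

theorem stmt0_general [DecidableEq α] (hα : 3 ≤ Fintype.card α) :
    ∃ C : ℝ, 0 < C ∧ ∀ R : ℕ, 1 ≤ R → ∀ (A : Finset (Fin R → α)) (δ : ℝ),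
      CrossIntersecting A A → (A.card : ℝ) = δ * q ^ R →
        δ ≤ 1 / q ∧ (δ = 1 / q ↔ ∃ i a, A = dictator i a) ∧
          ∀ ε : ℝ, 1 / q - ε ≤ δ →
            ∃ i a, ((symmDiff A (dictator i a)).card : ℝ) ≤ C * ε * q ^ R := by
  have hq : 3 ≤ q := mod_cast hα
  have : Nonempty α := Fintype.card_pos_iff.1 (by omega)
  have hq1 : 0 < q - 1 := by linarith
  have hq2 : 0 < q - 2 := by linarith
  have hC : 0 < 100 * q * (q - 2) * (1 + 4 * (q - 1) * q ^ 2) := by positivity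
  refine ⟨_, hC, fun R hR A δ hA hcard ↦ ?_⟩
  obtain ⟨n, rfl⟩ := Nat.exists_eq_add_of_le' hR
  obtain rfl : (A.dens : ℝ) = δ := by
    rw [← dens_mul_card_pow] at hcard
    exact mul_right_cancel₀ (by positivity) hcard
  refine ⟨hA.dens_le hα, hA.dens_eq_iff hα, fun ε hε ↦ ?_⟩
  obtain ⟨i, a, hclose⟩ := hA.exists_dens_symmDiff_dictator_le hα
  refine ⟨i, a, ?_⟩
  rw [← dens_mul_card_pow]
  gcongr
  exact hclose.trans (mul_le_mul_of_nonneg_left (by linarith) hC.le)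

end

/-- There exists a universal constant `C > 0` such that for every `R ≥ 1`:
if `A ⊆ F₃^R` is an independent set of `K₃^{⊗R}` (no `f, f' ∈ A` differ in every
coordinate) with `|A| = δ·3^R`, then `δ ≤ 1/3`; `δ = 1/3` iff `A` is a dictator;
and if `δ ≥ 1/3 − ε` with `ε ∈ (0,1/3)` then `A` is `C·ε`-close to a dictator. -/
theorem stmt0 :
    ∃ C : ℝ, 0 < C ∧
      ∀ R : ℕ, 1 ≤ R →
        ∀ (A : Finset (Fin R → F3)) (δ : ℝ),
          (∀ f ∈ A, ∀ f' ∈ A, ∃ i, f i = f' i) →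
          (A.card : ℝ) = δ * 3 ^ R →
          (δ ≤ 1 / 3 ∧
            (δ = 1 / 3 ↔
              ∃ (i : Fin R) (a : F3),
                A = Finset.univ.filter (fun f => f i = a)) ∧
            ∀ ε : ℝ, 0 < ε → ε < 1 / 3 → 1 / 3 - ε ≤ δ →
              ∃ (i : Fin R) (a : F3),
                ((symmDiff A (Finset.univ.filter (fun f => f i = a))).card : ℝ)
                  ≤ C * ε * 3 ^ R) := by
  obtain ⟨C, hC, h⟩ := stmt0_general (α := F3) (ZMod.card 3).ge
  simp only [ZMod.card, Nat.cast_ofNat] at h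
  refine ⟨C, hC, fun R hR A δ hA hcard ↦ ?_⟩
  obtain ⟨hle, heq, hclose⟩ := h R hR A δ hA hcard
  exact ⟨hle, heq, fun ε _ _ ↦ hclose ε⟩
end

section
/- For all r, d ∈ ℕ, every independent set A of the graph 𝒢 on vertex set P_{r,2d} satisfies |A| ≤ |P_{r,2d}|/3. -/
open scoped BigOperators

abbrev Pt (r : ℕ) := Fin r → F3
abbrev Fn (r : ℕ) := Pt r → F3

/-- The set of functions `F₃^r → F₃` computed by polynomials of total degree at most `d`
with individual degrees at most `2`. -/
def PolySet (r d : ℕ) : Set (Fn r) :=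
  {g | ∃ P : MvPolynomial (Fin r) F3,
        P.totalDegree ≤ d ∧ (∀ i, P.degreeOf i ≤ 2) ∧
        ∀ x, g x = MvPolynomial.eval x P}

noncomputable def polyFinset (r d : ℕ) : Finset (Fn r) :=
  (Set.toFinite (PolySet r d)).toFinset

/-- Support size `|β|`. -/
def supp {r : ℕ} (β : Fn r) : ℕ := (Finset.univ.filter fun x => β x ≠ 0).card

/-- Dot product `⟨β, f⟩ = Σ_x β(x) f(x)` in `F₃`. -/
def dotF {r : ℕ} (β f : Fn r) : F3 := ∑ x, β x * f x

noncomputable def ω : ℂ := Complex.exp (2 * (Real.pi : ℂ) * Complex.I / 3)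

/-- The character `χ_β(f) = ω^{⟨β,f⟩}`. -/
noncomputable def chi {r : ℕ} (β f : Fn r) : ℂ := ω ^ (dotF β f).val

/-- The dual `S^⊥` of a set of functions. -/
def dualSet (r : ℕ) (S : Set (Fn r)) : Set (Fn r) := {g | ∀ h ∈ S, dotF g h = 0}

/-- `Λ` contains exactly one representative, of minimal support size, from each coset
of `𝔉_r` modulo `P_{r,d}^⊥`. -/
def IsMinRepSet (r d : ℕ) (Λ : Finset (Fn r)) : Prop :=
  (∀ β : Fn r, ∃! β', β' ∈ Λ ∧ β - β' ∈ dualSet r (PolySet r d)) ∧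
  (∀ β' ∈ Λ, ∀ γ : Fn r, β' - γ ∈ dualSet r (PolySet r d) → supp β' ≤ supp γ)

/-- The noise `a·(p² + 1)` (pointwise). -/
def shift {r : ℕ} (p : Fn r) (a : F3) : Fn r := fun x => a * (p x ^ 2 + 1)

/-- Fourier coefficient `Â(β)` of a function on `P_{r,d}`. -/
noncomputable def fourierP (r d : ℕ) (A : Fn r → ℂ) (β : Fn r) : ℂ :=
  (∑ g ∈ polyFinset r d, A g * (starRingEnd ℂ) (chi β g)) / ((polyFinset r d).card : ℂ)

/-- Expectation `E_{f ∈ P_{r,d}}[A(f)]`. -/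
noncomputable def expP (r d : ℕ) (A : Fn r → ℝ) : ℝ :=
  (∑ f ∈ polyFinset r d, A f) / ((polyFinset r d).card : ℝ)

/-- Degree-`k` influence `Inf_x^{≤k}(A)` with respect to a set `Λ` of minimal-support
coset representatives. -/
noncomputable def infP (r d k : ℕ) (Λ : Finset (Fn r)) (A : Fn r → ℝ) (x : Pt r) : ℝ :=
  ∑ β ∈ Λ.filter (fun β => β x ≠ 0 ∧ supp β ≤ k),
    ‖fourierP r d (fun g => (A g : ℂ)) β‖ ^ 2

/-! The noise with `p = 0` is the constant `a`, so `f`, `f + 1`, `f + 2` form a triangle in the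
graph for every `f`. Hence the translates `A`, `A + 1`, `A + 2` of an independent set are disjoint,
and all three lie in the vertex set, which is a vector space containing the constants. Any other
`g` in that space could replace `1`, provided no two points of `A` differ by `g` or `2g`. -/

theorem card_mul_card_le_of_add_notMem {G V : Type*} [AddGroup G] [Fintype G] [AddGroup V]
    (φ : G →+ V) {A S : Finset V} (hAS : ∀ f ∈ A, ∀ a, f + φ a ∈ S)
    (hA : ∀ f ∈ A, ∀ a ≠ 0, f + φ a ∉ A) :
    Fintype.card G * A.card ≤ S.card := by
  have injOn_add : Set.InjOn (fun q : G × V ↦ q.2 + φ q.1) (Finset.univ ×ˢ A : Finset (G × V)) := by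
    rintro ⟨a, f⟩ hf ⟨b, g⟩ hg (hfg : f + φ a = g + φ b)
    simp only [Finset.coe_product, Set.mem_prod, Finset.mem_coe] at hf hg
    have translate_eq : f + φ (a - b) = g := by
      rw [map_sub, ← add_sub_assoc, hfg, add_sub_cancel_right]
    have hab : a = b := by
      by_contra hne
      exact hA f hf.2 (a - b) (sub_ne_zero.mpr hne) (translate_eq ▸ hg.2)
    subst hab
    exact Prod.ext rfl (add_right_cancel hfg)
  rw [← Finset.card_univ, ← Finset.card_product]
  exact Finset.card_le_card_of_injOn _
    (fun q hq ↦ hAS q.2 (Finset.mem_product.mp hq).2 q.1) injOn_add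

/-- The space `P_{r,d}` as a linear subspace of all functions on `F₃^r`: the image under evaluation
of the polynomials of bounded total and individual degree. Its underlying set is `PolySet r d`. -/
noncomputable def polySubmodule (r d : ℕ) : Submodule F3 (Fn r) :=
  (MvPolynomial.restrictTotalDegree (Fin r) F3 d ⊓
    MvPolynomial.restrictDegree (Fin r) F3 2).map (MvPolynomial.evalₗ F3 (Fin r))

theorem mem_polySubmodule {r d : ℕ} {f : Fn r} : f ∈ polySubmodule r d ↔ f ∈ PolySet r d := by
  simp only [polySubmodule, PolySet, Submodule.mem_map, Submodule.mem_inf,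
    MvPolynomial.mem_restrictTotalDegree, MvPolynomial.mem_restrictDegree,
    MvPolynomial.degreeOf_le_iff, Set.mem_ofPred_eq, and_assoc, funext_iff,
    MvPolynomial.evalₗ_apply, eq_comm (b := f _)]
  exact exists_congr fun P ↦ and_congr_right' <| and_congr_left'
    ⟨fun h i m hm ↦ h m hm i, fun h m hm i ↦ h i m hm⟩

theorem mem_polyFinset {r d : ℕ} {f : Fn r} : f ∈ polyFinset r d ↔ f ∈ polySubmodule r d := by
  rw [polyFinset, Set.Finite.mem_toFinset, mem_polySubmodule]

theorem one_mem_polySet (r d : ℕ) : (1 : Fn r) ∈ PolySet r d :=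
  ⟨1, by simp, by simp, by simp⟩

theorem shift_zero {r : ℕ} (a : F3) : shift (0 : Fn r) a = a • 1 := by
  ext x
  simp [shift]

theorem stmt1_general (r n : ℕ) {g : Fn r} (hg : g ∈ PolySet r n) (A : Finset (Fn r))
    (hA : ↑A ⊆ PolySet r n)
    (hind : ∀ f ∈ A, ∀ a : F3, (a = 1 ∨ a = 2) → f + a • g ∉ A) :
    3 * A.card ≤ (polyFinset r n).card := by
  have translate_mem : ∀ f ∈ A, ∀ a : F3, f + a • g ∈ polyFinset r n := fun f hf a ↦
    mem_polyFinset.mpr <| add_mem (mem_polySubmodule.mpr (hA hf)) <|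
      Submodule.smul_mem _ a (mem_polySubmodule.mpr hg)
  have eq_one_or_two : ∀ a : F3, a ≠ 0 → a = 1 ∨ a = 2 := by decide
  simpa only [ZMod.card] using
    card_mul_card_le_of_add_notMem (LinearMap.toSpanSingleton F3 (Fn r) g).toAddMonoidHom
      translate_mem fun f hf a ha ↦ hind f hf a (eq_one_or_two a ha)

/-- Every independent set `A` of the graph `𝒢` on vertex set `P_{r,2d}` satisfies
`|A| ≤ |P_{r,2d}|/3`. -/
theorem stmt1 (r d : ℕ) (A : Finset (Fn r)) (hA : ↑A ⊆ PolySet r (2 * d))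
    (hind : ∀ f ∈ A, ∀ p ∈ polyFinset r d, ∀ a : F3, (a = 1 ∨ a = 2) →
      f + shift p a ∉ A) :
    3 * A.card ≤ (polyFinset r (2 * d)).card :=
  stmt1_general r (2 * d) (one_mem_polySet r (2 * d)) A hA
    fun f hf a ha ↦ shift_zero a ▸ hind f hf 0 (mem_polyFinset.mpr (zero_mem _)) a ha
end

section
/- There exists a universal constant d₀ ∈ ℕ such that for all d ≥ d₀ and all r ∈ ℕ, an independent set A of the graph 𝒢 on vertex set P_{r,2d} satisfies |A| = |P_{r,2d}|/3 if and only if A is a dictator, i.e., A = {f ∈ P_{r,2d} : f(x) = b} for some x ∈ F₃^r and b ∈ F₃. -/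
open scoped BigOperators

/-!
Independence says that `A` meets every line `{f + a (p² + 1) : a ∈ F₃}` at most once, so at density
`1/3` it meets each of them exactly once. Averaging over such lines kills the Fourier coefficient of
`1_A` at every nontrivial character `f ↦ ω ^ m(f)` whose linear form `m` vanishes at some `p² + 1`.
If `m` vanishes at none of them and is normalised by `m(1) = 1`, then comparing `p` with `p + 1`
shows that `m(p) = 0` implies `m(p²) = 0`; hence `m` is multiplicative on polynomials of degree at
most `d`, that is, an evaluation at a point.

So the Fourier support consists of scaled point evaluations. Two of them at distinct points cannot
occur together when `d ≥ 1`: any four evaluations are independent on quadratic polynomials, so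
`1_A² = 1_A` forces their sum, which is not a scaled evaluation, into the support as well. Thus `A`
depends only on the value at one point, and the line in direction `1` singles out one value there.
-/

section FourierAnalysis

variable {G : Type*} [AddCommGroup G] [Fintype G]

/-- The Fourier coefficient of `F` at the character `ψ` of a finite abelian group, normalised so
that `F` is the sum of its coefficients times the corresponding characters. -/
noncomputable def dftCoeff (F : G → ℂ) (ψ : AddChar G ℂ) : ℂ :=
  (∑ g, F g * ψ (-g)) / Fintype.card G

lemma sum_dftCoeff_mul_apply (F : G → ℂ) (f : G) :
    ∑ ψ : AddChar G ℂ, dftCoeff F ψ * ψ f = F f := by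
  classical
  have hterm (ψ : AddChar G ℂ) :
      dftCoeff F ψ * ψ f = (∑ g, F g * ψ (f - g)) / Fintype.card G := by
    simp only [dftCoeff, div_mul_eq_mul_div, Finset.sum_mul, mul_assoc,
      ← AddChar.map_add_eq_mul, neg_add_eq_sub]
  have hcard : (Fintype.card G : ℂ) ≠ 0 := Nat.cast_ne_zero.2 Fintype.card_ne_zero
  simp only [hterm, ← Finset.sum_div]
  rw [Finset.sum_comm, div_eq_iff hcard]
  simp [← Finset.mul_sum, AddChar.sum_apply_eq_ite, sub_eq_zero]

lemma apply_eq_of_forall_dftCoeff_ne_zero {F : G → ℂ} {f g : G}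
    (h : ∀ ψ, dftCoeff F ψ ≠ 0 → ψ f = ψ g) : F f = F g := by
  rw [← sum_dftCoeff_mul_apply F f, ← sum_dftCoeff_mul_apply F g]
  refine Finset.sum_congr rfl fun ψ _ => ?_
  by_cases hψ : dftCoeff F ψ = 0
  · rw [hψ, zero_mul, zero_mul]
  · rw [h ψ hψ]

lemma sum_dftCoeff_mul_dftCoeff_sub (F H : G → ℂ) (χ : AddChar G ℂ) :
    ∑ ψ, dftCoeff F ψ * dftCoeff H (χ - ψ) = dftCoeff (F * H) χ := by
  have hterm (ψ : AddChar G ℂ) : dftCoeff F ψ * dftCoeff H (χ - ψ) =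
      (∑ g, dftCoeff F ψ * ψ g * (H g * χ (-g))) / Fintype.card G := by
    rw [dftCoeff.eq_def H, ← mul_div_assoc, Finset.mul_sum]
    refine congrArg (· / _) (Finset.sum_congr rfl fun g _ => ?_)
    rw [AddChar.sub_apply, neg_neg]
    ring
  simp only [hterm, ← Finset.sum_div]
  rw [Finset.sum_comm, dftCoeff]
  simp only [← Finset.sum_mul, sum_dftCoeff_mul_apply]
  simp only [Pi.mul_apply, mul_assoc]

lemma dftCoeff_add_ne_zero_of_mul_self {F : G → ℂ} (hF : F * F = F) {ψ φ : AddChar G ℂ}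
    (hne : ψ ≠ φ) (hψ : dftCoeff F ψ ≠ 0) (hφ : dftCoeff F φ ≠ 0)
    (hunique : ∀ χ, dftCoeff F χ ≠ 0 → dftCoeff F (ψ + φ - χ) ≠ 0 → χ = ψ ∨ χ = φ) :
    dftCoeff F (ψ + φ) ≠ 0 := by
  have hconv : dftCoeff F (ψ + φ) = 2 * (dftCoeff F ψ * dftCoeff F φ) := by
    rw [← congrArg (dftCoeff · (ψ + φ)) hF, ← sum_dftCoeff_mul_dftCoeff_sub,
      ← Finset.sum_subset (Finset.subset_univ {ψ, φ}), Finset.sum_pair hne,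
      add_sub_cancel_left, add_sub_cancel_right]
    · ring
    · intro χ _ hχ
      by_contra h
      have := hunique χ (left_ne_zero_of_mul h) (right_ne_zero_of_mul h)
      exact hχ (by simpa using this)
  rw [hconv]
  exact mul_ne_zero two_ne_zero (mul_ne_zero hψ hφ)

lemma dftCoeff_eq_zero_of_sum_translates_eq {ι : Type*} [Fintype ι] [Nonempty ι] {F : G → ℂ}
    {t : ι → G} {c : ℂ} (hF : ∀ g, ∑ i, F (g + t i) = c) {ψ : AddChar G ℂ} (hψ : ψ ≠ 0)
    (ht : ∀ i, ψ (t i) = 1) : dftCoeff F ψ = 0 := by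
  have htranslate (i : ι) : ∑ g, F (g + t i) * ψ (-g) = ∑ g, F g * ψ (-g) := by
    rw [← Equiv.sum_comp (Equiv.addRight (t i)) fun g => F g * ψ (-g)]
    simp [AddChar.map_add_eq_mul, AddChar.map_neg_eq_inv, ht]
  have hsum : Fintype.card ι * ∑ g, F g * ψ (-g) = 0 := by
    calc Fintype.card ι * ∑ g, F g * ψ (-g)
        = ∑ i, ∑ g, F (g + t i) * ψ (-g) := by simp [htranslate]
      _ = c * ∑ g, (-ψ) g := by
          rw [Finset.sum_comm]
          simp only [← Finset.sum_mul, hF, ← Finset.mul_sum, AddChar.neg_apply]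
      _ = 0 := by rw [AddChar.sum_eq_zero_iff_ne_zero.2 (neg_ne_zero.2 hψ), mul_zero]
  have hcard : (Fintype.card ι : ℂ) ≠ 0 := Nat.cast_ne_zero.2 Fintype.card_ne_zero
  rw [dftCoeff, (mul_eq_zero.1 hsum).resolve_left hcard, zero_div]

end FourierAnalysis

section Characters

variable {n : ℕ} [NeZero n]

lemma exists_stdAddChar_eq_of_pow_eq_one {z : ℂ} (hz : z ^ n = 1) :
    ∃ a : ZMod n, ZMod.stdAddChar a = z := by
  obtain ⟨i, -, rfl⟩ := (Complex.isPrimitiveRoot_exp n (NeZero.ne n)).eq_pow_of_pow_eq_one hz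
  refine ⟨(i : ℤ), ?_⟩
  rw [ZMod.stdAddChar_coe, ← Complex.exp_nat_mul]
  congr 1
  push_cast
  ring

lemma exists_linearMap_stdAddChar_eq {V : Type*} [AddCommGroup V] [Module (ZMod n) V]
    (ψ : AddChar V ℂ) : ∃ l : V →ₗ[ZMod n] ZMod n, ∀ v, ψ v = ZMod.stdAddChar (l v) := by
  have hroot (v : V) : ψ v ^ n = 1 := by
    rw [← AddChar.map_nsmul_eq_pow, ← Nat.cast_smul_eq_nsmul (ZMod n), ZMod.natCast_self,
      zero_smul, AddChar.map_zero_eq_one]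
  choose l hl using fun v => exists_stdAddChar_eq_of_pow_eq_one (hroot v)
  have hadd (v w : V) : l (v + w) = l v + l w := by
    apply ZMod.injective_stdAddChar
    rw [AddChar.map_add_eq_mul, hl, hl, hl, AddChar.map_add_eq_mul]
  exact ⟨(AddMonoidHom.mk' l hadd).toZModLinearMap n, fun v => (hl v).symm⟩

variable {ι : Type*} [Fintype ι]

/-- The characters `f ↦ ω^⟨β, f⟩` of a space `V` of functions, as a homomorphism in `β`; its kernel
is the dual `V^⊥`. -/
noncomputable def dotChar (V : Submodule (ZMod n) (ι → ZMod n)) : (ι → ZMod n) →+ AddChar V ℂ where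
  toFun β :=
    { toFun := fun f => ZMod.stdAddChar (β ⬝ᵥ (f : ι → ZMod n))
      map_zero_eq_one' := by simp
      map_add_eq_mul' := fun f g => by
        rw [Submodule.coe_add, dotProduct_add, AddChar.map_add_eq_mul] }
  map_zero' := by ext f; simp
  map_add' β γ := by ext f; simp [add_dotProduct, AddChar.map_add_eq_mul]

lemma dotChar_apply (V : Submodule (ZMod n) (ι → ZMod n)) (β : ι → ZMod n) (f : V) :
    dotChar V β f = ZMod.stdAddChar (β ⬝ᵥ (f : ι → ZMod n)) := rfl

lemma dotProduct_eq_zero_of_dotChar_eq_zero {V : Submodule (ZMod n) (ι → ZMod n)}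
    {β : ι → ZMod n} (h : dotChar V β = 0) {f : ι → ZMod n} (hf : f ∈ V) : β ⬝ᵥ f = 0 := by
  apply ZMod.injective_stdAddChar
  simpa [dotChar_apply] using DFunLike.congr_fun h ⟨f, hf⟩

end Characters

section PolynomialFunctions

variable (K σ : Type*) [CommRing K]

/-- The space of affine functions `σ → K` to `K`, spanned by `1` and the coordinates. -/
def affineFunctions : Submodule K ((σ → K) → K) :=
  1 ⊔ Submodule.span K (Set.range fun (i : σ) (x : σ → K) => x i)

/-- The space of functions given by polynomials of total degree at most `d`, encoded as the
`d`-th power of the space of affine functions, so that degrees add under `Submodule` multiplication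
by construction. -/
def polyFunctions (d : ℕ) : Submodule K ((σ → K) → K) := affineFunctions K σ ^ d

variable {K σ}

lemma one_le_affineFunctions : 1 ≤ affineFunctions K σ := le_sup_left

lemma coord_mem_affineFunctions (i : σ) : (fun x : σ → K => x i) ∈ affineFunctions K σ :=
  Submodule.mem_sup_right (Submodule.subset_span ⟨i, rfl⟩)

lemma linearMap_mem_affineFunctions [Finite σ] (φ : (σ → K) →ₗ[K] K) :
    ⇑φ ∈ affineFunctions K σ := by
  classical
  have := Fintype.ofFinite σ
  have hφ : ⇑φ = ∑ i, φ (fun j => if i = j then 1 else 0) • fun x : σ → K => x i := by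
    ext x
    simp [LinearMap.pi_apply_eq_sum_univ φ x, mul_comm]
  rw [hφ]
  exact sum_mem fun i _ => Submodule.smul_mem _ _ (coord_mem_affineFunctions i)

lemma polyFunctions_mono : Monotone (polyFunctions K σ) := fun _ _ h =>
  pow_le_pow_right' one_le_affineFunctions h

lemma one_mem_polyFunctions (d : ℕ) : 1 ∈ polyFunctions K σ d :=
  Submodule.one_le.1 (one_le_pow_of_one_le' one_le_affineFunctions d)

lemma apply_eq_apply_of_mem_polyFunctions_zero {f : (σ → K) → K} (hf : f ∈ polyFunctions K σ 0)
    (x y : σ → K) : f x = f y := by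
  rw [polyFunctions, pow_zero, Submodule.mem_one] at hf
  obtain ⟨c, rfl⟩ := hf
  rfl

lemma mul_mem_polyFunctions {d e : ℕ} {f g : (σ → K) → K} (hf : f ∈ polyFunctions K σ d)
    (hg : g ∈ polyFunctions K σ e) : f * g ∈ polyFunctions K σ (d + e) := by
  rw [polyFunctions, pow_add]
  exact Submodule.mul_mem_mul hf hg

lemma sq_add_one_mem_polyFunctions {d : ℕ} {p : (σ → K) → K} (hp : p ∈ polyFunctions K σ d) :
    p ^ 2 + 1 ∈ polyFunctions K σ (2 * d) := by
  rw [sq, two_mul]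
  exact add_mem (mul_mem_polyFunctions hp hp) (one_mem_polyFunctions _)

lemma finsuppProd_coord_mem_polyFunctions (s : σ →₀ ℕ) :
    (s.prod fun i n => (fun x : σ → K => x i) ^ n) ∈ polyFunctions K σ s.degree := by
  induction s using Finsupp.induction_linear with
  | zero => simpa using one_mem_polyFunctions 0
  | add s t hs ht =>
    rw [Finsupp.prod_add_index' (fun _ => pow_zero _) (fun _ => pow_add _), map_add]
    exact mul_mem_polyFunctions hs ht
  | single i n =>
    rw [Finsupp.prod_single_index (by exact pow_zero _), Finsupp.degree_single]
    exact Submodule.pow_mem_pow _ (coord_mem_affineFunctions i) n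

lemma affineFunctions_le_map_evalₗ : affineFunctions K σ ≤
    (MvPolynomial.restrictTotalDegree σ K 1).map (MvPolynomial.evalₗ K σ) := by
  refine sup_le (Submodule.one_le.2 ⟨1, ?_, by ext; simp⟩) (Submodule.span_le.2 ?_)
  · simp [MvPolynomial.mem_restrictTotalDegree]
  · rintro _ ⟨i, rfl⟩
    refine ⟨MvPolynomial.X i, ?_, by ext; simp⟩
    rw [SetLike.mem_coe, MvPolynomial.mem_restrictTotalDegree]
    exact (MvPolynomial.totalDegree_monomial_le _ _).trans (by simp)

lemma polyFunctions_le_map_evalₗ (d : ℕ) : polyFunctions K σ d ≤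
    (MvPolynomial.restrictTotalDegree σ K d).map (MvPolynomial.evalₗ K σ) := by
  induction d with
  | zero =>
    refine Submodule.one_le.2 ⟨1, ?_, by ext; simp⟩
    simp [MvPolynomial.mem_restrictTotalDegree]
  | succ d ih =>
    rw [polyFunctions, pow_succ, Submodule.mul_le]
    intro p hp q hq
    obtain ⟨P, hP, rfl⟩ := ih hp
    obtain ⟨Q, hQ, rfl⟩ := affineFunctions_le_map_evalₗ hq
    rw [SetLike.mem_coe, MvPolynomial.mem_restrictTotalDegree] at hP hQ
    refine ⟨P * Q, ?_, by ext; simp⟩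
    rw [SetLike.mem_coe, MvPolynomial.mem_restrictTotalDegree]
    exact (MvPolynomial.totalDegree_mul P Q).trans (add_le_add hP hQ)

lemma mem_polyFunctions_iff {d : ℕ} {f : (σ → K) → K} :
    f ∈ polyFunctions K σ d ↔
      ∃ P : MvPolynomial σ K, P.totalDegree ≤ d ∧ ∀ x, f x = MvPolynomial.eval x P := by
  constructor
  · intro hf
    obtain ⟨P, hP, rfl⟩ := polyFunctions_le_map_evalₗ d hf
    exact ⟨P, (MvPolynomial.mem_restrictTotalDegree _ _ _).1 hP, fun _ => rfl⟩
  · rintro ⟨P, hP, hf⟩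
    have hsum : f = ∑ s ∈ P.support, P.coeff s • s.prod fun i n => (fun x : σ → K => x i) ^ n := by
      ext x
      simp [hf, MvPolynomial.eval_eq, Finsupp.prod]
    rw [hsum]
    exact sum_mem fun s hs => Submodule.smul_mem _ _ (polyFunctions_mono
      ((MvPolynomial.le_totalDegree hs).trans hP) (finsuppProd_coord_mem_polyFunctions s))

end PolynomialFunctions

section DegreeReduction

variable {K σ : Type*} [Field K] [Fintype K]

/-- The least exponent `e'` with `x ^ e' = x ^ e` for all `x` in a field with `q` elements: `0` is
kept apart because `x ^ (q - 1) = 1` fails at `x = 0`. -/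
def reducedExponent (q e : ℕ) : ℕ := if e = 0 then 0 else (e - 1) % (q - 1) + 1

lemma reducedExponent_le (q e : ℕ) : reducedExponent q e ≤ e := by
  have := Nat.mod_le (e - 1) (q - 1)
  unfold reducedExponent
  split_ifs <;> omega

lemma reducedExponent_le_sub_one {q : ℕ} (hq : 1 < q) (e : ℕ) :
    reducedExponent q e ≤ q - 1 := by
  have := Nat.mod_lt (e - 1) (Nat.sub_pos_of_lt hq)
  unfold reducedExponent
  split_ifs <;> omega

lemma pow_reducedExponent (x : K) (e : ℕ) : x ^ reducedExponent (Fintype.card K) e = x ^ e := by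
  rcases e with _ | e
  · simp [reducedExponent]
  rcases eq_or_ne x 0 with rfl | hx
  · simp [reducedExponent]
  simp only [reducedExponent, Nat.add_one_ne_zero, if_false, Nat.add_sub_cancel, pow_succ]
  rw [← pow_eq_pow_mod _ (FiniteField.pow_card_sub_one_eq_one x hx)]

lemma exists_degreeOf_le_card_sub_one (P : MvPolynomial σ K) :
    ∃ Q : MvPolynomial σ K, Q.totalDegree ≤ P.totalDegree ∧
      (∀ i, Q.degreeOf i ≤ Fintype.card K - 1) ∧
      ∀ x, MvPolynomial.eval x Q = MvPolynomial.eval x P := by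
  have hzero : reducedExponent (Fintype.card K) 0 = 0 := if_pos rfl
  refine ⟨∑ s ∈ P.support, MvPolynomial.monomial (s.mapRange _ hzero) (P.coeff s), ?_, ?_, ?_⟩
  · refine MvPolynomial.totalDegree_finsetSum_le fun s hs =>
      (MvPolynomial.totalDegree_monomial_le _ _).trans
        (le_trans ?_ (MvPolynomial.le_totalDegree hs))
    rw [Finsupp.sum_mapRange_index fun _ => rfl]
    exact Finset.sum_le_sum fun i _ => reducedExponent_le _ _
  · refine fun i => (MvPolynomial.degreeOf_sum_le _ _ _).trans (Finset.sup_le fun s hs => ?_)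
    rw [MvPolynomial.degreeOf_monomial_eq _ _ (MvPolynomial.mem_support_iff.1 hs)]
    exact reducedExponent_le_sub_one Fintype.one_lt_card _
  · intro x
    rw [map_sum, MvPolynomial.eval_eq]
    refine Finset.sum_congr rfl fun s _ => ?_
    rw [MvPolynomial.eval_monomial, Finsupp.prod_mapRange_index fun _ => pow_zero _]
    simp only [pow_reducedExponent, Finsupp.prod]

end DegreeReduction

lemma coe_polyFunctions_eq_polySet (r d : ℕ) :
    (polyFunctions F3 (Fin r) d : Set (Fn r)) = PolySet r d := by
  ext f
  rw [SetLike.mem_coe, mem_polyFunctions_iff]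
  constructor
  · rintro ⟨P, hP, hf⟩
    obtain ⟨Q, hQP, hQ, heval⟩ := exists_degreeOf_le_card_sub_one P
    exact ⟨Q, hQP.trans hP, by simpa using hQ, fun x => by rw [hf, heval]⟩
  · rintro ⟨P, hP, -, hf⟩
    exact ⟨P, hP, hf⟩

section Rigidity

lemma map_mul_of_map_sq_eq_zero {K A : Type*} [Field K] [CommRing A] [Algebra K A]
    (h2 : (2 : K) ≠ 0) {V : Submodule K A} (hV : 1 ∈ V) {m : A →ₗ[K] K} (hm : m 1 = 1)
    (hsq : ∀ p ∈ V, m p = 0 → m (p ^ 2) = 0) {p q : A} (hp : p ∈ V) (hq : q ∈ V) :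
    m (p * q) = m p * m q := by
  have hmap_sq (p : A) (hp : p ∈ V) : m (p ^ 2) = m p ^ 2 := by
    have hker := hsq (p - m p • 1) (sub_mem hp (V.smul_mem _ hV)) (by simp [hm])
    have hexpand : (p - m p • 1) ^ 2 = p ^ 2 - (2 * m p) • p + m p ^ 2 • (1 : A) := by
      simp only [Algebra.smul_def, map_mul, map_pow, map_ofNat]
      ring
    rw [hexpand] at hker
    simp only [map_add, map_sub, map_smul, hm, smul_eq_mul] at hker
    linear_combination hker
  have hpolar : m ((p + q) ^ 2) = m (p ^ 2) + 2 * m (p * q) + m (q ^ 2) := by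
    have : (p + q) ^ 2 = p ^ 2 + (2 : K) • (p * q) + q ^ 2 := by
      simp only [Algebra.smul_def, map_ofNat]
      ring
    simp [this]
  rw [hmap_sq _ hp, hmap_sq _ hq, hmap_sq _ (add_mem hp hq), map_add] at hpolar
  exact mul_left_cancel₀ h2 (by linear_combination -hpolar)

lemma map_eq_apply_of_map_mul {K σ : Type*} [CommRing K] {d : ℕ} {m : ((σ → K) → K) →ₗ[K] K}
    (hone : m 1 = 1)
    (hmul : ∀ p ∈ polyFunctions K σ d, ∀ q ∈ polyFunctions K σ d, m (p * q) = m p * m q)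
    {f : (σ → K) → K} (hf : f ∈ polyFunctions K σ (2 * d)) :
    m f = f fun i => m fun x => x i := by
  set y : σ → K := fun i => m fun x => x i
  have haffine : affineFunctions K σ ≤ LinearMap.eqLocus m (LinearMap.proj y) := by
    refine sup_le (Submodule.one_le.2 (by simpa using hone)) (Submodule.span_le.2 ?_)
    rintro _ ⟨i, rfl⟩
    rfl
  have hlow (k : ℕ) (hk : k ≤ d) :
      polyFunctions K σ k ≤ LinearMap.eqLocus m (LinearMap.proj y) := by
    induction k with
    | zero => exact Submodule.one_le.2 (by simpa using hone)
    | succ k ih =>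
      rw [polyFunctions, pow_succ, Submodule.mul_le]
      intro p hp q hq
      have hq' : q ∈ polyFunctions K σ d :=
        polyFunctions_mono (by omega : 1 ≤ d) (by rwa [polyFunctions, pow_one])
      rw [LinearMap.mem_eqLocus, hmul p (polyFunctions_mono (by omega) hp) q hq',
        ih (by omega) hp, haffine hq]
      rfl
  suffices h : polyFunctions K σ (2 * d) ≤ LinearMap.eqLocus m (LinearMap.proj y) from h hf
  rw [polyFunctions, two_mul, pow_add, Submodule.mul_le]
  intro p hp q hq
  rw [LinearMap.mem_eqLocus, hmul p hp q hq, hlow d le_rfl hp, hlow d le_rfl hq]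
  rfl

lemma map_sq_eq_zero_of_map_sq_add_one_ne_zero {A : Type*} [CommRing A] [Algebra F3 A]
    {V : Submodule F3 A} (hV : 1 ∈ V) {m : A →ₗ[F3] F3} (hm : m 1 = 1)
    (h : ∀ p ∈ V, m (p ^ 2 + 1) ≠ 0) {p : A} (hp : p ∈ V) (hp0 : m p = 0) : m (p ^ 2) = 0 := by
  have hne_two : m (p ^ 2) + 1 ≠ 0 := by simpa [hm] using h p hp
  have hne_one : m (p ^ 2) + 2 ≠ 0 := by
    have hexpand : (p + 1) ^ 2 + 1 = p ^ 2 + (2 : F3) • p + (2 : F3) • 1 := by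
      simp only [Algebra.smul_def, map_ofNat]
      ring
    simpa [hexpand, hm, hp0] using h (p + 1) (add_mem hp hV)
  have hF3 : ∀ a : F3, a + 1 ≠ 0 → a + 2 ≠ 0 → a = 0 := by decide
  exact hF3 _ hne_two hne_one

lemma exists_map_eq_mul_apply_of_map_sq_add_one_ne_zero {σ : Type*} {d : ℕ}
    {m : ((σ → F3) → F3) →ₗ[F3] F3} (h : ∀ p ∈ polyFunctions F3 σ d, m (p ^ 2 + 1) ≠ 0) :
    ∃ (y : σ → F3) (c : F3), ∀ f ∈ polyFunctions F3 σ (2 * d), m f = c * f y := by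
  have hone : m 1 ≠ 0 := by simpa using h 0 (zero_mem _)
  set m' : ((σ → F3) → F3) →ₗ[F3] F3 := (m 1)⁻¹ • m with hm'
  have hone' : m' 1 = 1 := inv_mul_cancel₀ hone
  have hne (p) (hp : p ∈ polyFunctions F3 σ d) : m' (p ^ 2 + 1) ≠ 0 :=
    mul_ne_zero (inv_ne_zero hone) (h p hp)
  have hmul (p) (hp : p ∈ polyFunctions F3 σ d) (q) (hq : q ∈ polyFunctions F3 σ d) :
      m' (p * q) = m' p * m' q :=
    map_mul_of_map_sq_eq_zero (by decide) (one_mem_polyFunctions d) hone'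
      (fun _ => map_sq_eq_zero_of_map_sq_add_one_ne_zero (one_mem_polyFunctions d) hone' hne) hp hq
  refine ⟨fun i => m' fun x => x i, m 1, fun f hf => ?_⟩
  rw [← map_eq_apply_of_map_mul hone' hmul hf, hm', LinearMap.smul_apply, smul_eq_mul,
    mul_inv_cancel_left₀ hone]

end Rigidity

section Separation

lemma exists_mem_affineFunctions_eq_one {K σ : Type*} [Field K] [Finite σ]
    {p : Submodule K (σ → K)} {y u : σ → K} (hy : y - u ∉ p) :
    ∃ f ∈ affineFunctions K σ, f y = 1 ∧ ∀ x, x - u ∈ p → f x = 0 := by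
  obtain ⟨φ, hφ, hp⟩ := Submodule.exists_le_ker_of_notMem hy
  refine ⟨(φ (y - u))⁻¹ • (⇑φ - φ u • 1), Submodule.smul_mem _ _ (sub_mem
    (linearMap_mem_affineFunctions φ)
    (Submodule.smul_mem _ _ (Submodule.one_le.1 one_le_affineFunctions))), ?_, fun x hx => ?_⟩
  · simpa using inv_mul_cancel₀ hφ
  · have hx0 : φ x - φ u = 0 := by simpa using hp hx
    simp [hx0]

variable {σ : Type*}

lemma exists_mem_polyFunctions_two_of_add_add_ne_zero [Finite σ] {y u v w : σ → F3}
    (hu : y ≠ u) (hv : y ≠ v) (hw : y ≠ w) (huv : u + v + y ≠ 0) :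
    ∃ f ∈ polyFunctions F3 σ 2, f y = 1 ∧ f u = 0 ∧ f v = 0 ∧ f w = 0 := by
  have hline : y - u ∉ Submodule.span F3 {v - u} := by
    rw [Submodule.mem_span_singleton]
    rintro ⟨c, hc⟩
    have hF3 : ∀ c : F3, c = 0 ∨ c = 1 ∨ c = -1 := by decide
    rcases hF3 c with rfl | rfl | rfl
    · exact hu (sub_eq_zero.1 (by simpa using hc.symm))
    · exact hv (by simpa using hc.symm)
    · refine huv (funext fun i => ?_)
      have hci : -(v i - u i) = y i - u i := by simpa using congrFun hc i
      have hthree : (3 : F3) = 0 := rfl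
      simp only [Pi.add_apply, Pi.zero_apply]
      linear_combination u i * hthree - hci
  obtain ⟨f, hf, hfy, hfx⟩ := exists_mem_affineFunctions_eq_one hline
  obtain ⟨g, hg, hgy, hgx⟩ := exists_mem_affineFunctions_eq_one (K := F3) (p := ⊥)
    (mt (Submodule.mem_bot F3).1 (sub_ne_zero.2 hw))
  refine ⟨f * g, ?_, by simp [hfy, hgy], ?_, ?_, ?_⟩
  · rw [polyFunctions, sq]
    exact Submodule.mul_mem_mul hf hg
  · simp [hfx u (by simp)]
  · simp [hfx v (Submodule.mem_span_singleton_self _)]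
  · simp [hgx w (by simp)]

lemma exists_mem_polyFunctions_two [Finite σ] {y u v w : σ → F3} (hu : y ≠ u) (hv : y ≠ v)
    (hw : y ≠ w) : ∃ f ∈ polyFunctions F3 σ 2, f y = 1 ∧ f u = 0 ∧ f v = 0 ∧ f w = 0 := by
  by_cases huv : u + v + y = 0
  · by_cases huw : u + w + y = 0
    · obtain rfl : v = w := add_left_cancel (add_right_cancel (huv.trans huw.symm))
      have hvv : v + v + y ≠ 0 := fun h => hv (funext fun i => by
        have hi : v i + v i + y i = 0 := congrFun h i
        have hthree : (3 : F3) = 0 := rfl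
        linear_combination hi - v i * hthree)
      obtain ⟨f, hf, hfy, hfv, -, hfu⟩ :=
        exists_mem_polyFunctions_two_of_add_add_ne_zero hv hv hu hvv
      exact ⟨f, hf, hfy, hfu, hfv, hfv⟩
    · obtain ⟨f, hf, hfy, hfu, hfw, hfv⟩ :=
        exists_mem_polyFunctions_two_of_add_add_ne_zero hu hw hv huw
      exact ⟨f, hf, hfy, hfu, hfv, hfw⟩
  · exact exists_mem_polyFunctions_two_of_add_add_ne_zero hu hv hw huv

lemma exists_mem_polyFunctions_two_of_card_le_three [Finite σ] {y : σ → F3}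
    {s : Finset (σ → F3)} (hs : s.card ≤ 3) (hy : y ∉ s) :
    ∃ f ∈ polyFunctions F3 σ 2, f y = 1 ∧ ∀ x ∈ s, f x = 0 := by
  classical
  have hcases : s.card = 0 ∨ s.card = 1 ∨ s.card = 2 ∨ s.card = 3 := by omega
  rcases hcases with h | h | h | h
  · rw [Finset.card_eq_zero] at h
    exact ⟨1, one_mem_polyFunctions 2, rfl, by simp [h]⟩
  · obtain ⟨u, rfl⟩ := Finset.card_eq_one.1 h
    have hu : y ≠ u := by simpa using hy
    obtain ⟨f, hf, hfy, hfu, -, -⟩ := exists_mem_polyFunctions_two hu hu hu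
    exact ⟨f, hf, hfy, by simpa using hfu⟩
  · obtain ⟨u, v, -, rfl⟩ := Finset.card_eq_two.1 h
    simp only [Finset.mem_insert, Finset.mem_singleton, not_or] at hy
    obtain ⟨f, hf, hfy, hfu, hfv, -⟩ := exists_mem_polyFunctions_two hy.1 hy.2 hy.2
    exact ⟨f, hf, hfy, by simpa using ⟨hfu, hfv⟩⟩
  · obtain ⟨u, v, w, -, -, -, rfl⟩ := Finset.card_eq_three.1 h
    simp only [Finset.mem_insert, Finset.mem_singleton, not_or] at hy
    obtain ⟨f, hf, hfy, hfu, hfv, hfw⟩ := exists_mem_polyFunctions_two hy.1 hy.2.1 hy.2.2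
    exact ⟨f, hf, hfy, by simpa using ⟨hfu, hfv, hfw⟩⟩

variable [Fintype σ] [DecidableEq σ]

lemma eq_zero_of_dotProduct_polyFunctions_two_eq_zero {β : (σ → F3) → F3}
    (hβ : hammingNorm β ≤ 4) (h : ∀ f ∈ polyFunctions F3 σ 2, β ⬝ᵥ f = 0) : β = 0 := by
  by_contra hne
  obtain ⟨y, hy⟩ := Function.ne_iff.1 hne
  set s : Finset (σ → F3) := {x | β x ≠ 0}
  have hys : y ∈ s := by simpa [s] using hy
  have hcard : (s.erase y).card ≤ 3 := by
    rw [Finset.card_erase_of_mem hys]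
    exact Nat.sub_le_of_le_add hβ
  obtain ⟨f, hf, hfy, hfs⟩ :=
    exists_mem_polyFunctions_two_of_card_le_three hcard (Finset.notMem_erase y s)
  have hdot : β ⬝ᵥ f = β y * f y := by
    refine Finset.sum_eq_single y (fun x _ hxy => ?_) (by simp)
    by_cases hx : β x = 0
    · rw [hx, zero_mul]
    · rw [hfs x (by simp [s, hx, hxy]), mul_zero]
  exact hy (by simpa [hdot, hfy] using h f hf)

lemma dotChar_polyFunctions_injOn {d : ℕ} (hd : 1 ≤ d) :
    Set.InjOn (dotChar (polyFunctions F3 σ (2 * d))) {β | hammingNorm β ≤ 2} := by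
  intro β hβ γ hγ h
  rw [← neg_add_eq_zero]
  refine eq_zero_of_dotProduct_polyFunctions_two_eq_zero ?_ fun f hf => ?_
  · calc hammingNorm (-β + γ) = hammingDist β γ := (hammingDist_eq_hammingNorm β γ).symm
      _ ≤ hammingDist β 0 + hammingDist 0 γ := hammingDist_triangle β 0 γ
      _ ≤ 2 + 2 := by
        rw [hammingDist_zero_right, hammingDist_zero_left]
        exact add_le_add hβ hγ
  · refine dotProduct_eq_zero_of_dotChar_eq_zero ?_ (polyFunctions_mono (by omega : 2 ≤ 2 * d) hf)
    rw [map_add, map_neg, h, neg_add_cancel]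

end Separation

section PointMasses

variable {ι M : Type*} [DecidableEq ι]

lemma hammingNorm_single_add_single_le_two [Fintype ι] [DecidableEq M] [AddZeroClass M] (u v : ι)
    (a b : M) : hammingNorm (Pi.single u a + Pi.single v b : ι → M) ≤ 2 := by
  have hsub : ({x | (Pi.single u a + Pi.single v b : ι → M) x ≠ 0} : Finset ι) ⊆ {u, v} := by
    intro x
    contrapose!
    simp +contextual
  exact (Finset.card_le_card hsub).trans Finset.card_le_two

lemma single_eq_or_single_eq_of_add_eq [AddZeroClass M] {u v y z : ι} {a b c e : M} (hyz : y ≠ z)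
    (hc : c ≠ 0) (he : e ≠ 0)
    (h : (Pi.single u a + Pi.single v b : ι → M) = Pi.single y c + Pi.single z e) :
    (Pi.single u a : ι → M) = Pi.single y c ∨ (Pi.single u a : ι → M) = Pi.single z e := by
  have hy : (Pi.single u a : ι → M) y + (Pi.single v b : ι → M) y = c := by
    simpa [hyz] using congrFun h y
  have hz : (Pi.single u a : ι → M) z + (Pi.single v b : ι → M) z = e := by
    simpa [hyz.symm] using congrFun h z
  by_cases huy : u = y
  · have hvy : v ≠ y := by
      rintro rfl
      subst huy
      exact he (by simpa [hyz.symm] using hz.symm)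
    left
    subst huy
    simpa [hvy.symm] using hy
  · have hvy : v = y := by
      by_contra hvy
      exact hc (by simpa [Pi.single_apply, Ne.symm huy, Ne.symm hvy] using hy.symm)
    have hua : (Pi.single u a : ι → M) z = e := by simpa [hvy, hyz.symm] using hz
    have huz : u = z := by
      by_contra huz
      exact he (by simpa [Ne.symm huz] using hua.symm)
    right
    subst huz
    simpa using hua

end PointMasses

section LineTransversals

variable (K : Type*) {V : Type*} [Ring K] [AddCommGroup V] [Module K V]

/-- `B` meets every line `f + K q` in direction `q` exactly once; as a condition on the parameter
`a` this also makes sense for `q = 0`, where it never holds unless `K` is trivial. -/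
def IsLineTransversal (B : Finset V) (q : V) : Prop := ∀ f, ∃! a : K, f + a • q ∈ B

variable [Fintype V] {B : Finset V} {q : V}

variable {K} in
lemma IsLineTransversal.dftCoeff_indicator_eq_zero [Finite K] (hB : IsLineTransversal K B q)
    {ψ : AddChar V ℂ} (hψ : ψ ≠ 0) (hq : ∀ a : K, ψ (a • q) = 1) :
    dftCoeff (Set.indicator B 1) ψ = 0 := by
  have := Fintype.ofFinite K
  refine dftCoeff_eq_zero_of_sum_translates_eq (c := 1) (fun f => ?_) hψ hq
  obtain ⟨a, ha, hunique⟩ := hB f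
  rw [Finset.sum_eq_single a (fun b _ hb => Set.indicator_of_notMem (mt (hunique b) hb) _)
    (by simp)]
  exact Set.indicator_of_mem ha _

variable [Fintype K]

lemma sum_card_add_smul_mem [DecidableEq V] (B : Finset V) (q : V) :
    ∑ f, Finset.card {a : K | f + a • q ∈ B} = Fintype.card K * B.card := by
  have htranslate (a : K) : ∑ f : V, (if f + a • q ∈ B then 1 else 0) = B.card := by
    refine (Equiv.sum_comp (Equiv.addRight (a • q)) fun f => if f ∈ B then 1 else 0).trans ?_
    simp
  simp only [Finset.card_filter]
  rw [Finset.sum_comm]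
  simp [htranslate]

lemma isLineTransversal_iff_card_mul_card_eq
    (h : ∀ f (a b : K), f + a • q ∈ B → f + b • q ∈ B → a = b) :
    IsLineTransversal K B q ↔ Fintype.card K * B.card = Fintype.card V := by
  classical
  have hle (f : V) : Finset.card {a : K | f + a • q ∈ B} ≤ 1 :=
    Finset.card_le_one.2 fun a ha b hb => h f a b (by simpa using ha) (by simpa using hb)
  have hone (f : V) :
      Finset.card {a : K | f + a • q ∈ B} = 1 ↔ ∃! a : K, f + a • q ∈ B := by
    rw [Finset.card_eq_one, Finset.singleton_iff_unique_mem]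
    simp
  have hsum := Finset.sum_eq_sum_iff_of_le (s := Finset.univ) fun f _ => hle f
  rw [sum_card_add_smul_mem, Finset.sum_const, Finset.card_univ, smul_eq_mul, mul_one] at hsum
  rw [hsum]
  simp [IsLineTransversal, hone]

end LineTransversals

section Dictators

variable {σ : Type*} {d : ℕ}

/-- The direction `p² + 1` of an edge of `𝒢`, as an element of the space of polynomials of degree
at most `2d` which is the vertex set. -/
def edgeDirection (p : polyFunctions F3 σ d) : polyFunctions F3 σ (2 * d) :=
  ⟨p ^ 2 + 1, sq_add_one_mem_polyFunctions p.2⟩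

lemma edgeDirection_zero_apply (x : σ → F3) :
    (edgeDirection (0 : polyFunctions F3 σ d) : (σ → F3) → F3) x = 1 := by
  simp [edgeDirection]

variable {B : Finset (polyFunctions F3 σ (2 * d))}

lemma isLineTransversal_of_forall_mem_iff_apply_eq {y : σ → F3} {b : F3}
    (hB : ∀ f : polyFunctions F3 σ (2 * d), f ∈ B ↔ f.1 y = b) :
    IsLineTransversal F3 B (edgeDirection 0) := by
  refine fun f => ⟨b - f.1 y, ?_, fun a ha => ?_⟩
  · simp [hB, edgeDirection_zero_apply]
  · have hab : f.1 y + a = b := by simpa [edgeDirection_zero_apply] using (hB _).1 ha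
    exact eq_sub_of_add_eq' hab

section Support

variable [Fintype σ] [DecidableEq σ]

lemma dotChar_single_eq_or_eq_of_add_eq (hd : 1 ≤ d) {u v y z : σ → F3} {a b c e : F3}
    (hyz : y ≠ z) (hc : c ≠ 0) (he : e ≠ 0)
    (h : dotChar (polyFunctions F3 σ (2 * d)) (Pi.single u a) + dotChar _ (Pi.single v b) =
      dotChar _ (Pi.single y c) + dotChar _ (Pi.single z e)) :
    dotChar (polyFunctions F3 σ (2 * d)) (Pi.single u a) = dotChar _ (Pi.single y c) ∨
      dotChar (polyFunctions F3 σ (2 * d)) (Pi.single u a) = dotChar _ (Pi.single z e) := by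
  rw [← map_add, ← map_add] at h
  have hsingle := dotChar_polyFunctions_injOn hd
    (hammingNorm_single_add_single_le_two u v a b) (hammingNorm_single_add_single_le_two y z c e) h
  exact (single_eq_or_single_eq_of_add_eq hyz hc he hsingle).imp
    (congrArg (dotChar _)) (congrArg (dotChar _))

variable [Fintype (polyFunctions F3 σ (2 * d))]

lemma exists_eq_dotChar_single (hB : ∀ p, IsLineTransversal F3 B (edgeDirection p))
    {ψ : AddChar (polyFunctions F3 σ (2 * d)) ℂ} (hψ : dftCoeff (Set.indicator B 1) ψ ≠ 0) :
    ∃ y c, ψ = dotChar _ (Pi.single y c) := by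
  rcases eq_or_ne ψ 0 with rfl | hψ0
  · exact ⟨0, 0, by simp⟩
  obtain ⟨l, hl⟩ := exists_linearMap_stdAddChar_eq (n := 3) ψ
  obtain ⟨m, hm⟩ := l.exists_extend
  have hml (f : polyFunctions F3 σ (2 * d)) : m f = l f := LinearMap.congr_fun hm f
  have hne : ∀ p ∈ polyFunctions F3 σ d, m (p ^ 2 + 1) ≠ 0 := by
    intro p hp h0
    refine hψ ((hB ⟨p, hp⟩).dftCoeff_indicator_eq_zero hψ0 fun a => ?_)
    rw [hl, map_smul, ← hml, edgeDirection, h0, smul_zero, AddChar.map_zero_eq_one]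
  obtain ⟨y, c, hyc⟩ := exists_map_eq_mul_apply_of_map_sq_add_one_ne_zero hne
  refine ⟨y, c, ?_⟩
  ext f
  rw [hl, ← hml, hyc f f.2, dotChar_apply, single_dotProduct]

lemma exists_forall_eq_dotChar_single (hd : 1 ≤ d)
    (hB : ∀ p, IsLineTransversal F3 B (edgeDirection p)) :
    ∃ y, ∀ ψ : AddChar (polyFunctions F3 σ (2 * d)) ℂ,
      dftCoeff (Set.indicator B 1) ψ ≠ 0 → ∃ c, ψ = dotChar _ (Pi.single y c) := by
  set F : polyFunctions F3 σ (2 * d) → ℂ := Set.indicator B 1 with hF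
  by_cases htrivial : ∀ ψ, dftCoeff F ψ ≠ 0 → ψ = 0
  · exact ⟨0, fun ψ hψ => ⟨0, by simp [htrivial ψ hψ]⟩⟩
  push Not at htrivial
  obtain ⟨ψ, hψ, hψ0⟩ := htrivial
  obtain ⟨y, c, rfl⟩ := exists_eq_dotChar_single hB hψ
  refine ⟨y, fun φ hφ => ?_⟩
  by_contra hφy
  obtain ⟨z, e, rfl⟩ := exists_eq_dotChar_single hB hφ
  have hyz : y ≠ z := fun h => hφy ⟨e, by rw [h]⟩
  have hφ0 : dotChar (polyFunctions F3 σ (2 * d)) (Pi.single z e) ≠ 0 :=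
    fun h => hφy ⟨0, by simp [h]⟩
  have hc : c ≠ 0 := fun h => hψ0 (by simp [h])
  have he : e ≠ 0 := fun h => hφ0 (by simp [h])
  have hidem : F * F = F := by
    ext f
    by_cases hf : f ∈ B <;> simp [hF, hf]
  have hsum := dftCoeff_add_ne_zero_of_mul_self hidem (fun h => hφy ⟨c, h.symm⟩) hψ hφ
    fun χ hχ hχ' => by
      obtain ⟨u, a, rfl⟩ := exists_eq_dotChar_single hB hχ
      obtain ⟨v, b, hv⟩ := exists_eq_dotChar_single hB hχ'
      exact dotChar_single_eq_or_eq_of_add_eq hd hyz hc he (by rw [← hv, add_sub_cancel])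
  obtain ⟨u, a, hu⟩ := exists_eq_dotChar_single hB hsum
  have hu0 : dotChar (polyFunctions F3 σ (2 * d)) (Pi.single u a) + dotChar _ (Pi.single u 0) =
      dotChar _ (Pi.single y c) + dotChar _ (Pi.single z e) := by
    rw [Pi.single_zero, map_zero, add_zero, hu]
  rcases dotChar_single_eq_or_eq_of_add_eq hd hyz hc he hu0 with h | h
  · exact hφ0 (by simpa [h] using hu)
  · exact hψ0 (by simpa [h] using hu)

end Support

lemma exists_forall_apply_eq_imp_mem_iff [Finite σ]
    (hB : ∀ p, IsLineTransversal F3 B (edgeDirection p)) :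
    ∃ y, ∀ f g : polyFunctions F3 σ (2 * d), f.1 y = g.1 y → (f ∈ B ↔ g ∈ B) := by
  classical
  have := Fintype.ofFinite σ
  have := Fintype.ofFinite (polyFunctions F3 σ (2 * d))
  rcases Nat.eq_zero_or_pos d with rfl | hd
  · refine ⟨0, fun f g hfg => ?_⟩
    have hfg' : f = g := Subtype.ext <| funext fun x => by
      rw [apply_eq_apply_of_mem_polyFunctions_zero f.2 x 0, hfg,
        apply_eq_apply_of_mem_polyFunctions_zero g.2 x 0]
    rw [hfg']
  · obtain ⟨y, hy⟩ := exists_forall_eq_dotChar_single hd hB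
    refine ⟨y, fun f g hfg => ?_⟩
    set F : polyFunctions F3 σ (2 * d) → ℂ := Set.indicator B 1 with hF
    have hFfg : F f = F g := apply_eq_of_forall_dftCoeff_ne_zero fun ψ hψ => by
      obtain ⟨c, rfl⟩ := hy ψ hψ
      rw [dotChar_apply, dotChar_apply, single_dotProduct, single_dotProduct, hfg]
    rw [← Finset.mem_coe, ← Finset.mem_coe, ← Set.indicator_eq_one_iff_mem ℂ, ← hF, hFfg, hF,
      Set.indicator_eq_one_iff_mem]

lemma exists_forall_mem_iff_apply_eq [Finite σ]
    (hB : ∀ p, IsLineTransversal F3 B (edgeDirection p)) :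
    ∃ y b, ∀ f : polyFunctions F3 σ (2 * d), f ∈ B ↔ f.1 y = b := by
  obtain ⟨y, hy⟩ := exists_forall_apply_eq_imp_mem_iff hB
  obtain ⟨b, hb, hunique⟩ := hB 0 0
  refine ⟨y, b, fun f => ?_⟩
  rw [hy f (0 + f.1 y • edgeDirection 0) (by simp [edgeDirection_zero_apply])]
  exact ⟨hunique _, fun h => h ▸ hb⟩

theorem three_mul_card_eq_card_iff_exists_forall_mem_iff_apply_eq
    [Finite σ] [Fintype (polyFunctions F3 σ (2 * d))]
    (hB : ∀ (p : polyFunctions F3 σ d) f (a b : F3),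
      f + a • edgeDirection p ∈ B → f + b • edgeDirection p ∈ B → a = b) :
    3 * B.card = Fintype.card (polyFunctions F3 σ (2 * d)) ↔
      ∃ y b, ∀ f : polyFunctions F3 σ (2 * d), f ∈ B ↔ f.1 y = b := by
  classical
  have hcard (p : polyFunctions F3 σ d) := isLineTransversal_iff_card_mul_card_eq F3 (hB p)
  rw [ZMod.card] at hcard
  exact ⟨fun h => exists_forall_mem_iff_apply_eq fun p => (hcard p).2 h,
    fun ⟨_, _, h⟩ => (hcard 0).1 (isLineTransversal_of_forall_mem_iff_apply_eq h)⟩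

end Dictators

lemma eq_of_add_smul_edgeDirection_mem {r d : ℕ} {A : Finset (Fn r)}
    (hI : ∀ f ∈ A, ∀ p ∈ polyFinset r d, ∀ a : F3, (a = 1 ∨ a = 2) → f + shift p a ∉ A)
    (p : polyFunctions F3 (Fin r) d) (f : polyFunctions F3 (Fin r) (2 * d)) (a b : F3)
    (ha : (f + a • edgeDirection p).1 ∈ A) (hb : (f + b • edgeDirection p).1 ∈ A) : a = b := by
  by_contra hab
  have hp : p.1 ∈ polyFinset r d := by
    simp [polyFinset, ← coe_polyFunctions_eq_polySet]
  have hF3 : ∀ c : F3, c ≠ 0 → c = 1 ∨ c = 2 := by decide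
  have hshift : (f + b • edgeDirection p).1 = (f + a • edgeDirection p).1 + shift p (b - a) := by
    ext x
    simp only [edgeDirection, shift, Submodule.coe_add, Submodule.coe_smul, Pi.add_apply,
      Pi.smul_apply, Pi.pow_apply, Pi.one_apply, smul_eq_mul]
    ring
  exact hI _ ha p hp (b - a) (hF3 _ (sub_ne_zero.2 (Ne.symm hab))) (hshift ▸ hb)

theorem stmt2_general (r d : ℕ) (A : Finset (Fn r)) (hA : ↑A ⊆ PolySet r (2 * d))
    (hI : ∀ f ∈ A, ∀ p ∈ polyFinset r d, ∀ a : F3, (a = 1 ∨ a = 2) → f + shift p a ∉ A) :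
    3 * A.card = (polyFinset r (2 * d)).card ↔
      ∃ (x : Pt r) (b : F3), (A : Set (Fn r)) = {f | f ∈ PolySet r (2 * d) ∧ f x = b} := by
  classical
  rw [← coe_polyFunctions_eq_polySet] at hA ⊢
  have hcardA : (A.subtype (· ∈ polyFunctions F3 (Fin r) (2 * d))).card = A.card := by
    rw [Finset.card_subtype]
    exact congrArg Finset.card (Finset.filter_true_of_mem fun f hf => hA hf)
  have hcardP : Fintype.card (polyFunctions F3 (Fin r) (2 * d)) = (polyFinset r (2 * d)).card := by
    simp [polyFinset, ← coe_polyFunctions_eq_polySet]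
  rw [← hcardA, ← hcardP, three_mul_card_eq_card_iff_exists_forall_mem_iff_apply_eq]
  · refine exists₂_congr fun x b => ?_
    simp only [Subtype.forall, Finset.mem_subtype, Set.ext_iff, Set.mem_ofPred_eq,
      SetLike.mem_coe]
    refine forall_congr' fun f => ?_
    have hf : f ∈ A → f ∈ polyFunctions F3 (Fin r) (2 * d) := fun h => hA h
    tauto
  · intro p f a b ha hb
    exact eq_of_add_smul_edgeDirection_mem hI p f a b (by simpa using ha) (by simpa using hb)

/-- There is a universal `d₀` such that for all `d ≥ d₀` and all `r`, an independent set
`A` of the graph `𝒢` on `P_{r,2d}` has size exactly `|P_{r,2d}|/3` iff `A` is a dictator. -/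
theorem stmt2 :
    ∃ d₀ : ℕ, ∀ d : ℕ, d₀ ≤ d → ∀ r : ℕ,
      ∀ A : Finset (Fn r), ↑A ⊆ PolySet r (2 * d) →
        (∀ f ∈ A, ∀ p ∈ polyFinset r d, ∀ a : F3, (a = 1 ∨ a = 2) →
          f + shift p a ∉ A) →
        (3 * A.card = (polyFinset r (2 * d)).card ↔
          ∃ (x : Pt r) (b : F3),
            (A : Set (Fn r)) = {f | f ∈ PolySet r (2 * d) ∧ f x = b}) :=
  ⟨0, fun d _ r A hA hI => stmt2_general r d A hA hI⟩
end

section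
/- There exist universal constants d₀ ∈ ℕ, ε₀ > 0 and C > 0 such that for all d ≥ d₀, all r ∈ ℕ and all ε ∈ (0, ε₀): if A is an independent set of the graph 𝒢 on vertex set P_{r,2d} with |A| ≥ (1/3 − ε)·|P_{r,2d}|, then there exists a dictator A' = {f ∈ P_{r,2d} : f(x) = b} (for some x ∈ F₃^r, b ∈ F₃) with |A Δ A'| ≤ C·ε·|P_{r,2d}| (Δ denoting symmetric difference of sets). -/
open scoped BigOperators

/-!
Let `F` be the indicator of an independent set of density `μ ≥ 1/3 - ε`. The noise operator
`f ↦ f + p ^ 2 + 1`, with `p` uniform in `P_{r,d}`, is diagonalised by the characters `ψ ∘ φ` of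
`P_{r,2d}`, and the real part of its eigenvalue at `φ` is that of a quadratic Gauss sum for the form
`(p, q) ↦ φ (p * q)`. If this form has rank at least two, the Gauss sum has modulus at most `1/3`.
If it has rank at most one, then `φ` is a multiple of a point evaluation, because a product
`l p * l q` that depends only on `p * q` comes from evaluation at a point; in that case `p ^ 2 + 1`
never vanishes and the eigenvalue is `-1/2` (unless `φ = 0`). As in Hoffman's bound, independence
therefore forces the point evaluations to carry Fourier weight at least `8 * μ ^ 2 - 2 * μ`, which
is almost the whole variance of `F`.

Functions of low degree take jointly uniform values at any four points, so the classical argument of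
Friedgut, Kalai and Naor applies: a Boolean function with almost all of its weight on level one has
a large level-one coefficient, which the third moment detects, and hypercontractivity upgrades the
resulting dictator to one at distance `O(ε)`.
-/

section UniformCoordinates

open Finset

variable {V P α : Type*}

/-- `n`-wise independence and uniformity of the random variables `f ↦ ev f x`, `x ∈ P`, for `f`
uniform in `V`: each of them is uniform, and independent of any fewer than `n` others. -/
def WiseUniform [Fintype V] [Fintype α] (n : ℕ) (ev : V → P → α) : Prop :=
  ∀ (x : P) (Y : Finset P), #Y < n → x ∉ Y → ∀ φ : (P → α) → ℝ, DependsOn φ Y → ∀ ψ : α → ℝ,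
    𝔼 f, φ (ev f) * ψ (ev f x) = (𝔼 f, φ (ev f)) * 𝔼 b, ψ b

/-- Linear combinations of functions of at most `n` of the coordinates other than `x`. -/
def juntaSpan (α : Type*) (x : P) (n : ℕ) : Submodule ℝ ((P → α) → ℝ) :=
  Submodule.span ℝ {φ | ∃ Y : Finset P, #Y ≤ n ∧ x ∉ Y ∧ DependsOn φ Y}

/-- The function `u ↦ c + ∑_{y ∈ T} k_y(u_y)`, a constant plus functions of single coordinates. -/
def additiveFn (c : ℝ) (k : P → α → ℝ) (T : Finset P) (u : P → α) : ℝ :=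
  c + ∑ y ∈ T, k y (u y)

theorem additiveFn_empty (c : ℝ) (k : P → α → ℝ) (u : P → α) : additiveFn c k ∅ u = c := by
  simp only [additiveFn, sum_empty, add_zero]

theorem additiveFn_insert [DecidableEq P] {x : P} {T : Finset P} (hx : x ∉ T) (c : ℝ)
    (k : P → α → ℝ) (u : P → α) :
    additiveFn c k (insert x T) u = additiveFn c k T u + k x (u x) := by
  rw [additiveFn, additiveFn, sum_insert hx]
  ring

theorem const_mem_juntaSpan (x : P) (n : ℕ) (c : ℝ) : (fun _ ↦ c) ∈ juntaSpan α x n :=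
  Submodule.subset_span ⟨∅, by simp, by simp, fun _ _ _ ↦ rfl⟩

theorem mul_mem_juntaSpan {x : P} {m n : ℕ} {φ ψ : (P → α) → ℝ} (hφ : φ ∈ juntaSpan α x m)
    (hψ : ψ ∈ juntaSpan α x n) : φ * ψ ∈ juntaSpan α x (m + n) := by
  classical
  have h := Submodule.mul_mem_mul hφ hψ
  rw [juntaSpan, juntaSpan, Submodule.span_mul_span] at h
  refine Submodule.span_mono ?_ h
  rintro _ ⟨φ, ⟨S, hS, hxS, hφ⟩, ψ, ⟨T, hT, hxT, hψ⟩, rfl⟩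
  refine ⟨S ∪ T, (card_union_le S T).trans (add_le_add hS hT), by simp [hxS, hxT], ?_⟩
  intro u v huv
  have hu (y : P) (hy : y ∈ S ∪ T) : u y = v y := huv y (mod_cast hy)
  exact congrArg₂ (· * ·) (hφ fun y hy ↦ hu y (mem_union_left T hy))
    (hψ fun y hy ↦ hu y (mem_union_right S hy))

theorem pow_mem_juntaSpan {x : P} {φ : (P → α) → ℝ} (hφ : φ ∈ juntaSpan α x 1) (n : ℕ) :
    φ ^ n ∈ juntaSpan α x n := by
  induction n with
  | zero => exact const_mem_juntaSpan x 0 1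
  | succ n ih => exact pow_succ φ n ▸ mul_mem_juntaSpan ih hφ

theorem additiveFn_mem_juntaSpan {x : P} {T : Finset P} (hx : x ∉ T) (c : ℝ) (k : P → α → ℝ) :
    additiveFn c k T ∈ juntaSpan α x 1 := by
  have hsum : additiveFn c k T = (fun _ ↦ c) + ∑ y ∈ T, fun u ↦ k y (u y) := by
    ext u
    simp only [additiveFn, Pi.add_apply, Finset.sum_apply]
  rw [hsum]
  refine add_mem (const_mem_juntaSpan x 1 c) (sum_mem fun y hy ↦ Submodule.subset_span ?_)
  refine ⟨{y}, by simp, by simpa using fun h : x = y ↦ hx (h ▸ hy), fun u v huv ↦ ?_⟩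
  exact congrArg (k y) (huv y (by simp))

theorem expect_pow_four_le [Fintype α] [Nonempty α] (k : α → ℝ) :
    𝔼 b, k b ^ 4 ≤ Fintype.card α * (𝔼 b, k b ^ 2) ^ 2 := by
  have hsum : ∑ b, k b ^ 4 ≤ (∑ b, k b ^ 2) ^ 2 := by
    simpa only [← pow_mul] using sum_sq_le_sq_sum_of_nonneg fun b _ ↦ sq_nonneg (k b)
  rw [Fintype.expect_eq_sum_div_card, Fintype.expect_eq_sum_div_card]
  have hq : (0 : ℝ) < Fintype.card α := mod_cast Fintype.card_pos
  field_simp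
  exact hsum

namespace WiseUniform

variable [Fintype V] [Fintype α] {ev : V → P → α} {m n : ℕ}

theorem mono (h : WiseUniform n ev) (hmn : m ≤ n) : WiseUniform m ev :=
  fun x Y hY ↦ h x Y (hY.trans_le hmn)

theorem of_separating {K : Type*} [Field K] [Fintype K] [AddCommGroup V] [Module K V]
    (ev : V →ₗ[K] P → K)
    (hsep : ∀ (x : P) (Y : Finset P), #Y < n → x ∉ Y → ∃ p, ev p x = 1 ∧ ∀ y ∈ Y, ev p y = 0) :
    WiseUniform n ev := by
  intro x Y hY hx φ hφ ψ
  obtain ⟨p, hpx, hpY⟩ := hsep x Y hY hx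
  have htranslate (c : K) : 𝔼 f, φ (ev f) * ψ (ev f x) = 𝔼 f, φ (ev f) * ψ (ev f x + c) := by
    refine Fintype.expect_equiv (Equiv.addRight (-(c • p))) _ _ fun f ↦ ?_
    have hφf : φ (ev (f + -(c • p))) = φ (ev f) :=
      hφ fun y hy ↦ by simp [hpY y (mod_cast hy)]
    have hψf : ev (f + -(c • p)) x + c = ev f x := by simp [hpx]
    rw [Equiv.coe_addRight, hφf, hψf]
  calc 𝔼 f, φ (ev f) * ψ (ev f x) = 𝔼 c : K, 𝔼 f, φ (ev f) * ψ (ev f x + c) := by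
        simp_rw [← htranslate, Fintype.expect_const]
    _ = 𝔼 f, φ (ev f) * 𝔼 c, ψ (ev f x + c) := by
        rw [expect_comm]
        simp_rw [mul_expect]
    _ = (𝔼 f, φ (ev f)) * 𝔼 b, ψ b := by
        rw [expect_mul]
        refine expect_congr rfl fun f _ ↦ congrArg _ ?_
        exact Fintype.expect_equiv (Equiv.addLeft (ev f x)) _ _ fun _ ↦ rfl

theorem expect_mul_coord (h : WiseUniform n ev) (hmn : m < n) {x : P} {φ : (P → α) → ℝ}
    (hφ : φ ∈ juntaSpan α x m) (ψ : α → ℝ) :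
    𝔼 f, φ (ev f) * ψ (ev f x) = (𝔼 f, φ (ev f)) * 𝔼 b, ψ b := by
  induction hφ using Submodule.span_induction with
  | mem φ hφ =>
    obtain ⟨Y, hY, hx, hφ⟩ := hφ
    exact h x Y (hY.trans_lt hmn) hx φ hφ ψ
  | zero => simp only [Pi.zero_apply, zero_mul, expect_const_zero]
  | add φ φ' _ _ ih ih' => simp only [Pi.add_apply, add_mul, expect_add_distrib, ih, ih']
  | smul c φ _ ih => simp only [Pi.smul_apply, smul_eq_mul, mul_assoc, ← mul_expect, ih]

theorem expect_additiveFn_pow_mul (h : WiseUniform n ev) (hmn : m < n) {x : P} {T : Finset P}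
    (hx : x ∉ T) (c : ℝ) (k : P → α → ℝ) (ψ : α → ℝ) :
    𝔼 f, additiveFn c k T (ev f) ^ m * ψ (ev f x)
      = (𝔼 f, additiveFn c k T (ev f) ^ m) * 𝔼 b, ψ b :=
  h.expect_mul_coord hmn (pow_mem_juntaSpan (additiveFn_mem_juntaSpan hx c k) m) ψ

variable [Nonempty V]

theorem expect_coord (h : WiseUniform 1 ev) (x : P) (ψ : α → ℝ) :
    𝔼 f, ψ (ev f x) = 𝔼 b, ψ b := by
  simpa using h.expect_mul_coord one_pos (const_mem_juntaSpan x 0 1) ψ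

variable {k : P → α → ℝ}

theorem expect_additiveFn (h : WiseUniform 1 ev) (hk : ∀ x, 𝔼 b, k x b = 0) (c : ℝ)
    (T : Finset P) : 𝔼 f, additiveFn c k T (ev f) = c := by
  simp only [additiveFn, expect_add_distrib, expect_sum_comm, h.expect_coord, hk, sum_const_zero,
    Fintype.expect_const, add_zero]

theorem expect_additiveFn_sq (h : WiseUniform 2 ev) (hk : ∀ x, 𝔼 b, k x b = 0) (c : ℝ)
    (T : Finset P) :
    𝔼 f, additiveFn c k T (ev f) ^ 2 = c ^ 2 + ∑ x ∈ T, 𝔼 b, k x b ^ 2 := by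
  classical
  induction T using Finset.induction_on with
  | empty => simp only [additiveFn_empty, Fintype.expect_const, sum_empty, add_zero]
  | insert x T hx ih =>
    have hcross : 𝔼 f, additiveFn c k T (ev f) * k x (ev f x) = 0 := by
      simpa only [pow_one, hk, mul_zero]
        using h.expect_additiveFn_pow_mul one_lt_two hx c k (k x)
    have hsq := (h.mono one_le_two).expect_coord x fun b ↦ k x b ^ 2
    simp only [additiveFn_insert hx, add_sq, expect_add_distrib, mul_assoc, ← mul_expect, ih,
      hcross, hsq, sum_insert hx]
    ring

theorem expect_additiveFn_cube (h : WiseUniform 3 ev) (hk : ∀ x, 𝔼 b, k x b = 0) (c : ℝ)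
    (T : Finset P) :
    𝔼 f, additiveFn c k T (ev f) ^ 3
      = c ^ 3 + 3 * c * ∑ x ∈ T, 𝔼 b, k x b ^ 2 + ∑ x ∈ T, 𝔼 b, k x b ^ 3 := by
  classical
  induction T using Finset.induction_on with
  | empty => simp only [additiveFn_empty, Fintype.expect_const, sum_empty, mul_zero, add_zero]
  | insert x T hx ih =>
    have hcross₂₁ : 𝔼 f, additiveFn c k T (ev f) ^ 2 * k x (ev f x) = 0 := by
      rw [h.expect_additiveFn_pow_mul (by norm_num) hx, hk, mul_zero]
    have hcross₁₂ :
        𝔼 f, additiveFn c k T (ev f) * k x (ev f x) ^ 2 = c * 𝔼 b, k x b ^ 2 := by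
      have := h.expect_additiveFn_pow_mul (m := 1) (by norm_num) hx c k fun b ↦ k x b ^ 2
      simpa only [pow_one, (h.mono (by norm_num)).expect_additiveFn hk] using this
    have hcube := (h.mono (by norm_num)).expect_coord x fun b ↦ k x b ^ 3
    have hexpand (s t : ℝ) :
        (s + t) ^ 3 = s ^ 3 + 3 * (s ^ 2 * t) + 3 * (s * t ^ 2) + t ^ 3 := by ring
    simp only [additiveFn_insert hx, hexpand, expect_add_distrib, ← mul_expect, ih, hcross₂₁,
      hcross₁₂, hcube, sum_insert hx]
    ring

theorem expect_additiveFn_pow_four_le (h : WiseUniform 4 ev) [Nontrivial α]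
    (hk : ∀ x, 𝔼 b, k x b = 0) (c : ℝ) (T : Finset P) :
    𝔼 f, additiveFn c k T (ev f) ^ 4
      ≤ 3 * Fintype.card α * (𝔼 f, additiveFn c k T (ev f) ^ 2) ^ 2 := by
  classical
  have hq : (2 : ℝ) ≤ Fintype.card α := mod_cast Fintype.one_lt_card (α := α)
  have hsq := (h.mono (by norm_num)).expect_additiveFn_sq hk c
  induction T using Finset.induction_on with
  | empty =>
    simp only [additiveFn_empty, Fintype.expect_const]
    nlinarith [sq_nonneg (c ^ 2)]
  | insert x T hx ih =>
    have hcross₃₁ : 𝔼 f, additiveFn c k T (ev f) ^ 3 * k x (ev f x) = 0 := by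
      rw [h.expect_additiveFn_pow_mul (by norm_num) hx, hk, mul_zero]
    have hcross₂₂ := h.expect_additiveFn_pow_mul (m := 2) (by norm_num) hx c k fun b ↦ k x b ^ 2
    have hfour := (h.mono (by norm_num)).expect_coord x fun b ↦ k x b ^ 4
    have hk_four := expect_pow_four_le (k x)
    have hexpand (s t : ℝ) :
        (s + t) ^ 4 ≤ s ^ 4 + 4 * (s ^ 3 * t) + 8 * (s ^ 2 * t ^ 2) + 3 * t ^ 4 := by
      nlinarith [mul_nonneg (sq_nonneg t) (sq_nonneg (s - t))]
    have hsum : 𝔼 f, additiveFn c k (insert x T) (ev f) ^ 2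
        = 𝔼 f, additiveFn c k T (ev f) ^ 2 + 𝔼 b, k x b ^ 2 := by
      rw [hsq, hsq, sum_insert hx]
      ring
    have hold : 0 ≤ 𝔼 f, additiveFn c k T (ev f) ^ 2 := expect_nonneg fun _ _ ↦ sq_nonneg _
    have hnew : 0 ≤ 𝔼 b, k x b ^ 2 := expect_nonneg fun _ _ ↦ sq_nonneg _
    calc 𝔼 f, additiveFn c k (insert x T) (ev f) ^ 4
        ≤ 𝔼 f, (additiveFn c k T (ev f) ^ 4 + 4 * (additiveFn c k T (ev f) ^ 3 * k x (ev f x))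
            + 8 * (additiveFn c k T (ev f) ^ 2 * k x (ev f x) ^ 2) + 3 * k x (ev f x) ^ 4) :=
          expect_le_expect fun f _ ↦ additiveFn_insert hx c k (ev f) ▸ hexpand _ _
      _ = 𝔼 f, additiveFn c k T (ev f) ^ 4
            + 8 * ((𝔼 f, additiveFn c k T (ev f) ^ 2) * 𝔼 b, k x b ^ 2)
            + 3 * 𝔼 b, k x b ^ 4 := by
          simp only [expect_add_distrib, ← mul_expect, hcross₃₁, hcross₂₂, hfour]
          ring
      _ ≤ _ := by
          rw [hsum]
          nlinarith [mul_nonneg hold hnew]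

end WiseUniform

end UniformCoordinates

section LinearPart

open Finset

variable {V P α : Type*} [Fintype V] [Fintype α] [DecidableEq α]

/-- The conditional expectation of `F f` given `ev f x = b`, when `ev f x` is uniform. -/
noncomputable def condMean (ev : V → P → α) (F : V → ℝ) (x : P) (b : α) : ℝ :=
  Fintype.card α * 𝔼 f, if ev f x = b then F f else 0

/-- The function of the coordinate `x` in the Efron–Stein decomposition of `F`. -/
noncomputable def linearCoeff (ev : V → P → α) (F : V → ℝ) (x : P) (b : α) : ℝ :=
  condMean ev F x b - 𝔼 f, F f

/-- The part of `F` of degree at most one in the Efron–Stein decomposition; for pairwise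
independent coordinates it is the orthogonal projection of `F` to the additive functions. -/
noncomputable def linearPart [Fintype P] (ev : V → P → α) (F : V → ℝ) (f : V) : ℝ :=
  additiveFn (𝔼 g, F g) (linearCoeff ev F) univ (ev f)

/-- The squared norm of the part of `F` of degree exactly one. -/
noncomputable def levelOneWeight [Fintype P] (ev : V → P → α) (F : V → ℝ) : ℝ :=
  ∑ x, 𝔼 b, linearCoeff ev F x b ^ 2

variable (ev : V → P → α) (F : V → ℝ)

theorem expect_mul_comp_ev_rclike {𝕜 : Type*} [RCLike 𝕜] (x : P) (k : α → 𝕜) :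
    𝔼 f, (F f : 𝕜) * k (ev f x) = 𝔼 b, (condMean ev F x b : 𝕜) * k b := by
  have hsplit (f : V) : (F f : 𝕜) * k (ev f x)
      = 𝔼 b, (Fintype.card α : 𝕜) * ((if ev f x = b then F f else 0 : ℝ) : 𝕜) * k b := by
    have : Nonempty α := ⟨ev f x⟩
    rw [← expect_boole_mul (fun b ↦ (F f : 𝕜) * k b) (ev f x)]
    refine expect_congr rfl fun b _ ↦ ?_
    split_ifs <;> simp [mul_assoc]
  simp only [hsplit, condMean, RCLike.ofReal_mul, RCLike.ofReal_natCast, RCLike.ofReal_expect,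
    mul_expect, expect_mul]
  exact expect_comm ..

theorem expect_mul_comp_ev (x : P) (k : α → ℝ) :
    𝔼 f, F f * k (ev f x) = 𝔼 b, condMean ev F x b * k b :=
  expect_mul_comp_ev_rclike ev F x k

theorem expect_linearCoeff [Nonempty α] (x : P) : 𝔼 b, linearCoeff ev F x b = 0 := by
  have h := expect_mul_comp_ev ev F x 1
  simp only [Pi.one_apply, mul_one] at h
  simp only [linearCoeff, expect_sub_distrib, Fintype.expect_const, h, sub_self]

variable {ev F} [Nonempty V]

omit [DecidableEq α] in
theorem WiseUniform.expect_additiveFn_mul_coord (h : WiseUniform 2 ev) {k : P → α → ℝ}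
    (hk : ∀ x, 𝔼 b, k x b = 0) (c : ℝ) {T : Finset P} {x : P} (hx : x ∈ T) (ψ : α → ℝ) :
    𝔼 f, additiveFn c k T (ev f) * ψ (ev f x) = 𝔼 b, (c + k x b) * ψ b := by
  classical
  obtain ⟨S, hxS, rfl⟩ : ∃ S, x ∉ S ∧ insert x S = T :=
    ⟨T.erase x, notMem_erase x T, insert_erase hx⟩
  have hindep := h.expect_additiveFn_pow_mul (m := 1) one_lt_two hxS c k ψ
  simp only [pow_one, (h.mono one_le_two).expect_additiveFn hk] at hindep
  simp only [additiveFn_insert hxS, add_mul, expect_add_distrib, hindep, mul_expect,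
    (h.mono one_le_two).expect_coord x fun b ↦ k x b * ψ b]

variable [Nonempty α] [Fintype P]

theorem WiseUniform.expect_sub_linearPart_mul (h : WiseUniform 2 ev) (F : V → ℝ) (c : ℝ)
    (k : P → α → ℝ) :
    𝔼 f, (F f - linearPart ev F f) * additiveFn c k univ (ev f) = 0 := by
  have hconst : 𝔼 f, (F f - linearPart ev F f) = 0 := by
    simp only [linearPart, expect_sub_distrib,
      (h.mono one_le_two).expect_additiveFn (expect_linearCoeff ev F), sub_self]
  have hcoord (x : P) : 𝔼 f, (F f - linearPart ev F f) * k x (ev f x) = 0 := by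
    simp only [linearPart, sub_mul, expect_sub_distrib, expect_mul_comp_ev ev F,
      h.expect_additiveFn_mul_coord (expect_linearCoeff ev F) _ (mem_univ x), linearCoeff,
      add_sub_cancel, sub_self]
  simp only [additiveFn, mul_add, mul_sum, expect_add_distrib, expect_sum_comm, hcoord,
    sum_const_zero, ← expect_mul, hconst, zero_mul, add_zero]

theorem WiseUniform.expect_linearPart_sq (h : WiseUniform 2 ev) (F : V → ℝ) :
    𝔼 f, linearPart ev F f ^ 2 = (𝔼 f, F f) ^ 2 + levelOneWeight ev F :=
  h.expect_additiveFn_sq (expect_linearCoeff ev F) _ univ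

theorem WiseUniform.expect_mul_linearPart (h : WiseUniform 2 ev) (F : V → ℝ) :
    𝔼 f, F f * linearPart ev F f = 𝔼 f, linearPart ev F f ^ 2 := by
  have horth : 𝔼 f, (F f - linearPart ev F f) * linearPart ev F f = 0 :=
    h.expect_sub_linearPart_mul F (𝔼 f, F f) (linearCoeff ev F)
  simp only [sub_mul, expect_sub_distrib, ← sq] at horth
  exact sub_eq_zero.mp horth

theorem WiseUniform.expect_sub_linearPart_sq (h : WiseUniform 2 ev) (F : V → ℝ) :
    𝔼 f, (F f - linearPart ev F f) ^ 2 = 𝔼 f, F f ^ 2 - (𝔼 f, F f) ^ 2 - levelOneWeight ev F := by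
  have hcross := h.expect_mul_linearPart F
  have hsq := h.expect_linearPart_sq F
  simp only [sub_sq, expect_add_distrib, expect_sub_distrib, mul_assoc, ← mul_expect, hcross]
  linarith

theorem WiseUniform.expect_sub_linearPart_sq_le (h : WiseUniform 2 ev) (F : V → ℝ) (c : ℝ)
    (k : P → α → ℝ) :
    𝔼 f, (F f - linearPart ev F f) ^ 2 ≤ 𝔼 f, (F f - additiveFn c k univ (ev f)) ^ 2 := by
  set L := linearPart ev F
  have horth : 𝔼 f, (F f - L f) * (L f - additiveFn c k univ (ev f)) = 0 := by
    have hL : 𝔼 f, (F f - L f) * L f = 0 :=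
      h.expect_sub_linearPart_mul F (𝔼 f, F f) (linearCoeff ev F)
    simp only [mul_sub, expect_sub_distrib, hL, L, h.expect_sub_linearPart_mul, sub_zero]
  calc 𝔼 f, (F f - L f) ^ 2
      ≤ 𝔼 f, (F f - L f) ^ 2 + 𝔼 f, (L f - additiveFn c k univ (ev f)) ^ 2 :=
        le_add_of_nonneg_right (expect_nonneg fun _ _ ↦ sq_nonneg _)
    _ = 𝔼 f, (F f - L f) ^ 2 + 2 * 𝔼 f, (F f - L f) * (L f - additiveFn c k univ (ev f))
          + 𝔼 f, (L f - additiveFn c k univ (ev f)) ^ 2 := by rw [horth, mul_zero, add_zero]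
    _ = 𝔼 f, (F f - additiveFn c k univ (ev f)) ^ 2 := by
        rw [mul_expect, ← expect_add_distrib, ← expect_add_distrib]
        exact expect_congr rfl fun f _ ↦ by ring

end LinearPart

section FriedgutKalaiNaor

open Finset

variable {V P α : Type*} [Fintype V] [Fintype α]

theorem card_mul_sq_le_of_sum_eq_zero {k : α → ℝ} (hk : ∑ b, k b = 0) (b₀ : α) :
    Fintype.card α * k b₀ ^ 2 ≤ (Fintype.card α - 1) * ∑ b, k b ^ 2 := by
  classical
  have : Nonempty α := ⟨b₀⟩
  have hcs := sq_sum_le_card_mul_sum_sq (s := univ.erase b₀) (f := k)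
  rw [card_erase_of_mem (mem_univ b₀), card_univ, Nat.cast_pred Fintype.card_pos,
    sum_erase_eq_sub (mem_univ b₀), sum_erase_eq_sub (mem_univ b₀), hk] at hcs
  linarith

theorem expect_cube_le [Nontrivial α] {k : α → ℝ} (hk : 𝔼 b, k b = 0) {M : ℝ}
    (hM : ∀ b, k b ≤ M) :
    𝔼 b, k b ^ 3 ≤ M * ((Fintype.card α - 2) / (Fintype.card α - 1)) * 𝔼 b, k b ^ 2 := by
  have hq : (2 : ℝ) ≤ Fintype.card α := mod_cast Fintype.one_lt_card (α := α)
  set q : ℝ := (Fintype.card α : ℝ) with hq_def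
  obtain ⟨b₀, hmax⟩ := Finite.exists_max k
  obtain ⟨t, ht⟩ : ∃ t, (q - 1) * t = k b₀ := ⟨k b₀ / (q - 1), mul_div_cancel₀ _ (by linarith)⟩
  have hsum : ∑ b, k b = 0 := by rw [← Fintype.card_mul_expect, hk, mul_zero]
  have ht₀ : 0 ≤ t := by
    have hmax₀ := expect_le_expect fun b (_ : b ∈ univ) ↦ hmax b
    rw [hk, Fintype.expect_const, ← ht] at hmax₀
    exact nonneg_of_mul_nonneg_right hmax₀ (by linarith)
  have hsq : q * (q - 1) * t ^ 2 ≤ ∑ b, k b ^ 2 := by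
    have hb₀ := card_mul_sq_le_of_sum_eq_zero hsum b₀
    rw [← ht, ← hq_def] at hb₀
    exact le_of_mul_le_mul_left (by linarith) (by linarith : 0 < q - 1)
  -- Equality case: `k` proportional to the centred indicator of `b₀`.
  have hcube : ∑ b, k b ^ 3 ≤ (q - 3) * t * ∑ b, k b ^ 2 + q * (q - 1) * t ^ 3 := by
    have hnonneg : 0 ≤ ∑ b, (k b₀ - k b) * (k b + t) ^ 2 :=
      sum_nonneg fun b _ ↦ mul_nonneg (sub_nonneg.mpr (hmax b)) (sq_nonneg _)
    have hexpand (s : ℝ) : (k b₀ - s) * (s + t) ^ 2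
        = (q - 3) * t * s ^ 2 - s ^ 3 + (2 * q - 3) * t ^ 2 * s + (q - 1) * t ^ 3 := by
      rw [← ht]
      ring
    simp only [hexpand, sum_add_distrib, sum_sub_distrib, ← mul_sum, hsum, sum_const, card_univ,
      nsmul_eq_mul, ← hq_def] at hnonneg
    linarith
  have hbound : ∑ b, k b ^ 3 ≤ M * ((q - 2) / (q - 1)) * ∑ b, k b ^ 2 :=
    calc ∑ b, k b ^ 3 ≤ (q - 2) * t * ∑ b, k b ^ 2 := by
          linarith [mul_le_mul_of_nonneg_left hsq ht₀]
      _ = k b₀ * ((q - 2) / (q - 1)) * ∑ b, k b ^ 2 := by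
          have : q - 1 ≠ 0 := by linarith
          rw [← ht]
          field_simp
      _ ≤ M * ((q - 2) / (q - 1)) * ∑ b, k b ^ 2 := by
          have : 0 ≤ (q - 2) / (q - 1) := div_nonneg (by linarith) (by linarith)
          gcongr
          exact hM b₀
  rw [Fintype.expect_eq_sum_div_card, Fintype.expect_eq_sum_div_card, ← hq_def, ← mul_div_assoc]
  gcongr

theorem sq_expect_cube_sub_le {G U : V → ℝ} (hU : ∀ f, U f ^ 2 ≤ 1) [Nonempty V] :
    (𝔼 f, G f ^ 3 - 𝔼 f, U f ^ 3) ^ 2 ≤ 9 / 2 * (𝔼 f, (G f - U f) ^ 2) * (𝔼 f, G f ^ 4 + 1) := by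
  have hquad (f : V) : (G f ^ 2 + G f * U f + U f ^ 2) ^ 2 ≤ 9 / 2 * (G f ^ 4 + 1) := by
    have hnonneg : 0 ≤ G f ^ 2 + G f * U f + U f ^ 2 := by
      nlinarith [sq_nonneg (G f + U f), sq_nonneg (G f), sq_nonneg (U f)]
    have hle : G f ^ 2 + G f * U f + U f ^ 2 ≤ 3 / 2 * (G f ^ 2 + 1) := by
      nlinarith [sq_nonneg (G f - U f), hU f]
    calc (G f ^ 2 + G f * U f + U f ^ 2) ^ 2 ≤ (3 / 2 * (G f ^ 2 + 1)) ^ 2 := by gcongr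
      _ ≤ 9 / 2 * (G f ^ 4 + 1) := by nlinarith [sq_nonneg (G f ^ 2 - 1)]
  calc (𝔼 f, G f ^ 3 - 𝔼 f, U f ^ 3) ^ 2
      = (𝔼 f, (G f - U f) * (G f ^ 2 + G f * U f + U f ^ 2)) ^ 2 := by
        rw [← expect_sub_distrib]
        congr! 2 with f
        ring
    _ ≤ (𝔼 f, (G f - U f) ^ 2) * 𝔼 f, (G f ^ 2 + G f * U f + U f ^ 2) ^ 2 :=
        expect_mul_sq_le_sq_mul_sq _ _ _
    _ ≤ (𝔼 f, (G f - U f) ^ 2) * 𝔼 f, 9 / 2 * (G f ^ 4 + 1) := by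
        gcongr with f
        exact hquad f
    _ = 9 / 2 * (𝔼 f, (G f - U f) ^ 2) * (𝔼 f, G f ^ 4 + 1) := by
        rw [← mul_expect, expect_add_distrib, Fintype.expect_const]
        ring

theorem expect_mul_pow_four_le {u : V → ℝ} (hu : ∀ f, u f ^ 3 = u f) (L : V → ℝ) :
    (𝔼 f, u f * L f) ^ 4 ≤ (𝔼 f, u f ^ 2) ^ 3 * 𝔼 f, L f ^ 4 := by
  have hu₄ (f : V) : (u f ^ 2) ^ 2 = u f ^ 2 := by linear_combination u f * hu f
  have hfirst : (𝔼 f, u f * L f) ^ 2 ≤ (𝔼 f, u f ^ 2) * 𝔼 f, u f ^ 2 * L f ^ 2 := by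
    calc (𝔼 f, u f * L f) ^ 2 = (𝔼 f, u f ^ 2 * (u f * L f)) ^ 2 := by
          congr! 2 with f
          linear_combination (-L f) * hu f
      _ ≤ (𝔼 f, (u f ^ 2) ^ 2) * 𝔼 f, (u f * L f) ^ 2 := expect_mul_sq_le_sq_mul_sq _ _ _
      _ = _ := by simp only [hu₄, mul_pow]
  have hsecond : (𝔼 f, u f ^ 2 * L f ^ 2) ^ 2 ≤ (𝔼 f, u f ^ 2) * 𝔼 f, L f ^ 4 := by
    have := expect_mul_sq_le_sq_mul_sq univ (fun f ↦ u f ^ 2) fun f ↦ L f ^ 2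
    simpa only [hu₄, ← pow_mul] using this
  calc (𝔼 f, u f * L f) ^ 4 = ((𝔼 f, u f * L f) ^ 2) ^ 2 := by ring
    _ ≤ ((𝔼 f, u f ^ 2) * 𝔼 f, u f ^ 2 * L f ^ 2) ^ 2 := by gcongr
    _ = (𝔼 f, u f ^ 2) ^ 2 * (𝔼 f, u f ^ 2 * L f ^ 2) ^ 2 := mul_pow ..
    _ ≤ (𝔼 f, u f ^ 2) ^ 2 * ((𝔼 f, u f ^ 2) * 𝔼 f, L f ^ 4) := by gcongr
    _ = (𝔼 f, u f ^ 2) ^ 3 * 𝔼 f, L f ^ 4 := by ring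

variable [Fintype P] [DecidableEq α] [Nontrivial α] [Nonempty V] {ev : V → P → α} {F u : V → ℝ}

theorem WiseUniform.sq_expect_linearPart_sq_le (h : WiseUniform 4 ev) (hu : ∀ f, u f ^ 3 = u f) :
    (𝔼 f, linearPart ev u f ^ 2) ^ 2 ≤ 3 * Fintype.card α * (𝔼 f, u f ^ 2) ^ 3 := by
  set a := 𝔼 f, linearPart ev u f ^ 2
  have hfour : 𝔼 f, linearPart ev u f ^ 4 ≤ 3 * Fintype.card α * a ^ 2 :=
    h.expect_additiveFn_pow_four_le (expect_linearCoeff ev u) _ univ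
  have : 0 ≤ 𝔼 f, u f ^ 2 := expect_nonneg fun _ _ ↦ sq_nonneg _
  have ha : a ^ 2 * a ^ 2 ≤ 3 * Fintype.card α * (𝔼 f, u f ^ 2) ^ 3 * a ^ 2 :=
    calc a ^ 2 * a ^ 2 = (𝔼 f, u f * linearPart ev u f) ^ 4 := by
          rw [(h.mono (by norm_num)).expect_mul_linearPart]
          ring
      _ ≤ (𝔼 f, u f ^ 2) ^ 3 * 𝔼 f, linearPart ev u f ^ 4 := expect_mul_pow_four_le hu _
      _ ≤ (𝔼 f, u f ^ 2) ^ 3 * (3 * Fintype.card α * a ^ 2) := by gcongr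
      _ = _ := by ring
  rcases (sq_nonneg a).eq_or_lt with ha₀ | ha₀
  · rw [← ha₀]
    positivity
  · exact le_of_mul_le_mul_right ha ha₀

theorem WiseUniform.expect_sq_le_of_small (h : WiseUniform 4 ev) (hu : ∀ f, u f ^ 3 = u f)
    (hsmall : (12 * Fintype.card α : ℝ) * 𝔼 f, u f ^ 2 ≤ 1) :
    𝔼 f, u f ^ 2 ≤ 2 * 𝔼 f, (u f - linearPart ev u f) ^ 2 := by
  have hlevel := h.sq_expect_linearPart_sq_le hu
  have hproj := (h.mono (by norm_num)).expect_sub_linearPart_sq u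
  have hL := (h.mono (by norm_num)).expect_linearPart_sq u
  set θ := 𝔼 f, u f ^ 2
  have : 0 ≤ θ := expect_nonneg fun _ _ ↦ sq_nonneg _
  have hhalf : 𝔼 f, linearPart ev u f ^ 2 ≤ θ / 2 := by
    refine le_of_pow_le_pow_left₀ two_ne_zero (by positivity) ?_
    nlinarith [mul_le_mul_of_nonneg_right hsmall (sq_nonneg θ)]
  linarith

omit [Fintype P] in
theorem WiseUniform.expect_sub_ite_sq (h : WiseUniform 1 ev) (hF : ∀ f, F f = 0 ∨ F f = 1)
    (x : P) (b : α) :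
    𝔼 f, (F f - if ev f x = b then 1 else 0) ^ 2
      = 𝔼 f, F f + 1 / Fintype.card α - 2 / Fintype.card α * condMean ev F x b := by
  have hpointwise (f : V) : (F f - if ev f x = b then 1 else 0) ^ 2
      = F f + (if ev f x = b then 1 else 0) - 2 * if ev f x = b then F f else 0 := by
    rcases hF f with hf | hf <;> split_ifs <;> rw [hf] <;> norm_num
  have hcoord := h.expect_coord x fun a ↦ if a = b then (1 : ℝ) else 0
  simp only [hpointwise, expect_sub_distrib, expect_add_distrib, hcoord, condMean, ← mul_expect]
  have hq : (Fintype.card α : ℝ) ≠ 0 := mod_cast Fintype.card_ne_zero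
  have hite : 𝔼 a, (if a = b then (1 : ℝ) else 0) = 1 / Fintype.card α := by
    rw [Fintype.expect_eq_sum_div_card, sum_ite_eq', if_pos (mem_univ b)]
  rw [hite]
  field_simp

theorem WiseUniform.expect_sub_ite_sq_le (h : WiseUniform 4 ev) (hF : ∀ f, F f = 0 ∨ F f = 1)
    {x : P} {b : α}
    (hsmall : (12 * Fintype.card α : ℝ) * 𝔼 f, (F f - if ev f x = b then 1 else 0) ^ 2 ≤ 1) :
    𝔼 f, (F f - if ev f x = b then 1 else 0) ^ 2
      ≤ 2 * 𝔼 f, (F f - linearPart ev F f) ^ 2 := by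
  classical
  set u : V → ℝ := fun f ↦ F f - if ev f x = b then 1 else 0
  have hu (f : V) : u f ^ 3 = u f := by
    rcases hF f with hf | hf <;> simp only [u, hf] <;> split_ifs <;> norm_num
  refine (h.expect_sq_le_of_small hu hsmall).trans ?_
  let k (y : P) (a : α) : ℝ := linearCoeff ev F y a - if y = x ∧ a = b then 1 else 0
  have hk (f : V) : u f - additiveFn (𝔼 g, F g) k univ (ev f) = F f - linearPart ev F f := by
    simp only [u, k, linearPart, additiveFn, sum_sub_distrib, ite_and, sum_ite_eq', mem_univ,
      if_true]
    ring
  have := (h.mono (by norm_num)).expect_sub_linearPart_sq_le u (𝔼 g, F g) k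
  simp only [hk] at this
  gcongr

omit [Fintype P] [DecidableEq α] in
theorem WiseUniform.expect_additiveFn_cube_le (h : WiseUniform 3 ev) {k : P → α → ℝ}
    (hk : ∀ x, 𝔼 b, k x b = 0) {M : ℝ} (hM : ∀ x b, k x b ≤ M) (T : Finset P) :
    𝔼 f, additiveFn 0 k T (ev f) ^ 3 ≤
      M * ((Fintype.card α - 2) / (Fintype.card α - 1)) * 𝔼 f, additiveFn 0 k T (ev f) ^ 2 := by
  rw [h.expect_additiveFn_cube hk, (h.mono (by norm_num)).expect_additiveFn_sq hk]
  simp only [mul_zero, zero_mul, zero_pow, ne_eq, OfNat.ofNat_ne_zero, not_false_eq_true,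
    sum_const_zero, zero_add, mul_sum]
  exact sum_le_sum fun x _ ↦ expect_cube_le (hk x) (hM x)

theorem expect_sub_expect_cube (hF : ∀ f, F f = 0 ∨ F f = 1) :
    𝔼 f, (F f - 𝔼 g, F g) ^ 3 = (𝔼 g, F g) * (1 - 𝔼 g, F g) * (1 - 2 * 𝔼 g, F g) := by
  set μ := 𝔼 g, F g with hμ
  have hpointwise (f : V) : (F f - μ) ^ 3 = (1 - 3 * μ + 3 * μ ^ 2) * F f - μ ^ 3 := by
    rcases hF f with hf | hf <;> rw [hf] <;> ring
  simp only [hpointwise, expect_sub_distrib, Fintype.expect_const, ← mul_expect, ← hμ]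
  ring

omit [Nonempty V] in
theorem expect_sq_eq_expect (hF : ∀ f, F f = 0 ∨ F f = 1) : 𝔼 f, F f ^ 2 = 𝔼 f, F f :=
  expect_congr rfl fun f _ ↦ by rcases hF f with hf | hf <;> rw [hf] <;> norm_num

-- For a dictator over three letters the largest coefficient is `2/3`.
theorem WiseUniform.exists_large_linearCoeff (h : WiseUniform 4 ev) (hα : Fintype.card α = 3)
    (hF : ∀ f, F f = 0 ∨ F f = 1) (hμ : 1 / 4 ≤ 𝔼 f, F f) (hμ' : 𝔼 f, F f ≤ 1 / 3)
    (hδ : 𝔼 f, (F f - linearPart ev F f) ^ 2 ≤ 3 / 10 ^ 7) :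
    ∃ x b, 19 / 30 ≤ linearCoeff ev F x b := by
  by_contra! hsmall
  have hmean := expect_linearCoeff ev F
  have hproj := (h.mono (by norm_num)).expect_sub_linearPart_sq F
  have hcube := expect_sub_expect_cube hF
  rw [expect_sq_eq_expect hF] at hproj
  set μ := 𝔼 f, F f
  set W := levelOneWeight ev F with hW
  set δ := 𝔼 f, (F f - linearPart ev F f) ^ 2
  let G (f : V) : ℝ := additiveFn 0 (linearCoeff ev F) univ (ev f)
  have hδ₀ : 0 ≤ δ := expect_nonneg fun _ _ ↦ sq_nonneg _
  have hG₂ : 𝔼 f, G f ^ 2 = W := by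
    rw [(h.mono (by norm_num)).expect_additiveFn_sq hmean, zero_pow two_ne_zero, zero_add, hW,
      levelOneWeight]
  have hG₃ : 𝔼 f, G f ^ 3 ≤ 19 / 60 * W := by
    have := (h.mono (by norm_num)).expect_additiveFn_cube_le hmean (fun x b ↦ (hsmall x b).le) univ
    rw [hG₂, hα, Nat.cast_ofNat] at this
    linarith
  have hG₄ : 𝔼 f, G f ^ 4 ≤ 9 * W ^ 2 := by
    have := h.expect_additiveFn_pow_four_le hmean 0 univ
    rw [hG₂, hα, Nat.cast_ofNat] at this
    linarith
  have hclose : (𝔼 f, G f ^ 3 - 𝔼 f, (F f - μ) ^ 3) ^ 2 ≤ 9 / 2 * δ * (𝔼 f, G f ^ 4 + 1) := by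
    have hdiff (f : V) : (F f - linearPart ev F f) ^ 2 = (G f - (F f - μ)) ^ 2 := by
      simp only [G, linearPart, additiveFn, μ]
      ring
    simp only [δ, hdiff]
    refine sq_expect_cube_sub_le fun f ↦ ?_
    rcases hF f with hf | hf <;> rw [hf] <;> nlinarith
  have hgap : 1 / 320 ≤ 𝔼 f, (F f - μ) ^ 3 - 𝔼 f, G f ^ 3 := by
    have hvar : 3 / 16 ≤ μ * (1 - μ) := by nlinarith
    have hskew : μ * (1 - μ) * (1 / 3) ≤ μ * (1 - μ) * (1 - 2 * μ) := by
      gcongr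
      linarith
    linarith
  nlinarith [mul_self_le_mul_self (by norm_num) hgap]

theorem WiseUniform.exists_ite_close (h : WiseUniform 4 ev) (hα : Fintype.card α = 3)
    (hF : ∀ f, F f = 0 ∨ F f = 1) {ε : ℝ} (hε : ε < 1 / 10 ^ 7) (hμ : 1 / 3 - ε ≤ 𝔼 f, F f)
    (hW : 8 * (𝔼 f, F f) ^ 2 - 2 * 𝔼 f, F f ≤ levelOneWeight ev F) :
    ∃ x b, 𝔼 f, (F f - if ev f x = b then 1 else 0) ^ 2 ≤ 6 * ε := by
  have hproj := (h.mono (by norm_num)).expect_sub_linearPart_sq F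
  rw [expect_sq_eq_expect hF] at hproj
  have hδ₀ : 0 ≤ 𝔼 f, (F f - linearPart ev F f) ^ 2 := expect_nonneg fun _ _ ↦ sq_nonneg _
  have hμ₃ : 𝔼 f, F f ≤ 1 / 3 := by nlinarith
  have hδ : 𝔼 f, (F f - linearPart ev F f) ^ 2 ≤ 3 * ε := by nlinarith
  obtain ⟨x, b, hxb⟩ := h.exists_large_linearCoeff hα hF (by linarith) hμ₃ (by linarith)
  have hdist := (h.mono (by norm_num)).expect_sub_ite_sq hF x b
  have hweak : (12 * Fintype.card α : ℝ) * 𝔼 f, (F f - if ev f x = b then 1 else 0) ^ 2 ≤ 1 := by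
    rw [linearCoeff] at hxb
    rw [hdist, hα]
    linarith
  exact ⟨x, b, (h.expect_sub_ite_sq_le hF hweak).trans (by linarith)⟩

end FriedgutKalaiNaor

section LowDegree

open MvPolynomial

variable (K σ : Type*) [Field K]

/-- The functions `K^σ → K` given by polynomials of total degree at most `d`. -/
noncomputable def lowDegree (d : ℕ) : Submodule K ((σ → K) → K) :=
  (restrictTotalDegree σ K d).map (evalₗ K σ)

variable {K σ} {d m n : ℕ}

theorem mem_lowDegree {f : (σ → K) → K} :
    f ∈ lowDegree K σ d ↔ ∃ P : MvPolynomial σ K, P.totalDegree ≤ d ∧ ∀ x, f x = eval x P := by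
  simp only [lowDegree, Submodule.mem_map, mem_restrictTotalDegree, funext_iff, evalₗ_apply,
    eq_comm]

theorem coord_mem_lowDegree (i : σ) : (fun x ↦ x i) ∈ lowDegree K σ 1 :=
  mem_lowDegree.2 ⟨X i, (totalDegree_X i).le, fun _ ↦ (eval_X i).symm⟩

theorem one_mem_lowDegree : 1 ∈ lowDegree K σ d :=
  mem_lowDegree.2 ⟨1, by simp, by simp⟩

theorem lowDegree_mono (h : m ≤ n) : lowDegree K σ m ≤ lowDegree K σ n := fun _ hf ↦
  let ⟨P, hP, hPf⟩ := mem_lowDegree.1 hf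
  mem_lowDegree.2 ⟨P, hP.trans h, hPf⟩

theorem mul_mem_lowDegree {f g : (σ → K) → K} (hf : f ∈ lowDegree K σ m)
    (hg : g ∈ lowDegree K σ n) : f * g ∈ lowDegree K σ (m + n) := by
  obtain ⟨P, hP, hPf⟩ := mem_lowDegree.1 hf
  obtain ⟨Q, hQ, hQg⟩ := mem_lowDegree.1 hg
  exact mem_lowDegree.2 ⟨P * Q, (totalDegree_mul P Q).trans (add_le_add hP hQ), by simp [*]⟩

theorem coord_mul_mem_lowDegree (i : σ) {f : (σ → K) → K} (hf : f ∈ lowDegree K σ n) :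
    (fun x ↦ x i) * f ∈ lowDegree K σ (n + 1) :=
  add_comm n 1 ▸ mul_mem_lowDegree (coord_mem_lowDegree i) hf

theorem lowDegree_eq_span :
    lowDegree K σ d
      = Submodule.span K ((fun m ↦ evalₗ K σ (monomial m 1)) '' {m | m.degree ≤ d}) := by
  rw [lowDegree, restrictTotalDegree, restrictSupport_eq_span, Submodule.map_span, Set.image_image]
  rfl

theorem lowDegree_succ_le {S : Submodule K ((σ → K) → K)} (h_one : 1 ∈ S)
    (h_coord : ∀ i, ∀ f ∈ lowDegree K σ n, f ∈ S → (fun x ↦ x i) * f ∈ S) :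
    lowDegree K σ (n + 1) ≤ S := by
  rw [lowDegree_eq_span, Submodule.span_le]
  rintro _ ⟨m, hm, rfl⟩
  simp only [SetLike.mem_coe]
  induction hk : m.degree generalizing m with
  | zero =>
    obtain rfl := (Finsupp.degree_eq_zero_iff m).1 hk
    have hone : evalₗ K σ (monomial 0 1) = 1 := by
      ext
      simp
    exact hone.symm ▸ h_one
  | succ k ih =>
    obtain ⟨i, hi⟩ : m.support.Nonempty := by
      rw [Finsupp.support_nonempty_iff]
      rintro rfl
      simp at hk
    obtain ⟨m, rfl⟩ := le_iff_exists_add.1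
      (Finsupp.single_le_iff.2 (Nat.one_le_iff_ne_zero.2 (Finsupp.mem_support_iff.1 hi)))
    simp only [Set.mem_ofPred_eq, map_add, Finsupp.degree_single] at hm hk
    have hfactor : evalₗ K σ (monomial (Finsupp.single i 1 + m) 1)
        = (fun x ↦ x i) * evalₗ K σ (monomial m 1) := by
      ext x
      simp [monomial_single_add]
    refine hfactor.symm ▸ h_coord i _ ?_ (ih m (by grind) (by grind))
    rw [lowDegree_eq_span]
    exact Submodule.subset_span ⟨m, by grind, rfl⟩

theorem lowDegree_add_le : lowDegree K σ (m + n) ≤ lowDegree K σ m * lowDegree K σ n := by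
  induction m with
  | zero =>
    rw [zero_add]
    exact fun f hf ↦ one_mul f ▸ Submodule.mul_mem_mul one_mem_lowDegree hf
  | succ m ih =>
    rw [add_right_comm]
    refine lowDegree_succ_le ?_ fun i f hf _ ↦ ?_
    · exact mul_one (1 : (σ → K) → K) ▸ Submodule.mul_mem_mul one_mem_lowDegree one_mem_lowDegree
    · have hle : lowDegree K σ m * lowDegree K σ n
          ≤ (lowDegree K σ (m + 1) * lowDegree K σ n).comap (LinearMap.mulLeft K fun x ↦ x i) :=
        Submodule.mul_le.2 fun p hp q hq ↦ by
          simpa [mul_assoc] using Submodule.mul_mem_mul (coord_mul_mem_lowDegree i hp) hq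
      exact hle (ih hf)

theorem eq_zero_of_forall_mul_eq_zero {Φ : Module.Dual K ((σ → K) → K)}
    (hΦ : ∀ p ∈ lowDegree K σ d, ∀ q ∈ lowDegree K σ d, Φ (p * q) = 0) :
    ∀ f ∈ lowDegree K σ (2 * d), Φ f = 0 := by
  have hle : lowDegree K σ d * lowDegree K σ d ≤ LinearMap.ker Φ := Submodule.mul_le.2 hΦ
  exact two_mul d ▸ lowDegree_add_le.trans hle

theorem exists_mem_lowDegree_separating (x : σ → K) (Y : Finset (σ → K)) (hx : x ∉ Y) :
    ∃ p ∈ lowDegree K σ Y.card, p x = 1 ∧ ∀ y ∈ Y, p y = 0 := by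
  classical
  induction Y using Finset.induction_on with
  | empty => exact ⟨1, one_mem_lowDegree, rfl, by simp⟩
  | insert z Y hz ih =>
    rw [Finset.mem_insert, not_or] at hx
    obtain ⟨p, hp, hpx, hpY⟩ := ih hx.2
    obtain ⟨i, hi⟩ := Function.ne_iff.1 hx.1
    have hlinear : (fun w ↦ w i) - z i • 1 ∈ lowDegree K σ 1 :=
      sub_mem (coord_mem_lowDegree i) (Submodule.smul_mem _ _ one_mem_lowDegree)
    refine ⟨(x i - z i)⁻¹ • (p * ((fun w ↦ w i) - z i • 1)), ?_, ?_, ?_⟩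
    · rw [Finset.card_insert_of_notMem hz]
      exact Submodule.smul_mem _ _ (mul_mem_lowDegree hp hlinear)
    · simp [hpx, inv_mul_cancel₀ (sub_ne_zero.2 hi)]
    · rw [Finset.forall_mem_insert]
      exact ⟨by simp, fun y hy ↦ by simp [hpY y hy]⟩

theorem wiseUniform_lowDegree [Fintype K] [Fintype (lowDegree K σ d)] :
    WiseUniform (d + 1) (lowDegree K σ d).subtype := by
  refine WiseUniform.of_separating _ fun x Y hY hx ↦ ?_
  obtain ⟨p, hp, h⟩ := exists_mem_lowDegree_separating x Y hx
  exact ⟨⟨p, lowDegree_mono (Nat.le_of_lt_succ hY) hp⟩, h⟩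

theorem exists_pow_eq_pow_le_card_sub_one [Fintype K] (n : ℕ) :
    ∃ k, k ≤ n ∧ k ≤ Fintype.card K - 1 ∧ (n = 0 → k = 0) ∧ ∀ a : K, a ^ k = a ^ n := by
  rcases n with _ | n
  · exact ⟨0, by simp⟩
  have hq : 0 < Fintype.card K - 1 := Nat.sub_pos_of_lt Fintype.one_lt_card
  refine ⟨n % (Fintype.card K - 1) + 1, Nat.succ_le_succ (Nat.mod_le _ _), Nat.mod_lt n hq, by simp,
    fun a ↦ ?_⟩
  rcases eq_or_ne a 0 with rfl | ha
  · simp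
  · rw [pow_succ, pow_succ, ← pow_eq_pow_mod n (FiniteField.pow_card_sub_one_eq_one a ha)]

theorem lowDegree_eq_map_inf_restrictDegree [Fintype K] :
    lowDegree K σ d
      = (restrictTotalDegree σ K d ⊓ restrictDegree σ K (Fintype.card K - 1)).map (evalₗ K σ) := by
  refine le_antisymm ?_ (Submodule.map_mono inf_le_left)
  rw [lowDegree_eq_span, Submodule.span_le]
  rintro _ ⟨m, hm, rfl⟩
  choose red hred_le hred_card hred_zero hred_pow using exists_pow_eq_pow_le_card_sub_one (K := K)
  set m' : σ →₀ ℕ := m.mapRange red (hred_zero 0 rfl)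
  refine ⟨monomial m' 1, ⟨?_, ?_⟩, ?_⟩
  · have hle : m' ≤ m := fun i ↦ hred_le (m i)
    exact (monomial_mem_restrictSupport K).2 (.inl ((Finsupp.degree_mono hle).trans hm))
  · exact (monomial_mem_restrictSupport K).2 (.inl fun i ↦ hred_card (m i))
  · ext x
    simp only [evalₗ_apply, eval_monomial, m', one_mul]
    rw [Finsupp.prod_mapRange_index fun i ↦ pow_zero (x i)]
    exact Finsupp.prod_congr fun i _ ↦ hred_pow (m i) (x i)

theorem coe_lowDegree_F3 (r d : ℕ) : (lowDegree F3 (Fin r) d : Set (Fn r)) = PolySet r d := by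
  ext f
  simp only [lowDegree_eq_map_inf_restrictDegree, ZMod.card, SetLike.mem_coe, Submodule.mem_map,
    Submodule.mem_inf, mem_restrictTotalDegree, mem_restrictDegree, PolySet, Set.mem_ofPred_eq,
    degreeOf_le_iff, funext_iff, evalₗ_apply, and_assoc, eq_comm (b := f _)]
  grind

end LowDegree

section PointEvaluations

variable {K σ : Type*} [Field K] {d m n : ℕ}

/-- The form `(p, q) ↦ l p * l q` on functions of degree at most `n` depends only on `p * q`. -/
def FactorsThroughMul (l : Module.Dual K ((σ → K) → K)) (n : ℕ) : Prop :=
  ∀ p ∈ lowDegree K σ n, ∀ q ∈ lowDegree K σ n, ∀ p' ∈ lowDegree K σ n, ∀ q' ∈ lowDegree K σ n,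
    p * q = p' * q' → l p * l q = l p' * l q'

theorem FactorsThroughMul.exists_eq_mul_apply {l : Module.Dual K ((σ → K) → K)}
    (h : FactorsThroughMul l (n + 1)) {q₀ : (σ → K) → K} (hq₀ : q₀ ∈ lowDegree K σ n)
    (hl : l q₀ ≠ 0) : ∃ x, ∀ p ∈ lowDegree K σ (n + 1), l p = l 1 * p x := by
  set x : σ → K := fun i ↦ l ((fun y ↦ y i) * q₀) / l q₀
  have hle : lowDegree K σ n ≤ lowDegree K σ (n + 1) := lowDegree_mono n.le_succ
  have hcoord (i : σ) (p : (σ → K) → K) (hp : p ∈ lowDegree K σ n) :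
      l ((fun y ↦ y i) * p) = x i * l p := by
    have := h _ (coord_mul_mem_lowDegree i hp) _ (hle hq₀) _ (coord_mul_mem_lowDegree i hq₀) _
      (hle hp) (by ring)
    rw [div_mul_eq_mul_div, eq_div_iff hl, this]
  refine ⟨x, fun p hp ↦ ?_⟩
  have hker : lowDegree K σ (n + 1) ≤ LinearMap.ker (l - l 1 • LinearMap.proj x) := by
    refine lowDegree_succ_le (by simp) fun i p hp hpx ↦ ?_
    simp only [LinearMap.mem_ker, LinearMap.sub_apply, LinearMap.smul_apply, LinearMap.proj_apply,
      smul_eq_mul, Pi.mul_apply, sub_eq_zero] at hpx ⊢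
    rw [hcoord i p hp, hpx, mul_left_comm]
  simpa [sub_eq_zero] using hker hp

theorem FactorsThroughMul.eq_zero_of_forall_eq_zero {l : Module.Dual F3 ((σ → F3) → F3)}
    (h : FactorsThroughMul l (n + 2)) (hl : ∀ p ∈ lowDegree F3 σ (n + 1), l p = 0) :
    ∀ p ∈ lowDegree F3 σ (n + 2), l p = 0 := by
  have hmem (i j : σ) {q : (σ → F3) → F3} (hq : q ∈ lowDegree F3 σ n) :
      (fun x ↦ x i) * ((fun x ↦ x j) * q) ∈ lowDegree F3 σ (n + 2) :=
    coord_mul_mem_lowDegree i (coord_mul_mem_lowDegree j hq)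
  have hsq (i : σ) (q : (σ → F3) → F3) (hq : q ∈ lowDegree F3 σ n) :
      l ((fun x ↦ x i) * ((fun x ↦ x i) * q)) = 0 := by
    have hq' := coord_mul_mem_lowDegree i hq
    have hq'' := lowDegree_mono (Nat.le_succ _) hq'
    have hpow : ∀ a b : F3, a * (a * b) * (a * (a * b)) = a * b * (a * b) := by decide
    have := h _ (hmem i i hq) _ (hmem i i hq) _ hq'' _ hq'' (funext fun x ↦ hpow (x i) (q x))
    rwa [hl _ hq', mul_zero, mul_self_eq_zero] at this
  have hmixed (i j : σ) (q : (σ → F3) → F3) (hq : q ∈ lowDegree F3 σ n) :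
      l ((fun x ↦ x i) * ((fun x ↦ x j) * q)) = 0 := by
    have := h _ (hmem i j hq) _ (hmem i j hq) _ (hmem i i hq) _ (hmem j j hq) (by ring)
    rwa [hsq i q hq, zero_mul, mul_self_eq_zero] at this
  have hcoord (i : σ) :
      lowDegree F3 σ (n + 1) ≤ (LinearMap.ker l).comap (LinearMap.mulLeft F3 fun x ↦ x i) := by
    refine lowDegree_succ_le ?_ fun j q hq _ ↦ hmixed i j q hq
    exact hl _ (coord_mul_mem_lowDegree i one_mem_lowDegree)
  exact lowDegree_succ_le (S := LinearMap.ker l) (hl 1 one_mem_lowDegree) fun i p hp _ ↦ hcoord i hp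

theorem FactorsThroughMul.exists_eq_mul_apply_F3 {l : Module.Dual F3 ((σ → F3) → F3)}
    (h : FactorsThroughMul l d) (hd : 2 ≤ d) :
    ∃ x, ∃ c : F3, ∀ p ∈ lowDegree F3 σ d, l p = c * p x := by
  obtain ⟨n, rfl⟩ := Nat.exists_eq_add_of_le' hd
  by_cases hl : ∀ p ∈ lowDegree F3 σ (n + 1), l p = 0
  · exact ⟨0, 0, by simpa using h.eq_zero_of_forall_eq_zero hl⟩
  · push Not at hl
    obtain ⟨q₀, hq₀, hlq₀⟩ := hl
    obtain ⟨x, hx⟩ := h.exists_eq_mul_apply hq₀ hlq₀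
    exact ⟨x, l 1, hx⟩

theorem exists_eq_mul_mul_of_finrank_quotient_ker_le_one {W : Type*} [AddCommGroup W] [Module K W]
    [FiniteDimensional K W] {B : LinearMap.BilinForm K W} (hB : B.IsSymm)
    (hrank : Module.finrank K (W ⧸ LinearMap.ker B) ≤ 1) :
    ∃ (l : Module.Dual K W) (κ : K), ∀ p q, B p q = κ * (l p * l q) := by
  obtain ⟨v', hv⟩ := finrank_le_one_iff.1 hrank
  obtain ⟨v, rfl⟩ := Submodule.Quotient.mk_surjective _ v'
  obtain ⟨l, hl⟩ : ∃ l : Module.Dual K W, ∀ p, ∃ c : K, B p = c • l := by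
    refine ⟨B v, fun p ↦ ?_⟩
    obtain ⟨c, hc⟩ := hv (Submodule.Quotient.mk p)
    rw [← Submodule.Quotient.mk_smul, eq_comm, Submodule.Quotient.eq, LinearMap.mem_ker, map_sub,
      map_smul, sub_eq_zero] at hc
    exact ⟨c, hc⟩
  choose c hc using hl
  have hsymm (p q : W) : c p * l q = c q * l p := by
    simpa only [hc, LinearMap.smul_apply, smul_eq_mul] using hB.eq p q
  by_cases hl₀ : l = 0
  · exact ⟨0, 0, fun p q ↦ by simp [hc, hl₀]⟩
  obtain ⟨u, hu⟩ : ∃ u, l u ≠ 0 := by simpa [LinearMap.ext_iff] using hl₀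
  refine ⟨l, c u / l u, fun p q ↦ ?_⟩
  rw [hc, LinearMap.smul_apply, smul_eq_mul]
  field_simp
  linear_combination l q * hsymm p u

/-- The bilinear form `(p, q) ↦ Φ (p * q)` on functions of degree at most `d`. -/
noncomputable def mulForm (Φ : Module.Dual K ((σ → K) → K)) (d : ℕ) :
    LinearMap.BilinForm K (lowDegree K σ d) :=
  ((LinearMap.mul K ((σ → K) → K)).compr₂ Φ).domRestrict₁₂ (lowDegree K σ d) (lowDegree K σ d)

theorem mulForm_apply (Φ : Module.Dual K ((σ → K) → K)) (p q : lowDegree K σ d) :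
    mulForm Φ d p q = Φ (p.1 * q.1) :=
  rfl

theorem mulForm_isSymm (Φ : Module.Dual K ((σ → K) → K)) : (mulForm Φ d).IsSymm :=
  ⟨fun p q ↦ by simp only [mulForm_apply, mul_comm]⟩

theorem exists_eq_mul_apply_of_finrank_quotient_ker_mulForm_le_one [Finite σ]
    {Φ : Module.Dual F3 ((σ → F3) → F3)} (hd : 2 ≤ d)
    (hrank : Module.finrank F3 (lowDegree F3 σ d ⧸ LinearMap.ker (mulForm Φ d)) ≤ 1) :
    ∃ x, ∃ c : F3, ∀ f ∈ lowDegree F3 σ (2 * d), Φ f = c * f x := by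
  obtain ⟨l₀, κ, hκ⟩ := exists_eq_mul_mul_of_finrank_quotient_ker_le_one (mulForm_isSymm Φ) hrank
  obtain ⟨l, rfl⟩ := LinearMap.exists_extend l₀
  have hΦ (p : (σ → F3) → F3) (hp : p ∈ lowDegree F3 σ d) (q : (σ → F3) → F3)
      (hq : q ∈ lowDegree F3 σ d) : Φ (p * q) = κ * (l p * l q) := hκ ⟨p, hp⟩ ⟨q, hq⟩
  suffices ∃ x, ∃ c : F3, ∀ p ∈ lowDegree F3 σ d, ∀ q ∈ lowDegree F3 σ d,
      Φ (p * q) = c * (p x * q x) by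
    obtain ⟨x, c, hxc⟩ := this
    refine ⟨x, c, fun f hf ↦ ?_⟩
    have := eq_zero_of_forall_mul_eq_zero (Φ := Φ - c • LinearMap.proj x)
      (fun p hp q hq ↦ by simp [hxc p hp q hq]) f hf
    simpa [sub_eq_zero] using this
  rcases eq_or_ne κ 0 with rfl | hκ₀
  · exact ⟨0, 0, by simpa using hΦ⟩
  have hl : FactorsThroughMul l d := fun p hp q hq p' hp' q' hq' hpq ↦ by
    have := hpq ▸ hΦ p hp q hq
    rwa [hΦ p' hp' q' hq', mul_right_inj' hκ₀, eq_comm] at this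
  obtain ⟨x, c, hxc⟩ := hl.exists_eq_mul_apply_F3 hd
  refine ⟨x, κ * (c * c), fun p hp q hq ↦ ?_⟩
  rw [hΦ p hp q hq, hxc p hp, hxc q hq]
  ring

end PointEvaluations

section FourierAnalysis

open Finset Module

variable {K V W P ι : Type*} [Field K] {ψ : AddChar K ℂ}

theorem expect_addChar_apply [AddCommGroup W] [Module K W] [Fintype W] (hψ : ψ ≠ 0)
    (l : Dual K W) [Decidable (l = 0)] : 𝔼 w, ψ (l w) = if l = 0 then 1 else 0 := by
  have hcomp : ψ.compAddMonoidHom l.toAddMonoidHom = 0 ↔ l = 0 := by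
    refine ⟨fun h ↦ ?_, fun h ↦ by ext; simp [h]⟩
    obtain ⟨a, ha⟩ := AddChar.ne_zero_iff.1 hψ
    by_contra hl
    obtain ⟨w, rfl⟩ := LinearMap.surjective hl a
    exact ha (DFunLike.congr_fun h w)
  have h := AddChar.expect_eq_ite (ψ.compAddMonoidHom l.toAddMonoidHom)
  simp only [hcomp, AddChar.compAddMonoidHom_apply, LinearMap.toAddMonoidHom_coe] at h
  exact h

section GaussSum

variable [Fintype K] [AddCommGroup W] [Module K W] [Fintype W] {B : LinearMap.BilinForm K W}

theorem expect_ite_mem_submodule (S : Submodule K W) [DecidablePred (· ∈ S)] :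
    𝔼 w, (if w ∈ S then 1 else 0 : ℝ) = ((Fintype.card K : ℝ) ^ finrank K (W ⧸ S))⁻¹ := by
  have hS : #{w | w ∈ S} = Fintype.card K ^ finrank K S := by
    rw [← Fintype.card_subtype, ← Module.card_eq_pow_finrank]
  have : (Fintype.card K : ℝ) ≠ 0 := mod_cast Fintype.card_ne_zero
  rw [Fintype.expect_eq_sum_div_card, sum_boole, hS, Module.card_eq_pow_finrank (K := K) (V := W),
    ← S.finrank_quotient_add_finrank, pow_add]
  push_cast
  field_simp

theorem norm_expect_addChar_apply_self_sq (hψ : ψ ≠ 0) (hK : (2 : K) ≠ 0) (hB : B.IsSymm) :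
    ‖𝔼 w, ψ (B w w)‖ ^ 2
      = ((Fintype.card K : ℝ) ^ finrank K (W ⧸ LinearMap.ker B))⁻¹ := by
  classical
  have hshift (q : W) : (𝔼 p, ψ (B p p)) * ψ (-B q q) = 𝔼 t, ψ (B t t) * ψ ((2 • B t) q) := by
    rw [expect_mul, ← Fintype.expect_equiv (Equiv.addRight q) _ _ fun _ ↦ rfl]
    refine expect_congr rfl fun t _ ↦ ?_
    rw [← AddChar.map_add_eq_mul, ← AddChar.map_add_eq_mul, Equiv.coe_addRight]
    simp only [map_add, LinearMap.add_apply, hB.eq q t, two_smul]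
    congr 1
    ring
  have hker (t : W) : ψ (B t t) * 𝔼 q, ψ ((2 • B t) q) = if t ∈ LinearMap.ker B then 1 else 0 := by
    rw [expect_addChar_apply hψ, LinearMap.mem_ker]
    by_cases ht : B t = 0 <;> simp [ht, ← Nat.cast_smul_eq_nsmul K, hK]
  rw [← expect_ite_mem_submodule, ← Complex.ofReal_inj]
  push_cast [apply_ite Complex.ofReal]
  calc (‖𝔼 w, ψ (B w w)‖ : ℂ) ^ 2 = 𝔼 q, (𝔼 p, ψ (B p p)) * ψ (-B q q) := by
        simp only [← Complex.mul_conj', map_expect, ← mul_expect, AddChar.map_neg_eq_conj]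
    _ = 𝔼 t, ψ (B t t) * 𝔼 q, ψ ((2 • B t) q) := by
        simp only [hshift, mul_expect]
        exact expect_comm ..
    _ = 𝔼 t, if t ∈ LinearMap.ker B then 1 else 0 := expect_congr rfl fun t _ ↦ hker t

end GaussSum

variable [AddCommGroup V] [Module K V] [Fintype V]

theorem sum_dual_addChar_apply [Finite K] [Fintype (Dual K V)] [DecidableEq V]
    (hψ : ψ ≠ 0) (v : V) :
    ∑ φ : Dual K V, ψ (φ v) = if v = 0 then (Fintype.card V : ℂ) else 0 := by
  classical
  let := Fintype.ofFinite K
  have hcard : Fintype.card (Dual K V) = Fintype.card V := by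
    rw [Module.card_eq_pow_finrank (K := K), Module.card_eq_pow_finrank (K := K) (V := V),
      Subspace.dual_finrank_eq]
  have heval : Dual.eval K V v = 0 ↔ v = 0 := by
    simp only [LinearMap.ext_iff, Dual.eval_apply, LinearMap.zero_apply,
      Module.forall_dual_apply_eq_zero_iff]
  have h := expect_addChar_apply hψ (Dual.eval K V v)
  have hV : (Fintype.card V : ℂ) ≠ 0 := mod_cast Fintype.card_ne_zero
  simp only [heval, Fintype.expect_eq_sum_div_card, hcard, Dual.eval_apply, div_eq_iff hV] at h
  rw [h, ite_mul, one_mul, zero_mul]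

/-- The squared absolute value of the Fourier coefficient of `F` at the character `ψ ∘ φ`; all
characters of `V` are of this form when `ψ` is nontrivial. -/
noncomputable def fourierWeight (ψ : AddChar K ℂ) (F : V → ℝ) (φ : Dual K V) : ℝ :=
  ‖𝔼 f, (F f : ℂ) * ψ (φ f)‖ ^ 2

theorem fourierWeight_nonneg (F : V → ℝ) (φ : Dual K V) : 0 ≤ fourierWeight ψ F φ :=
  sq_nonneg _

theorem fourierWeight_zero (F : V → ℝ) : fourierWeight ψ F 0 = (𝔼 f, F f) ^ 2 := by
  simp only [fourierWeight, LinearMap.zero_apply, AddChar.map_zero_eq_one, mul_one,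
    ← Complex.ofReal_expect, Complex.norm_real, Real.norm_eq_abs, sq_abs]

theorem fourierWeight_eq_expect [Finite K] (F : V → ℝ) (φ : Dual K V) :
    (fourierWeight ψ F φ : ℂ) = 𝔼 f, 𝔼 g, (F f * F g : ℂ) * ψ (φ (f - g)) := by
  rw [fourierWeight, Complex.ofReal_pow, ← Complex.mul_conj', map_expect, expect_mul_expect]
  refine expect_congr rfl fun f _ ↦ expect_congr rfl fun g _ ↦ ?_
  rw [map_mul, Complex.conj_ofReal, map_sub, sub_eq_add_neg, AddChar.map_add_eq_mul,
    AddChar.map_neg_eq_conj]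
  ring

section Parseval

variable [Finite K] [Fintype (Dual K V)]

theorem sum_fourierWeight_mul_addChar (hψ : ψ ≠ 0) (F : V → ℝ) (s : V) :
    ∑ φ, (fourierWeight ψ F φ : ℂ) * ψ (φ s) = 𝔼 f, (F f * F (f + s) : ℂ) := by
  classical
  have hsum (f g : V) : ∑ φ : Dual K V, ψ (φ (f - g)) * ψ (φ s)
      = if f + s = g then (Fintype.card V : ℂ) else 0 := by
    simp only [← AddChar.map_add_eq_mul, ← map_add, sum_dual_addChar_apply hψ]
    rw [sub_add_eq_add_sub, sub_eq_zero]
  have hdiag (f : V) :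
      𝔼 g, (F f * F g : ℂ) * (if f + s = g then (Fintype.card V : ℂ) else 0) = F f * F (f + s) := by
    simp only [mul_comm _ (ite _ _ _), expect_boole_mul fun g ↦ (F f * F g : ℂ)]
  simp only [← hdiag, ← hsum, mul_sum, expect_sum_comm, fourierWeight_eq_expect, expect_mul,
    mul_assoc]

theorem sum_fourierWeight (hψ : ψ ≠ 0) (F : V → ℝ) :
    ∑ φ, fourierWeight ψ F φ = 𝔼 f, F f ^ 2 := by
  have h := sum_fourierWeight_mul_addChar hψ F 0
  simp only [map_zero, AddChar.map_zero_eq_one, mul_one, add_zero, ← sq] at h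
  exact_mod_cast h

/-- The eigenvalue, at the character `ψ ∘ φ`, of the symmetrized noise operator
`F ↦ 𝔼 p, (F (· + s p) + F (· - s p)) / 2`. -/
noncomputable def noiseEigenvalue [Fintype ι] (ψ : AddChar K ℂ) (s : ι → V) (φ : Dual K V) : ℝ :=
  𝔼 p, (ψ (φ (s p))).re

theorem sum_fourierWeight_mul_noiseEigenvalue [Fintype ι] (hψ : ψ ≠ 0) (F : V → ℝ) (s : ι → V) :
    ∑ φ, fourierWeight ψ F φ * noiseEigenvalue ψ s φ = 𝔼 p, 𝔼 f, F f * F (f + s p) := by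
  have hre (p : ι) :
      ∑ φ, fourierWeight ψ F φ * (ψ (φ (s p))).re = 𝔼 f, F f * F (f + s p) := by
    have h := congrArg Complex.re (sum_fourierWeight_mul_addChar hψ F (s p))
    simpa [Complex.re_expect] using h
  simp only [noiseEigenvalue, mul_expect, ← expect_sum_comm, hre]

end Parseval

/-- Evaluation at the point `x`, as a linear functional. -/
def evalDual (ev : V →ₗ[K] P → K) (x : P) : Dual K V :=
  LinearMap.proj x ∘ₗ ev

variable [Fintype K] [DecidableEq K]

theorem fourierWeight_smul_evalDual (ev : V →ₗ[K] P → K) (F : V → ℝ) (x : P) (c : K) :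
    fourierWeight ψ F (c • evalDual ev x)
      = fourierWeight ψ (condMean ev F x) (c • LinearMap.id) :=
  congrArg (‖·‖ ^ 2) (expect_mul_comp_ev_rclike (ev ·) F x fun b ↦ ψ (c * b))

theorem sum_fourierWeight_smul_evalDual (hψ : ψ ≠ 0) (ev : V →ₗ[K] P → K) (F : V → ℝ) (x : P) :
    ∑ c : K, fourierWeight ψ F (c • evalDual ev x) = 𝔼 b, condMean ev F x b ^ 2 := by
  let := Fintype.ofEquiv K (LinearMap.ringLmapEquivSelf K K K).symm.toEquiv
  rw [← sum_fourierWeight hψ]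
  refine Fintype.sum_equiv (LinearMap.ringLmapEquivSelf K K K).symm.toEquiv _ _ fun c ↦ ?_
  rw [fourierWeight_smul_evalDual]
  congr 1
  ext
  simp

theorem levelOneWeight_eq_sum_fourierWeight [Fintype P] (hψ : ψ ≠ 0) (ev : V →ₗ[K] P → K)
    (F : V → ℝ) :
    levelOneWeight ev F = ∑ x, ∑ c ∈ ({0}ᶜ : Finset K), fourierWeight ψ F (c • evalDual ev x) := by
  refine sum_congr rfl fun x _ ↦ ?_
  have hsplit := Fintype.sum_eq_add_sum_compl 0 fun c : K ↦ fourierWeight ψ F (c • evalDual ev x)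
  rw [sum_fourierWeight_smul_evalDual hψ, zero_smul, fourierWeight_zero] at hsplit
  have hmean := expect_linearCoeff (ev ·) F x
  simp only [linearCoeff, expect_sub_distrib, Fintype.expect_const, sub_eq_zero] at hmean
  simp only [linearCoeff, sub_sq, expect_add_distrib, expect_sub_distrib, ← expect_mul,
    ← mul_expect, hmean, hsplit, Fintype.expect_const]
  ring

theorem sq_expect_le_of_le_noiseEigenvalue [Fintype P] [Fintype ι] [Nonempty ι] (hψ : ψ ≠ 0)
    (ev : V →ₗ[K] P → K) {F : V → ℝ} {s : ι → V} (hF : ∀ p f, F f * F (f + s p) = 0) {a b : ℝ}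
    (hb : 0 ≤ b) (hpoint : ∀ x, ∀ c : K, c ≠ 0 → -(a + b) ≤ noiseEigenvalue ψ s (c • evalDual ev x))
    (hother : ∀ φ, (∀ x (c : K), φ ≠ c • evalDual ev x) → -a ≤ noiseEigenvalue ψ s φ) :
    (1 + a) * (𝔼 f, F f) ^ 2 ≤ a * 𝔼 f, F f ^ 2 + b * levelOneWeight ev F := by
  have : Finite (Dual K V) := DFunLike.finite _
  let := Fintype.ofFinite (Dual K V)
  classical
  set D : Finset (Dual K V) :=
    (univ ×ˢ ({0}ᶜ : Finset K)).image fun xc : P × K ↦ xc.2 • evalDual ev xc.1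
  have hcover (φ : Dual K V) :
      (1 + a) * (if φ = 0 then 1 else 0) - b * (if φ ∈ D then 1 else 0)
        ≤ noiseEigenvalue ψ s φ + a := by
    have hD₀ : (0 : ℝ) ≤ if φ ∈ D then 1 else 0 := by positivity
    rcases eq_or_ne φ 0 with rfl | hφ
    · have : noiseEigenvalue ψ s 0 = 1 := by simp [noiseEigenvalue]
      rw [if_pos rfl, this]
      nlinarith
    rw [if_neg hφ]
    by_cases hφD : φ ∈ D
    · rw [if_pos hφD]
      obtain ⟨⟨x, c⟩, hc, rfl⟩ := mem_image.1 hφD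
      linarith [hpoint x c (by simpa using hc)]
    · rw [if_neg hφD]
      have := hother φ fun x c hxc ↦ hφD <| mem_image.2 ⟨(x, c), by
        simpa using fun hc : c = 0 ↦ hφ (by rw [hxc, hc, zero_smul]), hxc.symm⟩
      linarith
  have hD : ∑ φ ∈ D, fourierWeight ψ F φ ≤ levelOneWeight ev F := by
    rw [levelOneWeight_eq_sum_fourierWeight hψ, ← sum_product']
    exact sum_image_le_of_nonneg fun _ _ ↦ fourierWeight_nonneg F _
  have hsum := sum_le_sum fun φ (_ : φ ∈ univ) ↦
    mul_le_mul_of_nonneg_left (hcover φ) (fourierWeight_nonneg (ψ := ψ) F φ)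
  have hnoise := sum_fourierWeight_mul_noiseEigenvalue hψ F s
  simp only [hF, expect_const_zero] at hnoise
  simp only [mul_sub, mul_add, sum_sub_distrib, sum_add_distrib, hnoise, ← sum_mul,
    sum_fourierWeight hψ, mul_ite, mul_one, mul_zero, Fintype.sum_ite_eq', fourierWeight_zero,
    sum_ite_mem, univ_inter] at hsum
  linarith [mul_le_mul_of_nonneg_left hD hb]

end FourierAnalysis

section SquareNoise

open Finset Module

variable {σ : Type*} {d : ℕ} {ψ : AddChar F3 ℂ}

/-- The noise `p ^ 2 + 1` defining the edges of the graph `𝒢`. -/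
def squareNoise (p : lowDegree F3 σ d) : lowDegree F3 σ (2 * d) :=
  ⟨p.1 * p.1 + 1, add_mem (two_mul d ▸ mul_mem_lowDegree p.2 p.2) one_mem_lowDegree⟩

theorem re_addChar_F3_apply (hψ : ψ ≠ 0) {c : F3} (hc : c ≠ 0) : (ψ c).re = -1 / 2 := by
  have hsum : ψ 0 + ψ 1 + ψ (-1) = 0 :=
    (Fin.sum_univ_three ψ).symm.trans (AddChar.sum_eq_zero_iff_ne_zero.2 hψ)
  rw [AddChar.map_zero_eq_one, AddChar.map_neg_eq_conj] at hsum
  have hre := congrArg Complex.re hsum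
  simp only [Complex.add_re, Complex.one_re, Complex.conj_re, Complex.zero_re] at hre
  have hc' : c = 1 ∨ c = -1 := by revert c; decide
  rcases hc' with rfl | rfl
  · linarith
  · rw [AddChar.map_neg_eq_conj, Complex.conj_re]
    linarith

variable [Fintype (lowDegree F3 σ d)]

theorem noiseEigenvalue_squareNoise_smul_evalDual (hψ : ψ ≠ 0) (x : σ → F3) {c : F3}
    (hc : c ≠ 0) :
    noiseEigenvalue ψ (squareNoise (d := d)) (c • evalDual (lowDegree F3 σ (2 * d)).subtype x)
      = -1 / 2 := by
  have hnonvanishing : ∀ c s : F3, c ≠ 0 → c * (s * s + 1) ≠ 0 := by decide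
  have hre (p : lowDegree F3 σ d) := re_addChar_F3_apply hψ (hnonvanishing c (p.1 x) hc)
  exact (expect_congr rfl fun p _ ↦ hre p).trans (Fintype.expect_const _)

theorem neg_one_third_le_noiseEigenvalue_squareNoise (hψ : ψ ≠ 0)
    {Φ : Dual F3 ((σ → F3) → F3)}
    (hrank : 2 ≤ finrank F3 (lowDegree F3 σ d ⧸ LinearMap.ker (mulForm Φ d))) :
    -(1 / 3) ≤ noiseEigenvalue ψ (squareNoise (d := d))
      (Φ.domRestrict (lowDegree F3 σ (2 * d))) := by
  set S : ℂ := 𝔼 p, ψ (mulForm Φ d p p)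
  have hS : ‖S‖ ≤ 1 / 3 := by
    have hgauss := norm_expect_addChar_apply_self_sq hψ (by decide) (mulForm_isSymm (d := d) Φ)
    have hpow : (3 : ℝ) ^ 2 ≤ 3 ^ finrank F3 (lowDegree F3 σ d ⧸ LinearMap.ker (mulForm Φ d)) :=
      pow_le_pow_right₀ (by norm_num) hrank
    refine abs_le_of_sq_le_sq' ?_ (by norm_num) |>.2
    rw [hgauss, ZMod.card, one_div, inv_pow]
    exact inv_anti₀ (by norm_num) (by exact_mod_cast hpow)
  have hre : noiseEigenvalue ψ (squareNoise (d := d)) (Φ.domRestrict (lowDegree F3 σ (2 * d)))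
      = (S * ψ (Φ 1)).re := by
    rw [expect_mul, Complex.re_expect]
    refine expect_congr rfl fun p _ ↦ ?_
    rw [mulForm_apply, ← AddChar.map_add_eq_mul, ← map_add]
    rfl
  have hnorm : ‖S * ψ (Φ 1)‖ = ‖S‖ := by rw [norm_mul, AddChar.norm_apply, mul_one]
  rw [hre]
  linarith [neg_le_of_abs_le (Complex.abs_re_le_norm (S * ψ (Φ 1)))]

variable [Finite σ]

theorem neg_one_third_le_noiseEigenvalue_of_ne_smul_evalDual (hψ : ψ ≠ 0) (hd : 2 ≤ d)
    {φ : Dual F3 (lowDegree F3 σ (2 * d))}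
    (hφ : ∀ x (c : F3), φ ≠ c • evalDual (lowDegree F3 σ (2 * d)).subtype x) :
    -(1 / 3) ≤ noiseEigenvalue ψ (squareNoise (d := d)) φ := by
  obtain ⟨Φ, rfl⟩ := LinearMap.exists_extend φ
  refine neg_one_third_le_noiseEigenvalue_squareNoise hψ (Nat.lt_of_not_le fun hrank ↦ ?_)
  obtain ⟨x, c, hΦ⟩ := exists_eq_mul_apply_of_finrank_quotient_ker_mulForm_le_one hd hrank
  exact hφ x c (LinearMap.ext fun f ↦ hΦ f f.2)

omit [Fintype (lowDegree F3 σ d)] in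
theorem le_levelOneWeight_of_forall_mul_add_squareNoise_eq_zero [Fintype (σ → F3)]
    [Fintype (lowDegree F3 σ (2 * d))] (hd : 2 ≤ d) {F : lowDegree F3 σ (2 * d) → ℝ}
    (hF : ∀ f, F f = 0 ∨ F f = 1) (hindep : ∀ p f, F f * F (f + squareNoise (d := d) p) = 0) :
    8 * (𝔼 f, F f) ^ 2 - 2 * 𝔼 f, F f ≤ levelOneWeight (lowDegree F3 σ (2 * d)).subtype F := by
  let := Fintype.ofFinite (lowDegree F3 σ d)
  obtain ⟨ψ, hψ⟩ : ∃ ψ : AddChar F3 ℂ, ψ ≠ 0 :=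
    ⟨ZMod.stdAddChar, AddChar.mulShift_one (ZMod.stdAddChar (N := 3)) ▸
      ZMod.isPrimitive_stdAddChar 3 one_ne_zero⟩
  have h := sq_expect_le_of_le_noiseEigenvalue hψ (lowDegree F3 σ (2 * d)).subtype hindep
    (a := 1 / 3) (b := 1 / 6) (by norm_num)
    (fun x c hc ↦ by rw [noiseEigenvalue_squareNoise_smul_evalDual hψ x hc]; norm_num)
    (fun φ hφ ↦ neg_one_third_le_noiseEigenvalue_of_ne_smul_evalDual hψ hd hφ)
  rw [expect_sq_eq_expect hF] at h
  linarith

end SquareNoise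

section Dictators

open Finset

theorem ncard_eq_card_mul_expect_indicator {α : Type*} {S : Set α} {V : Set α} [Fintype V]
    (hS : S ⊆ V) : (S.ncard : ℝ) = Fintype.card V * 𝔼 f : V, S.indicator 1 f.1 := by
  classical
  have hV : (Subtype.val : V → α) '' {f | f.1 ∈ S} = S :=
    Subtype.image_preimage_coe V S |>.trans (Set.inter_eq_right.2 hS)
  rw [Fintype.card_mul_expect, ← congrArg Set.ncard hV,
    Set.ncard_image_of_injective _ Subtype.val_injective, Set.ncard_eq_toFinset_card']
  simp [Set.indicator_apply]

theorem indicator_sub_indicator_sq {α : Type*} (S T : Set α) (f : α) :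
    (S.indicator 1 f - T.indicator 1 f : ℝ) ^ 2 = (symmDiff S T).indicator 1 f := by
  by_cases hS : f ∈ S <;> by_cases hT : f ∈ T <;> simp [hS, hT, Set.mem_symmDiff]

theorem exists_dictator_ncard_symmDiff_le {σ : Type*} [Finite σ] {d : ℕ} (hd : 2 ≤ d) {ε : ℝ}
    (hε : ε < 1 / 10 ^ 7) {A : Set ((σ → F3) → F3)} (hA : A ⊆ lowDegree F3 σ (2 * d))
    (hindep : ∀ f ∈ A, ∀ p ∈ lowDegree F3 σ d, f + (p * p + 1) ∉ A)
    (hcard : (1 / 3 - ε) * Nat.card (lowDegree F3 σ (2 * d)) ≤ A.ncard) :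
    ∃ (x : σ → F3) (b : F3),
      ((symmDiff A {f | f ∈ lowDegree F3 σ (2 * d) ∧ f x = b}).ncard : ℝ)
        ≤ 6 * ε * Nat.card (lowDegree F3 σ (2 * d)) := by
  classical
  let := Fintype.ofFinite (σ → F3)
  let := Fintype.ofFinite (lowDegree F3 σ (2 * d))
  set F : lowDegree F3 σ (2 * d) → ℝ := fun f ↦ A.indicator 1 f.1
  have hF (f) : F f = 0 ∨ F f = 1 := (Set.indicator_eq_zero_or_self A 1 f.1)
  have hFindep (p : lowDegree F3 σ d) (f) : F f * F (f + squareNoise p) = 0 := by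
    by_cases hf : f.1 ∈ A
    · exact mul_eq_zero_of_right _ (Set.indicator_of_notMem (hindep _ hf _ p.2) _)
    · exact mul_eq_zero_of_left (Set.indicator_of_notMem hf _) _
  have hμ : 1 / 3 - ε ≤ 𝔼 f, F f := by
    rw [ncard_eq_card_mul_expect_indicator hA, Nat.card_eq_fintype_card, mul_comm] at hcard
    exact le_of_mul_le_mul_left hcard (Nat.cast_pos.2 Fintype.card_pos)
  have hwise : WiseUniform 4 (lowDegree F3 σ (2 * d)).subtype := wiseUniform_lowDegree.mono (by lia)
  obtain ⟨x, b, hxb⟩ := hwise.exists_ite_close (ZMod.card 3) hF hε hμ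
    (le_levelOneWeight_of_forall_mul_add_squareNoise_eq_zero hd hF hFindep)
  set D : Set ((σ → F3) → F3) := {f | f ∈ lowDegree F3 σ (2 * d) ∧ f x = b}
  have hD : symmDiff A D ⊆ lowDegree F3 σ (2 * d) :=
    Set.symmDiff_subset_union.trans (Set.union_subset hA fun f hf ↦ hf.1)
  have hdictator (f : lowDegree F3 σ (2 * d)) :
      D.indicator 1 f.1 = if f.1 x = b then (1 : ℝ) else 0 :=
    (Set.indicator_apply D 1 f.1).trans <| if_congr (and_iff_right f.2) rfl rfl
  refine ⟨x, b, ?_⟩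
  rw [ncard_eq_card_mul_expect_indicator hD, Nat.card_eq_fintype_card, mul_comm]
  refine mul_le_mul_of_nonneg_right (le_of_eq_of_le ?_ hxb) (Nat.cast_nonneg _)
  simp only [← indicator_sub_indicator_sq]
  exact expect_congr rfl fun f _ ↦ by rw [hdictator f]; rfl

theorem card_polyFinset (r d : ℕ) :
    (polyFinset r d).card = Nat.card (lowDegree F3 (Fin r) d) := by
  rw [polyFinset, ← Set.ncard_eq_toFinset_card, ← coe_lowDegree_F3]
  rfl

end Dictators

/-- There are universal `d₀ ∈ ℕ`, `ε₀ > 0`, `C > 0` such that for all `d ≥ d₀`, all `r` and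
all `ε ∈ (0, ε₀)`: an independent set `A` of the graph `𝒢` on `P_{r,2d}` of size
at least `(1/3 − ε)·|P_{r,2d}|` is within symmetric difference `C·ε·|P_{r,2d}|`
of some dictator. -/
theorem stmt3 :
    ∃ (d₀ : ℕ) (ε₀ C : ℝ), 0 < ε₀ ∧ 0 < C ∧
      ∀ d : ℕ, d₀ ≤ d → ∀ r : ℕ, ∀ ε : ℝ, 0 < ε → ε < ε₀ →
        ∀ A : Finset (Fn r), ↑A ⊆ PolySet r (2 * d) →
          (∀ f ∈ A, ∀ p ∈ polyFinset r d, ∀ a : F3, (a = 1 ∨ a = 2) →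
            f + shift p a ∉ A) →
          (1 / 3 - ε) * (polyFinset r (2 * d)).card ≤ (A.card : ℝ) →
          ∃ (x : Pt r) (b : F3),
            (Nat.card ↥(symmDiff (A : Set (Fn r)) {f | f ∈ PolySet r (2 * d) ∧ f x = b}) : ℝ)
              ≤ C * ε * (polyFinset r (2 * d)).card := by
  refine ⟨2, 1 / 10 ^ 7, 6, by norm_num, by norm_num, fun d hd r ε _ hε A hA hindep hcard ↦ ?_⟩
  rw [card_polyFinset] at hcard ⊢
  simp only [← coe_lowDegree_F3] at hA ⊢
  refine exists_dictator_ncard_symmDiff_le hd hε hA (fun f hf p hp ↦ ?_)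
    (by rwa [Set.ncard_coe_finset])
  have hp' : p ∈ polyFinset r d := (Set.toFinite _).mem_toFinset.2 (coe_lowDegree_F3 r d ▸ hp)
  have hshift : shift p 1 = p * p + 1 := by
    ext x
    simp [shift, pow_two]
  exact hshift ▸ hindep f hf p hp' 1 (.inl rfl)
end
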